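/- All zeros of the entire function Z₂(s) lie on the line Re(s) = 1/2 except for the four real zeros s = −1, 0, 1, 2; that is, every zero ρ of Z₂ with ρ ∉ {−1, 0, 1, 2} satisfies Re(ρ) = 1/2, and moreover each of −1, 0, 1, 2 is a simple zero of Z₂ (Z₂ vanishes there but its derivative does not). -/

import Mathlib

open Complex

noncomputable def chi (s : ℂ) : ℂ := s * (s - 1) * completedRiemannZeta₀ s + 1

noncomputable def A : ℂ := Real.pi / 3 - 1

noncomputable def f1 (s : ℂ) : ℂ :=
  (s - 1) * ((s - 1) * (3 * s - 2) * (A * s - A + 1) * chi (s + 1) * chi (3 * s)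
    - (s + 1) * (s - 2) * chi s * chi (3 * s - 1)
    - 2 * (s - 1) * (s - 2) * chi s * chi (3 * s))

noncomputable def f2 (s : ℂ) : ℂ :=
  (s - 2) * ((A * s + 3) * (s - 1) ^ 2 * chi (s + 2)
    - 2 * (s - 1) * (s - 3) * chi (s + 1)
    - (s + 2) * (s - 3) * chi s)

noncomputable def Z1 (s : ℂ) : ℂ := chi (2 * s) * f1 s - chi (2 * s - 1) * f1 (1 - s)

noncomputable def Z2 (s : ℂ) : ℂ := chi (2 * s) * f2 s - chi (2 * s - 1) * f2 (1 - s)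

section
open Filter Topology Set MeasureTheory

section

/-! Basic facts about chi -/
lemma chi_differentiable : Differentiable ℂ chi := by
  unfold chi
  have := differentiable_completedZeta₀
  fun_prop

lemma chi_one_sub (s : ℂ) : chi (1 - s) = chi s := by
  unfold chi; rw [completedRiemannZeta₀_one_sub]; ring

lemma chi_zero : chi 0 = 1 := by simp [chi]
lemma chi_one : chi 1 = 1 := by simp [chi]

noncomputable def etz (w : ℂ) : ℂ := chi w * (Real.pi : ℂ) ^ (w / 2) / 2 * (Gamma (w / 2 + 1))⁻¹

lemma pi_ne : (Real.pi : ℂ) ≠ 0 := by exact_mod_cast Real.pi_ne_zero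

lemma etz_differentiable : Differentiable ℂ etz := by
  unfold etz
  have h1 := chi_differentiable
  have h2 : Differentiable ℂ (fun w : ℂ => (Gamma (w / 2 + 1))⁻¹) :=
    differentiable_one_div_Gamma.comp (by fun_prop)
  have h3 : Differentiable ℂ (fun w : ℂ => (Real.pi : ℂ) ^ (w / 2)) := by
    intro w
    exact DifferentiableAt.const_cpow (by fun_prop) (Or.inl pi_ne)
  fun_prop

lemma chi_eq {w : ℂ} (h0 : w ≠ 0) (h1 : w ≠ 1) : chi w = w * (w - 1) * completedRiemannZeta w := by
  rw [completedRiemannZeta_eq, chi]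
  have : 1 - w ≠ 0 := sub_ne_zero.mpr (Ne.symm h1)
  field_simp
  ring

lemma etz_eq {w : ℂ} (h0 : w ≠ 0) (h1 : w ≠ 1) : etz w = (w - 1) * riemannZeta w := by
  rw [etz, riemannZeta_def_of_ne_zero h0, chi_eq h0 h1, Gammaℝ_def, Gamma_add_one _ (by simpa using h0)]
  have : (Real.pi : ℂ) ^ (-w / 2) = ((Real.pi : ℂ) ^ (w / 2))⁻¹ := by
    rw [← cpow_neg]; congr 1; ring
  rw [this]
  have h3 : (Real.pi : ℂ) ^ (w / 2) ≠ 0 := by simp [cpow_eq_zero_iff, pi_ne]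
  by_cases hG : Gamma (w / 2) = 0
  · simp [hG]
  · field_simp

lemma chi_eq_etz {w : ℂ} (h : -2 < w.re) :
    chi w = 2 * (Real.pi : ℂ) ^ (-w / 2) * Gamma (w / 2 + 1) * etz w := by
  have hG : Gamma (w / 2 + 1) ≠ 0 := by
    apply Gamma_ne_zero_of_re_pos
    simp; linarith
  have : (Real.pi : ℂ) ^ (-w / 2) = ((Real.pi : ℂ) ^ (w / 2))⁻¹ := by
    rw [← cpow_neg]; congr 1; ring
  have h3 : (Real.pi : ℂ) ^ (w / 2) ≠ 0 := by simp [cpow_eq_zero_iff, pi_ne]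
  rw [this, etz]
  generalize Gamma (w / 2 + 1) = G at *
  field_simp

lemma etz_one : etz 1 = 1 := by
  rw [etz, chi_one]
  have : (1 / 2 + 1 : ℂ) = 1/2 + 1 := rfl
  rw [Gamma_add_one _ (by norm_num), Gamma_one_half_eq]
  have : (Real.pi : ℂ) ^ (1 / 2 : ℂ) ≠ 0 := by simp [cpow_eq_zero_iff, pi_ne]
  field_simp

lemma etz_ne_zero {w : ℂ} (h : 1 ≤ w.re) : etz w ≠ 0 := by
  by_cases h1 : w = 1
  · rw [h1, etz_one]; exact one_ne_zero
  · have h0 : w ≠ 0 := by rintro rfl; simp at h; linarith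
    rw [etz_eq h0 h1]
    exact mul_ne_zero (sub_ne_zero.mpr h1) (riemannZeta_ne_zero_of_one_le_re h)

lemma chi_ne_zero {w : ℂ} (h : 1 ≤ w.re) : chi w ≠ 0 := by
  rw [chi_eq_etz (by linarith)]
  have hG : Gamma (w / 2 + 1) ≠ 0 := by
    apply Gamma_ne_zero_of_re_pos
    simp; linarith
  have h3 : (Real.pi : ℂ) ^ (-w / 2) ≠ 0 := by simp [cpow_eq_zero_iff, pi_ne]
  simp [hG, h3, etz_ne_zero h]

lemma chi_conj (s : ℂ) : chi (starRingEnd ℂ s) = starRingEnd ℂ (chi s) := by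
  have key : ∀ s : ℂ, 1 < s.re → chi (starRingEnd ℂ s) = starRingEnd ℂ (chi s) := by
    intro s hs
    have h0 : s ≠ 0 := by rintro rfl; simp at hs; linarith
    have h1 : s ≠ 1 := by rintro rfl; simp at hs
    have hs' : 1 < (starRingEnd ℂ s).re := by simpa using hs
    have h0' : starRingEnd ℂ s ≠ 0 := by simpa using h0
    have h1' : starRingEnd ℂ s ≠ 1 := by
      intro h; apply h1; have := congrArg (starRingEnd ℂ) h; simpa using this
    rw [chi_eq_etz (by linarith), chi_eq_etz (by linarith), etz_eq h0 h1, etz_eq h0' h1',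
      riemannZeta_conj]
    simp only [map_mul, map_sub, map_one]
    rw [← Gamma_conj]
    have : (Real.pi : ℂ) ^ (-(starRingEnd ℂ) s / 2) = starRingEnd ℂ ((Real.pi : ℂ) ^ (-s / 2)) := by
      have h2 : starRingEnd ℂ 2 = 2 := map_ofNat _ 2
      have := cpow_conj (Real.pi : ℂ) (-s/2) ?_
      · rw [conj_ofReal] at this
        rw [← this]; simp [h2]
      · rw [arg_ofReal_of_nonneg Real.pi_pos.le]; exact Real.pi_ne_zero.symm
    rw [this]
    have h2 : starRingEnd ℂ 2 = 2 := map_ofNat _ 2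
    simp [h2]
  have hd : Differentiable ℂ (fun z => starRingEnd ℂ (chi (starRingEnd ℂ z))) := by
    intro z
    have := (chi_differentiable (starRingEnd ℂ z)).star_star
    simpa [Function.comp_def] using this
  have h := AnalyticOnNhd.eqOn_of_preconnected_of_eventuallyEq
    (chi_differentiable.differentiableOn.analyticOnNhd isOpen_univ)
    (hd.differentiableOn.analyticOnNhd isOpen_univ) isPreconnected_univ (mem_univ (2:ℂ)) (by
      have : ∀ᶠ z : ℂ in 𝓝 2, 1 < z.re := by
        apply (continuous_re.isOpen_preimage _ isOpen_Ioi).mem_nhds; simp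
      filter_upwards [this] with z hz
      rw [key z hz]; simp)
  have := h (mem_univ s)
  simp only at this
  rw [this]; simp

end

section

noncomputable def B3 (x : ℝ) : ℝ := Int.fract x * (Int.fract x - 1/2) * (Int.fract x - 1)

lemma B3_bound (x : ℝ) : |B3 x| ≤ 0.048114 := by
  unfold B3
  set u := Int.fract x
  have h0 : 0 ≤ u := Int.fract_nonneg x
  have h1 : u ≤ 1 := (Int.fract_lt_one x).le
  apply abs_le_of_sq_le_sq _ (by norm_num)
  set v := u - 1/2 with hv
  have hu : u = v + 1/2 := by rw [hv]; ring
  have e : (u * v * (u-1))^2 = 1/432 - (1/12 - v^2)^2*(1/3 - v^2) := by rw [hu]; ring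
  rw [e]
  have : v^2 ≤ 1/4 := by nlinarith
  nlinarith [mul_nonneg (sq_nonneg (1/12 - v^2)) (by linarith : 0 ≤ 1/3 - v^2)]

lemma B3_meas : Measurable B3 := by
  unfold B3
  have := measurable_fract (R := ℝ)
  fun_prop

noncomputable def Jr (N : ℕ) (w : ℂ) : ℂ := ∫ x in Ioi (N:ℝ), (x:ℂ) ^ (-w - 3) * (B3 x : ℂ)

lemma Jr_int {N : ℕ} (hN : 1 ≤ N) {w : ℂ} (hw : -2 < w.re) :
    IntegrableOn (fun x : ℝ => (x:ℂ) ^ (-w - 3) * (B3 x : ℂ)) (Ioi (N:ℝ)) := by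
  have hN' : (0:ℝ) < N := by exact_mod_cast hN
  have h1 : IntegrableOn (fun x : ℝ => (x:ℂ) ^ (-w - 3)) (Ioi (N:ℝ)) :=
    integrableOn_Ioi_cpow_of_lt (by simp; linarith) hN'
  refine Integrable.mul_bdd (c := 0.048114) h1 ?_ ?_
  · exact (measurable_ofReal.comp B3_meas).aestronglyMeasurable
  · refine Eventually.of_forall fun x => ?_
    rw [norm_real, Real.norm_eq_abs]; exact B3_bound x

lemma Jr_bound {N : ℕ} (hN : 1 ≤ N) {w : ℂ} (hw : -2 < w.re) :
    ‖Jr N w‖ ≤ 0.048114 * ((N:ℝ) ^ (-w.re - 2) / (w.re + 2)) := by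
  have hN' : (0:ℝ) < N := by exact_mod_cast hN
  have h1 : IntegrableOn (fun x : ℝ => x ^ (-w.re - 3)) (Ioi (N:ℝ)) :=
    integrableOn_Ioi_rpow_of_lt (by linarith) hN'
  have h2 := integral_Ioi_rpow_of_lt (a := -w.re - 3) (by linarith) hN'
  have h3 : ∫ x in Ioi (N:ℝ), 0.048114 * x ^ (-w.re - 3) = 0.048114 * ((N:ℝ) ^ (-w.re - 2) / (w.re + 2)) := by
    rw [integral_const_mul, h2, show -w.re - 3 + 1 = -w.re - 2 by ring,
      show -w.re - 2 = -(w.re+2) by ring, neg_div_neg_eq]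
  rw [← h3]
  refine norm_integral_le_of_norm_le (h1.const_mul _) ?_
  refine (ae_restrict_iff' measurableSet_Ioi).mpr (Eventually.of_forall fun x hx => ?_)
  have hx0 : 0 < x := hN'.trans hx
  rw [norm_mul, norm_cpow_eq_rpow_re_of_pos hx0, norm_real, Real.norm_eq_abs, mul_comm]
  have : (-w - 3).re = -w.re - 3 := by simp
  rw [this]
  exact mul_le_mul_of_nonneg_right (B3_bound x) (Real.rpow_nonneg hx0.le _)

lemma Jr_diff {N : ℕ} (hN : 1 ≤ N) {w : ℂ} (hw : -2 < w.re) : DifferentiableAt ℂ (Jr N) w := by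
  have hN' : (0:ℝ) < N := by exact_mod_cast hN
  let f : ℝ → ℂ := (Ioi (N:ℝ)).indicator fun x => (B3 x : ℂ)
  have hfb : ∀ x, ‖f x‖ ≤ 0.048114 := by
    intro x
    refine (norm_indicator_le_norm_self _ _).trans ?_
    rw [norm_real, Real.norm_eq_abs]; exact B3_bound x
  have hfm : Measurable f := (measurable_ofReal.comp B3_meas).indicator measurableSet_Ioi
  have e : Jr N = fun w => mellin f (-w - 2) := by
    funext w
    rw [Jr, mellin]
    have : ∀ x : ℝ, (x:ℂ) ^ (-w - 2 - 1) • f x = (Ioi (N:ℝ)).indicator (fun x : ℝ => (x:ℂ) ^ (-w - 3) * (B3 x : ℂ)) x := by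
      intro x
      simp only [f, indicator, smul_eq_mul]
      split_ifs
      · congr 2; ring
      · simp
    simp_rw [this]
    rw [setIntegral_indicator measurableSet_Ioi]
    congr 2
    rw [Ioi_inter_Ioi, max_eq_right hN'.le]
  rw [e]
  have : DifferentiableAt ℂ (mellin f) (-w - 2) := by
    refine mellin_differentiableAt_of_isBigO_rpow (a := 0) (b := -w.re - 3) ?_ ?_ ?_ ?_ ?_
    · apply LocallyIntegrable.locallyIntegrableOn
      have : LocallyIntegrable (fun _ : ℝ => (0.048114 : ℝ)) := locallyIntegrable_const _
      exact this.mono hfm.aestronglyMeasurable (Eventually.of_forall fun x => by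
        refine (hfb x).trans (le_abs_self _))
    · refine Asymptotics.IsBigO.of_bound 0.048114 (Eventually.of_forall fun x => ?_)
      simpa using hfb x
    · simp; linarith
    · have : f =ᶠ[𝓝[>] 0] fun _ => 0 := by
        have : ∀ᶠ x : ℝ in 𝓝[>] 0, x < N := by
          apply nhdsWithin_le_nhds; exact Iio_mem_nhds hN'
        filter_upwards [this] with x hx
        simp only [f]
        rw [indicator_of_notMem]; simpa using hx.le
      exact (Asymptotics.isBigO_zero _ _).congr' this.symm (EventuallyEq.rfl)
    · simp; norm_num
  exact DifferentiableAt.comp (g := mellin f) (f := fun w : ℂ => -w - 2) w this (by fun_prop)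

noncomputable def SEM (w : ℂ) (x : ℂ) : ℂ := x ^ (1 - w) / (w - 1) + x ^ (-w) / 2 + w / 12 * x ^ (-w - 1)

lemma EM_step {n : ℕ} (hn : 1 ≤ n) {w : ℂ} (hw : w ≠ 1) :
    w * (w+1) * (w+2) / 6 * ∫ x in (n:ℝ)..(n+1:ℝ), (x:ℂ) ^ (-w - 3) * (B3 x : ℂ)
      = SEM w n - SEM w (n+1) - (n:ℂ) ^ (-w) := by
  have hn' : (0:ℝ) < n := by exact_mod_cast hn
  let H : ℝ → ℂ := fun x =>
    -(w*(w+1)/6) * ((x - n) * (x - n - 1/2) * (x - n - 1)) * (x:ℂ) ^ (-w-2)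
    - w/2 * ((x-n)^2 - (x-n) + 1/6) * (x:ℂ)^(-w-1) - (x - n - 1/2) * (x:ℂ)^(-w)
    - (x:ℂ)^(1-w)/(w-1)
  have hw1 : w - 1 ≠ 0 := sub_ne_zero.mpr hw
  have hp : ∀ (x : ℝ), 0 < x → ∀ c : ℂ, HasDerivAt (fun y : ℝ => (y:ℂ) ^ c) (c * (x:ℂ) ^ (c-1)) x := by
    intro x hx c
    have h1 : HasDerivAt (fun y : ℂ => y ^ c) (c * (x:ℂ) ^ (c-1)) (x:ℂ) := by
      simpa using (hasDerivAt_id (x:ℂ)).cpow_const (c := c) (Or.inl (by simpa using hx))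
    exact h1.comp_ofReal
  have hd : ∀ x ∈ uIcc (n:ℝ) (n+1), HasDerivAt H
      (w * (w+1) * (w+2) / 6 * ((x:ℂ) ^ (-w - 3) * ((x - n) * (x - n - 1/2) * (x - n - 1)))) x := by
    intro x hx
    rw [uIcc_of_le (by linarith)] at hx
    have hx0 : 0 < x := lt_of_lt_of_le hn' hx.1
    have hxc : (x:ℂ) ≠ 0 := by exact_mod_cast hx0.ne'
    have h1 : HasDerivAt (fun y : ℝ => (y:ℂ)) 1 x := (hasDerivAt_id x).ofReal_comp
    have hu := h1.sub_const (n:ℂ)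
    have hb3 := (hu.mul (hu.sub_const (1/2))).mul (hu.sub_const 1)
    have hb2 := ((hu.pow 2).sub hu).add_const (1/6 : ℂ)
    have hb1 := hu.sub_const (1/2)
    have hH := ((((hb3.const_mul (-(w*(w+1)/6))).mul (hp x hx0 (-w-2))).sub
      ((hb2.const_mul (w/2)).mul (hp x hx0 (-w-1)))).sub (hb1.mul (hp x hx0 (-w)))).sub
      ((hp x hx0 (1-w)).div_const (w-1))
    convert! hH using 1
    rw [show -w - 2 - 1 = -w - 3 by ring, show -w - 1 - 1 = -w-3+1 by ring, show -w - 2 = -w-3+1 by ring,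
      show -w - 1 = -w - 3 + 1 + 1 by ring, show (1 - w - 1) = -w-3+1+1+1 by ring,
      show -w = -w-3+1+1+1 by ring]
    simp only [cpow_add _ _ hxc, cpow_one]
    rw [show -w-3+1+1+1-3 = -w-3 by ring]
    simp only [Pi.mul_apply, Pi.sub_apply]
    generalize (x:ℂ)^(-w-3) = Y
    have : (1-w) / (w-1) = -1 := by field_simp; ring
    rw [mul_div_right_comm (1-w), this]
    simp only [Pi.pow_apply]
    push_cast
    ring
  have hI := intervalIntegral.integral_eq_sub_of_hasDerivAt hd (by
    apply ContinuousOn.intervalIntegrable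
    intro x hx
    rw [uIcc_of_le (by linarith)] at hx
    have hx0 : 0 < x := lt_of_lt_of_le hn' hx.1
    have := (hp x hx0 (-w-3)).continuousAt
    apply ContinuousAt.continuousWithinAt
    fun_prop)
  rw [intervalIntegral.integral_const_mul] at hI
  have hc : ∫ x in (n:ℝ)..(n+1:ℝ), (x:ℂ) ^ (-w - 3) * (B3 x : ℂ) =
      ∫ x in (n:ℝ)..(n+1:ℝ), ((x:ℂ) ^ (-w - 3) * ((x - n) * (x - n - 1/2) * (x - n - 1))) := by
    apply intervalIntegral.integral_congr
    intro x hx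
    rw [uIcc_of_le (by linarith)] at hx
    simp only
    congr 1
    rcases eq_or_lt_of_le hx.2 with h | h
    · have : Int.fract x = 0 := by rw [h]; exact_mod_cast Int.fract_natCast (n+1)
      rw [B3, this, h]; push_cast; ring
    · have : Int.fract x = x - n := by
        rw [Int.fract_eq_iff]; exact ⟨by linarith [hx.1], by linarith, n, by simp⟩
      rw [B3, this]; push_cast; ring
  rw [hc, hI]
  simp only [H, SEM]
  push_cast
  ring

lemma EM_sum {N M : ℕ} (hN : 1 ≤ N) (hM : N ≤ M) {w : ℂ} (hw : w ≠ 1) :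
    w * (w+1) * (w+2) / 6 * ∫ x in (N:ℝ)..(M:ℝ), (x:ℂ) ^ (-w - 3) * (B3 x : ℂ)
      = SEM w N - SEM w M - ∑ n ∈ Finset.Ico N M, (n:ℂ) ^ (-w) := by
  induction M, hM using Nat.le_induction with
  | base => simp
  | succ M hM ih =>
    have hii : ∀ a b : ℕ, 1 ≤ a → a ≤ b → IntervalIntegrable (fun x : ℝ => (x:ℂ) ^ (-w - 3) * (B3 x : ℂ)) volume a b := by
      intro a b ha hab
      have ha' : (0:ℝ) < a := by exact_mod_cast ha
      have : IntervalIntegrable (fun x : ℝ => (x:ℂ) ^ (-w - 3)) volume a b := by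
        apply ContinuousOn.intervalIntegrable
        intro x hx
        rw [uIcc_of_le (by exact_mod_cast hab)] at hx
        have hx0 : 0 < x := lt_of_lt_of_le ha' hx.1
        apply ContinuousAt.continuousWithinAt
        exact (continuousAt_ofReal_cpow_const x _ (Or.inr hx0.ne'))
      rw [intervalIntegrable_iff] at this ⊢
      refine Integrable.mul_bdd (c := 0.048114) this ?_ ?_
      · exact (measurable_ofReal.comp B3_meas).aestronglyMeasurable
      · refine Eventually.of_forall fun x => ?_
        rw [norm_real, Real.norm_eq_abs]; exact B3_bound x
    rw [← intervalIntegral.integral_add_adjacent_intervals (hii N M hN hM) (hii M (M+1) (hN.trans hM) (by lia)),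
      mul_add, ih, Finset.sum_Ico_succ_top hM]
    have := EM_step (hN.trans hM) hw
    push_cast
    rw [this]
    ring

lemma SEM_tendsto {w : ℂ} (hw : 1 < w.re) : Tendsto (fun M : ℕ => SEM w M) atTop (𝓝 0) := by
  have h : ∀ c : ℂ, c.re < 0 → Tendsto (fun M : ℕ => (M:ℂ) ^ c) atTop (𝓝 0) := by
    intro c hc
    rw [tendsto_zero_iff_norm_tendsto_zero]
    have h1 : Tendsto (fun M : ℕ => (M:ℝ) ^ (-(-c.re))) atTop (𝓝 0) :=
      (tendsto_rpow_neg_atTop (by linarith : 0 < -c.re)).comp tendsto_natCast_atTop_atTop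
    refine h1.congr' ?_
    filter_upwards [eventually_gt_atTop 0] with M hM
    rw [norm_natCast_cpow_of_pos hM]; simp
  unfold SEM
  have h1 := h (1-w) (by simp; linarith)
  have h2 := h (-w) (by simp; linarith)
  have h3 := h (-w-1) (by simp; linarith)
  simpa using ((h1.div_const (w-1)).add (h2.div_const 2)).add (h3.const_mul (w/12))

lemma zeta_EM {N : ℕ} (hN : 1 ≤ N) {w : ℂ} (hw : 1 < w.re) :
    riemannZeta w = ∑ n ∈ Finset.Ico 1 N, (n:ℂ) ^ (-w) + SEM w N - w*(w+1)*(w+2)/6 * Jr N w := by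
  have hw1 : w ≠ 1 := by rintro rfl; simp at hw
  have hT : Tendsto (fun M : ℕ => w * (w+1) * (w+2) / 6 * ∫ x in (N:ℝ)..(M:ℝ), (x:ℂ) ^ (-w - 3) * (B3 x : ℂ))
      atTop (𝓝 (w*(w+1)*(w+2)/6 * Jr N w)) := by
    apply Tendsto.const_mul
    exact intervalIntegral_tendsto_integral_Ioi _ (Jr_int hN (by linarith)) tendsto_natCast_atTop_atTop
  have hS : Tendsto (fun M : ℕ => ∑ n ∈ Finset.Ico 1 M, (n:ℂ) ^ (-w)) atTop (𝓝 (riemannZeta w)) := by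
    have h1 : Summable (fun n : ℕ => 1 / (n:ℂ)^w) := summable_one_div_nat_cpow.mpr hw
    have h2 := h1.hasSum.tendsto_sum_nat
    rw [← zeta_eq_tsum_one_div_nat_cpow hw] at h2
    refine h2.congr fun M => ?_
    have hw0 : w ≠ 0 := by rintro rfl; simp at hw; linarith
    rcases Nat.eq_zero_or_pos M with rfl | hM
    · simp
    · rw [Finset.range_eq_Ico, Finset.sum_eq_sum_Ico_succ_bot hM]
      simp [hw0, cpow_neg]
  have h2 : Tendsto (fun M : ℕ => SEM w N - SEM w M - (∑ n ∈ Finset.Ico 1 M, (n:ℂ) ^ (-w) - ∑ n ∈ Finset.Ico 1 N, (n:ℂ) ^ (-w)))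
      atTop (𝓝 (SEM w N - 0 - (riemannZeta w - ∑ n ∈ Finset.Ico 1 N, (n:ℂ) ^ (-w)))) :=
    ((SEM_tendsto hw).const_sub _).sub (hS.sub_const _)
  have h3 := tendsto_nhds_unique (hT.congr' (by
    filter_upwards [eventually_ge_atTop N] with M hM
    rw [EM_sum hN hM hw1, ← Finset.sum_Ico_consecutive _ hN hM]
    ring)) h2
  rw [h3]; ring

/-- main Euler-Maclaurin formula, cleared of the pole -/
lemma etz_EM {N : ℕ} (hN : 1 ≤ N) {w : ℂ} (hw : -2 < w.re) :
    etz w = (w-1) * ∑ n ∈ Finset.Ico 1 N, (n:ℂ) ^ (-w) + ((N:ℂ) ^ (1 - w) + (w-1) * (N:ℂ) ^ (-w) / 2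
      + (w-1) * w / 12 * (N:ℂ) ^ (-w - 1)) - (w-1)*w*(w+1)*(w+2)/6 * Jr N w := by
  have hN' : (N:ℂ) ≠ 0 := by exact_mod_cast (by lia : N ≠ 0)
  let U : Set ℂ := {w | -2 < w.re}
  have hU : IsOpen U := isOpen_lt continuous_const continuous_re
  have hUc : IsPreconnected U := (convex_halfSpace_re_gt _).isPreconnected
  let F : ℂ → ℂ := fun w => (w-1) * ∑ n ∈ Finset.Ico 1 N, (n:ℂ) ^ (-w) + ((N:ℂ) ^ (1 - w) + (w-1) * (N:ℂ) ^ (-w) / 2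
      + (w-1) * w / 12 * (N:ℂ) ^ (-w - 1)) - (w-1)*w*(w+1)*(w+2)/6 * Jr N w
  have hF : DifferentiableOn ℂ F U := by
    intro w hw
    apply DifferentiableAt.differentiableWithinAt
    have h1 := Jr_diff hN hw
    have h2 : ∀ n ∈ Finset.Ico 1 N, DifferentiableAt ℂ (fun w : ℂ => (n:ℂ) ^ (-w)) w := by
      intro n hn
      have : (n:ℂ) ≠ 0 := by
        rw [Finset.mem_Ico] at hn
        exact_mod_cast (by lia : n ≠ 0)
      exact DifferentiableAt.const_cpow (by fun_prop) (Or.inl this)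
    have h3 := DifferentiableAt.fun_sum h2
    have h4 : DifferentiableAt ℂ (fun w : ℂ => (N:ℂ) ^ (-w)) w := DifferentiableAt.const_cpow (by fun_prop) (Or.inl hN')
    have h5 : DifferentiableAt ℂ (fun w : ℂ => (N:ℂ) ^ (1-w)) w := DifferentiableAt.const_cpow (by fun_prop) (Or.inl hN')
    have h6 : DifferentiableAt ℂ (fun w : ℂ => (N:ℂ) ^ (-w-1)) w := DifferentiableAt.const_cpow (by fun_prop) (Or.inl hN')
    simp only [F]
    fun_prop
  have h := AnalyticOnNhd.eqOn_of_preconnected_of_eventuallyEq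
    (etz_differentiable.differentiableOn.analyticOnNhd hU)
    (hF.analyticOnNhd hU) hUc (show (2:ℂ) ∈ U by simp [U]) (by
      have : ∀ᶠ z : ℂ in 𝓝 2, 1 < z.re := by
        apply (continuous_re.isOpen_preimage _ isOpen_Ioi).mem_nhds; simp
      filter_upwards [this] with z hz
      have h0 : z ≠ 0 := by rintro rfl; simp at hz; linarith
      have h1 : z ≠ 1 := by rintro rfl; simp at hz
      have h1' := sub_ne_zero.mpr h1
      rw [etz_eq h0 h1, zeta_EM hN hz, SEM]
      simp only [F]
      field_simp)
  exact h hw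

end

section

noncomputable def rG (z : ℂ) : ℂ := Gamma (z + 1/2) / Gamma z

noncomputable def dG (z : ℂ) (j : ℕ) : ℂ := 1 / 16 / ((z + j + 1/2)^2 * (z + j - 1/4))

lemma dG_sum {z : ℂ} (hz : 3/4 < z.re) (n : ℕ) :
    ∑ j ∈ Finset.range n, ‖dG z j‖ ≤ 1 / (32 * (z.re - 3/4)^2) := by
  set x := z.re with hx
  have key : ∀ j : ℕ, ‖dG z j‖ ≤ 1/32 * (1/(x - 3/4 + j)^2 - 1/(x - 3/4 + (j+1:ℕ))^2) := by
    intro j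
    have hj : (0:ℝ) ≤ j := Nat.cast_nonneg j
    have h1 : x + j - 1/4 ≤ ‖z + j - 1/4‖ := by
      refine le_trans (le_of_eq ?_) (re_le_norm _); simp [hx]
    have h2 : x + j + 1/2 ≤ ‖z + j + 1/2‖ := by
      refine le_trans (le_of_eq ?_) (re_le_norm _); simp [hx]
    have hc : 0 < x + j - 3/4 := by linarith
    set c := x + j - 1/4 with hcd
    have h3 : c^3 ≤ ‖z + j + 1/2‖^2 * ‖z + j - 1/4‖ := by
      have : c ≤ ‖z + j + 1/2‖ := by linarith
      have h0 : 0 ≤ c := by linarith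
      calc c^3 = c^2 * c := by ring
        _ ≤ _ := by gcongr
    have h4 : ‖dG z j‖ ≤ 1/16 / c^3 := by
      rw [dG, norm_div, norm_mul, norm_pow]
      have : ‖(1/16:ℂ)‖ = 1/16 := by norm_num
      rw [this]
      have : 0 < c^3 := by apply pow_pos; linarith
      gcongr
    refine h4.trans ?_
    have e1 : x - 3/4 + j = c - 1/2 := by rw [hcd]; ring
    have e2 : x - 3/4 + (j+1:ℕ) = c + 1/2 := by rw [hcd]; push_cast; ring
    rw [e1, e2]
    have hc1 : 0 < c - 1/2 := by linarith
    have hc2 : 0 < c + 1/2 := by linarith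
    have hc3 : 0 < c := by linarith
    have : 1/32 * (1/(c-1/2)^2 - 1/(c+1/2)^2) - 1/16/c^3 = 1/16 * (c^2/2 - 1/16) / ((c-1/2)^2*(c+1/2)^2*c^3) := by
      have k1 := hc1.ne'
      have k2 := hc2.ne'
      have k3 := hc3.ne'
      generalize hu : c - 1/2 = u at k1
      generalize hv : c + 1/2 = v at k2
      have : u = c - 1/2 := hu.symm
      have : v = c + 1/2 := hv.symm
      field_simp
      subst u v
      ring
    have h5 : 0 ≤ 1/16 * (c^2/2 - 1/16) / ((c-1/2)^2*(c+1/2)^2*c^3) := by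
      have : 0 ≤ c^2/2 - 1/16 := by nlinarith
      positivity
    linarith
  refine (Finset.sum_le_sum fun j _ => key j).trans ?_
  rw [← Finset.mul_sum, Finset.sum_range_sub' (fun j : ℕ => 1/(x - 3/4 + j)^2)]
  have : 0 ≤ 1/(x - 3/4 + n)^2 := by positivity
  have h2 : 1 / (32 * (x - 3/4)^2) = 1/32 * (1/(x - 3/4)^2) := by rw [one_div_mul_one_div]
  rw [h2]
  simp
  positivity

lemma rG_sq {z : ℂ} (hz : 3/4 < z.re) :
    ∃ e : ℂ, rG z ^ 2 = (z - 1/4) * (1 + e) ∧ ‖e‖ ≤ Real.exp (1 / (32 * (z.re - 3/4)^2)) - 1 := by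
  have hne : ∀ (c : ℂ) (j : ℕ), -3/4 < c.re → z + j + c ≠ 0 := by
    intro c j hc h
    have := congrArg re h
    simp at this
    have hj : (0:ℝ) ≤ j := Nat.cast_nonneg j
    linarith
  have hz4 : z - 1/4 ≠ 0 := by
    have := hne (-1/4) 0 (by norm_num); simpa [sub_eq_add_neg, neg_div] using this
  have hG : Gamma z ≠ 0 := Gamma_ne_zero_of_re_pos (by linarith)
  have hT : Tendsto (fun n : ℕ => (GammaSeq (z + 1/2) n / GammaSeq z n)^2) atTop (𝓝 (rG z ^ 2)) :=
    ((GammaSeq_tendsto_Gamma _).div (GammaSeq_tendsto_Gamma _) hG).pow 2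
  have e1 : ∀ n : ℕ, 0 < n → (GammaSeq (z + 1/2) n / GammaSeq z n)^2 =
      (n / (z + n + 3/4)) * ((z - 1/4) * ∏ j ∈ Finset.range (n+1), (1 + dG z j)) := by
    intro n hn
    have hn' : (n:ℂ) ≠ 0 := by exact_mod_cast hn.ne'
    have hP : ∏ j ∈ Finset.range (n+1), (1 + dG z j) =
        ∏ j ∈ Finset.range (n+1), (((z + j)/(z + j + 1/2))^2 * ((z + (j+1:ℕ) - 1/4)/(z + j - 1/4))) := by
      apply Finset.prod_congr rfl
      intro j _
      have h1 := hne (1/2) j (by norm_num)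
      have h2 : z + j - 1/4 ≠ 0 := by
        have := hne (-1/4) j (by norm_num); simpa [sub_eq_add_neg, neg_div] using this
      rw [dG]
      push_cast
      generalize (j:ℂ) = J at *
      have e3 : z + (J + 1) - 1/4 = z + J + 3/4 := by ring
      rw [e3]
      generalize hu : z + J + 1/2 = u at h1
      generalize hv : z + J - 1/4 = v at h2
      have e1 : v = u - 3/4 := by rw [← hu, ← hv]; ring
      have e2 : z + J = u - 1/2 := by rw [← hu]; ring
      rw [e2]
      field_simp
      rw [e1]
      ring
    have hQ : ∀ m : ℕ, ∏ j ∈ Finset.range m, ((z + (j+1:ℕ) - 1/4)/(z + j - 1/4)) = (z + m - 1/4)/(z - 1/4) := by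
      intro m
      induction m with
      | zero => rw [Finset.prod_range_zero, Nat.cast_zero, add_zero, div_self hz4]
      | succ m ih =>
        rw [Finset.prod_range_succ, ih]
        have h2 : z + m - 1/4 ≠ 0 := by
          have := hne (-1/4) m (by norm_num); simpa [sub_eq_add_neg, neg_div] using this
        generalize z + m - 1/4 = v at *
        generalize z + (m+1:ℕ) - 1/4 = v2 at *
        generalize z - 1/4 = v3 at *
        field_simp
    have hfac : ((n.factorial : ℕ):ℂ) ≠ 0 := by exact_mod_cast n.factorial_ne_zero
    rw [hP, Finset.prod_mul_distrib, hQ, Finset.prod_pow, Finset.prod_div_distrib, GammaSeq, GammaSeq]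
    have h3 : ∏ j ∈ Finset.range (n+1), (z + j) ≠ 0 := by
      rw [Finset.prod_ne_zero_iff]; intro j _; simpa using hne 0 j (by norm_num)
    have h4 : ∏ j ∈ Finset.range (n+1), (z + j + 1/2) ≠ 0 := by
      rw [Finset.prod_ne_zero_iff]; intro j _; exact hne _ j (by norm_num)
    have h5 : ∏ j ∈ Finset.range (n+1), (z + 1/2 + j) = ∏ j ∈ Finset.range (n+1), (z + j + 1/2) := by
      apply Finset.prod_congr rfl; intro j _; ring
    rw [h5, cpow_add _ _ hn']
    have hz : (n:ℂ)^z ≠ 0 := by simp [cpow_eq_zero_iff, hn']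
    have hs : ((n:ℂ)^(1/2:ℂ))^2 = n := by
      rw [← cpow_nat_mul]; simp
    have h6 := hne (3/4) n (by norm_num)
    push_cast
    rw [show z + (n + 1:ℂ) - 1/4 = z + n + 3/4 by ring]
    generalize (n:ℂ)^(1/2:ℂ) = R at *
    generalize z + n + 3/4 = Y at *
    generalize ∏ j ∈ Finset.range (n+1), (z + j + 1/2) = p1 at *
    generalize ∏ j ∈ Finset.range (n+1), (z + j) = p2 at *
    generalize (n:ℂ)^z = p3 at *
    generalize z - 1/4 = p4 at *
    rw [← hs]
    have hR : R ≠ 0 := by rintro rfl; simp at hs; exact hn' hs.symm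
    field_simp
  have hlim1 : Tendsto (fun n : ℕ => (z + n + 3/4) / n) atTop (𝓝 1) := by
    have h1 : Tendsto (fun n : ℕ => (z + 3/4) * ((n:ℂ))⁻¹ + 1) atTop (𝓝 ((z+3/4) * 0 + 1)) :=
      ((tendsto_inv_atTop_nhds_zero_nat (𝕜 := ℂ)).const_mul _).add_const 1
    rw [mul_zero, zero_add] at h1
    refine h1.congr' ?_
    filter_upwards [eventually_gt_atTop 0] with n hn
    have hn' : (n:ℂ) ≠ 0 := by exact_mod_cast hn.ne'
    field_simp; ring
  have hlim2 : Tendsto (fun n : ℕ => ∏ j ∈ Finset.range (n+1), (1 + dG z j) - 1) atTop (𝓝 (1 * rG z ^ 2 / (z - 1/4) - 1)) := by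
    refine (((hlim1.mul hT).div_const (z-1/4)).sub_const 1).congr' ?_
    filter_upwards [eventually_gt_atTop 0] with n hn
    have hn' : (n:ℂ) ≠ 0 := by exact_mod_cast hn.ne'
    have h6 := hne (3/4) n (by norm_num)
    rw [e1 n hn]
    generalize z + n + 3/4 = Y at *
    generalize z - 1/4 = p4 at *
    field_simp
  refine ⟨1 * rG z ^ 2 / (z - 1/4) - 1, by generalize z - 1/4 = p4 at *; field_simp; ring, ?_⟩
  refine le_of_tendsto hlim2.norm (Eventually.of_forall fun n => ?_)
  refine (Finset.norm_prod_one_add_sub_one_le _ _).trans ?_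
  gcongr
  exact dG_sum hz _

lemma rG_ne {z : ℂ} (hz : 0 < z.re) : rG z ≠ 0 := by
  rw [rG]
  exact div_ne_zero (Gamma_ne_zero_of_re_pos (by simp; linarith)) (Gamma_ne_zero_of_re_pos hz)

lemma rG_shift {z : ℂ} (hz : 0 < z.re) : rG z = rG (z + 1) * (z / (z + 1/2)) := by
  have h0 : z ≠ 0 := by rintro rfl; simp at hz
  have h1 : z + 1/2 ≠ 0 := by
    intro h; have := congrArg re h; simp at this; linarith
  have hG : Gamma z ≠ 0 := Gamma_ne_zero_of_re_pos hz
  rw [rG, rG, show z + 1 + 1/2 = z + 1/2 + 1 by ring, Gamma_add_one _ h0, Gamma_add_one _ h1]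
  generalize Gamma (z + 1/2) = g at *
  generalize z + 1/2 = y at *
  field_simp

lemma rG_contAt {z : ℂ} (hz : 0 < z.re) : DifferentiableAt ℂ rG z := by
  unfold rG
  have h1 : DifferentiableAt ℂ Gamma (z + 1/2) := differentiableAt_Gamma _ (by
    intro m h; have := congrArg re h; simp at this
    have : (0:ℝ) ≤ m := Nat.cast_nonneg m
    linarith)
  have h2 : DifferentiableAt ℂ Gamma z := differentiableAt_Gamma _ (by
    intro m h; have := congrArg re h; simp at this
    have : (0:ℝ) ≤ m := Nat.cast_nonneg m
    linarith)
  have h3 : DifferentiableAt ℂ (fun z : ℂ => Gamma (z + 1/2)) z :=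
    DifferentiableAt.comp (g := Gamma) (f := fun z : ℂ => z + 1/2) z h1 (by fun_prop)
  exact h3.div h2 (Gamma_ne_zero_of_re_pos hz)

lemma exp_sub_one_lt {x : ℝ} (h : x ≤ 1/2) : Real.exp x - 1 < 1 := by
  have h1 : Real.exp x < Real.exp (Real.log 2) := by
    apply Real.exp_lt_exp.mpr
    have := Real.log_two_gt_d9
    linarith
  rw [Real.exp_log (by norm_num)] at h1
  linarith

lemma rG_re_pos {z : ℂ} (hz : 1 ≤ z.re) : 0 < (rG z).re := by
  have hne : ∀ w : ℂ, 1 ≤ w.re → (rG w).re ≠ 0 := by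
    intro w hw h
    obtain ⟨e, he, hb⟩ := rG_sq (z := w) (by linarith)
    have hb1 : ‖e‖ < 1 := by
      refine hb.trans_lt (exp_sub_one_lt ?_)
      rw [div_le_iff₀ (by nlinarith)]
      nlinarith
    have hre : -1 < e.re := by
      have := (abs_le.mp (abs_re_le_norm e)).1
      linarith
    have h2 : rG w = (rG w).im * I := by
      apply Complex.ext <;> simp [h]
    rw [h2] at he
    have h3 : ((rG w).im * I : ℂ)^2 = -((rG w).im^2 : ℝ) := by
      rw [mul_pow, I_sq]; push_cast; ring
    rw [h3] at he
    set c := (rG w).im^2 with hc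
    have hc0 : 0 ≤ c := sq_nonneg _
    have hr := congrArg re he
    have hi := congrArg im he
    simp at hr hi
    norm_num at hr hi
    have hx : 0 < w.re - 1/4 := by linarith
    have h5 : w.im * ((w.re - 1/4) * e.im + w.im * (1 + e.re)) = 0 := by rw [← hi]; simp
    have h6 : (w.re - 1/4)^2 * (1 + e.re) + w.im^2*(1+e.re) = -c * (w.re - 1/4) := by
      linear_combination (-(w.re-1/4)) * hr + h5
    have : 0 < (w.re - 1/4)^2 * (1 + e.re) := by
      apply mul_pos (by positivity); linarith
    have : 0 ≤ w.im^2*(1+e.re) := mul_nonneg (sq_nonneg _) (by linarith)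
    nlinarith
  by_contra hcon
  push Not at hcon
  let p : ℝ → ℝ := fun u => (rG (z.re + u * z.im * I)).re
  have hp : ContinuousOn p (Icc 0 1) := by
    intro u _
    apply ContinuousAt.continuousWithinAt
    have h1 : ContinuousAt rG (z.re + u * z.im * I) := (rG_contAt (by simp; linarith)).continuousAt
    have h2 : ContinuousAt (fun u : ℝ => (z.re + u * z.im * I : ℂ)) u := by fun_prop
    exact continuous_re.continuousAt.comp (ContinuousAt.comp (g := rG) h1 h2)
  have hp0 : 0 ≤ p 0 := by
    simp only [p, rG]
    have : (z.re + (0:ℝ) * z.im * I : ℂ) = (z.re : ℝ) := by simp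
    rw [this]
    rw [show (z.re : ℂ) + 1/2 = ((z.re + 1/2 : ℝ) : ℂ) by push_cast; ring, Gamma_ofReal, Gamma_ofReal, ← ofReal_div, ofReal_re]
    exact (div_pos (Real.Gamma_pos_of_pos (by linarith)) (Real.Gamma_pos_of_pos (by linarith))).le
  have hp1 : p 1 ≤ 0 := by
    simp only [p]
    rw [show (z.re + (1:ℝ) * z.im * I : ℂ) = z by simp]; exact hcon
  obtain ⟨u, _, hu⟩ := intermediate_value_Icc' (by norm_num) hp ⟨hp1, hp0⟩
  exact hne _ (by simpa using hz) hu

end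

section

noncomputable def Zr (σ : ℝ) : ℝ := ∑' n : ℕ, 1 / ((n + 1 : ℕ):ℝ) ^ σ

lemma Zr_summable {σ : ℝ} (h : 1 < σ) : Summable (fun n : ℕ => 1 / ((n+1:ℕ):ℝ)^σ) :=
  (summable_nat_add_iff 1).mpr (Real.summable_one_div_nat_rpow.mpr h)

lemma zeta_tsum {w : ℂ} (hw : 1 < w.re) : riemannZeta w = ∑' n : ℕ, 1 / ((n+1:ℕ):ℂ)^w := by
  rw [zeta_eq_tsum_one_div_nat_add_one_cpow hw]; push_cast; rfl

lemma Zr_eq {σ : ℝ} (h : 1 < σ) : ((Zr σ : ℝ) : ℂ) = riemannZeta σ := by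
  rw [zeta_tsum (by simpa using h), Zr, ofReal_tsum]
  congr 1; ext n
  rw [ofReal_div, ofReal_cpow (by positivity)]; simp

lemma term_norm (w : ℂ) (n : ℕ) : ‖1 / ((n+1:ℕ):ℂ)^w‖ = 1 / ((n+1:ℕ):ℝ)^w.re := by
  rw [norm_div, norm_one, norm_natCast_cpow_of_pos (by lia)]

lemma term_le {w : ℂ} {σ : ℝ} (hw : σ ≤ w.re) (n : ℕ) :
    ‖1 / ((n+1:ℕ):ℂ)^w‖ ≤ 1 / ((n+1:ℕ):ℝ)^σ := by
  rw [term_norm]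
  have : (1:ℝ) ≤ ((n+1:ℕ):ℝ) := by exact_mod_cast (by lia : 1 ≤ n+1)
  gcongr

lemma zeta_norm_le {w : ℂ} {σ : ℝ} (h : 1 < σ) (hw : σ ≤ w.re) : ‖riemannZeta w‖ ≤ Zr σ := by
  rw [zeta_tsum (by linarith)]
  exact tsum_of_norm_bounded (Zr_summable h).hasSum (term_le hw)

lemma zeta_sub_one_le {w : ℂ} {σ : ℝ} (h : 1 < σ) (hw : σ ≤ w.re) : ‖riemannZeta w - 1‖ ≤ Zr σ - 1 := by
  have hs : Summable (fun n : ℕ => 1 / ((n+1:ℕ):ℂ)^w) :=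
    Summable.of_norm_bounded (Zr_summable h) (term_le hw)
  have h1 := hs.tsum_eq_zero_add
  have h2 := (Zr_summable h).tsum_eq_zero_add
  rw [zeta_tsum (by linarith), h1, Zr, h2]
  simp only [Nat.cast_add, Nat.cast_zero, zero_add, Nat.cast_one, one_cpow, Real.one_rpow, div_one, add_sub_cancel_left]
  refine tsum_of_norm_bounded ((summable_nat_add_iff 1).mpr (Zr_summable h)).hasSum ?_ |>.trans (le_of_eq ?_)
  · intro n
    have := term_le hw (n+1)
    simpa using this
  · simp

lemma inv_zeta_le {w : ℂ} (hw : 1 < w.re) : ‖(riemannZeta w)⁻¹‖ ≤ Zr w.re := by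
  have h1 := ArithmeticFunction.LSeries_zeta_mul_Lseries_moebius hw
  rw [ArithmeticFunction.LSeries_zeta_eq_riemannZeta hw] at h1
  rw [inv_eq_of_mul_eq_one_right h1, LSeries]
  have hs : Summable (fun n : ℕ => 1/(n:ℝ)^w.re) := Real.summable_one_div_nat_rpow.mpr hw
  have hz : Zr w.re = ∑' n : ℕ, 1/(n:ℝ)^w.re := by
    rw [hs.tsum_eq_zero_add, Zr]; simp [Real.zero_rpow (by linarith : w.re ≠ 0)]
  rw [hz]
  refine tsum_of_norm_bounded hs.hasSum ?_
  intro n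
  rw [LSeries.norm_term_eq]
  split_ifs with hn
  · subst hn; positivity
  · gcongr
    rw [Complex.norm_intCast]
    exact_mod_cast ArithmeticFunction.abs_moebius_le_one

lemma etz_growth {w : ℂ} (hw : -3/2 ≤ w.re) : ‖etz w‖ ≤ 2 * (1 + ‖w‖)^4 := by
  rw [etz_EM (N := 1) le_rfl (by linarith)]
  have hJ := Jr_bound (N := 1) le_rfl (w := w) (by linarith)
  have hJ' : ‖Jr 1 w‖ ≤ 0.1 := by
    refine hJ.trans ?_
    simp only [Nat.cast_one, Real.one_rpow]
    have : 1/(w.re+2) ≤ 2 := by rw [div_le_iff₀ (by linarith)]; linarith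
    nlinarith
  simp only [Finset.Ico_self, Finset.sum_empty, mul_zero, Nat.cast_one, one_cpow, zero_add, mul_one]
  set r := ‖w‖
  have hr : 0 ≤ r := norm_nonneg _
  have a1 : ‖w - 1‖ ≤ 1 + r := (norm_sub_le _ _).trans (by rw [norm_one]; linarith)
  have a2 : ‖w + 1‖ ≤ 1 + r := (norm_add_le _ _).trans (by rw [norm_one]; linarith)
  have a3 : ‖w + 2‖ ≤ 2*(1 + r) := (norm_add_le _ _).trans (by norm_num; linarith)
  have b1 : ‖(w-1)/2‖ ≤ (1+r)/2 := by rw [norm_div]; norm_num; linarith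
  have b2 : ‖(w-1)*w/12‖ ≤ (1+r)*r/12 := by
    rw [norm_div, norm_mul]; norm_num; gcongr
  have b3 : ‖(w-1)*w*(w+1)*(w+2)/6 * Jr 1 w‖ ≤ (1+r)*r*(1+r)*(2*(1+r))/6*0.1 := by
    rw [norm_mul, norm_div, norm_mul, norm_mul, norm_mul]
    have : ‖(6:ℂ)‖ = 6 := by norm_num
    rw [this]
    gcongr
  refine (norm_sub_le _ _).trans ?_
  have c1 : ‖(1:ℂ) + (w-1)/2 + (w-1)*w/12‖ ≤ 1 + (1+r)/2 + (1+r)*r/12 := by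
    refine (norm_add₃_le).trans ?_
    rw [norm_one]; linarith
  refine (add_le_add c1 b3).trans ?_
  have : 0 ≤ r^2 := by positivity
  have : 0 ≤ r^3 := by positivity
  have : 0 ≤ r^4 := by positivity
  nlinarith

lemma Zr_growth {σ : ℝ} (h : 1 < σ) : Zr σ ≤ 2 * (1 + σ)^4 / (σ - 1) := by
  have h1 := etz_growth (w := σ) (by simp; linarith)
  rw [etz_eq (by norm_cast; linarith) (by norm_cast; linarith), ← Zr_eq h] at h1
  norm_cast at h1
  rw [Real.norm_eq_abs, Real.norm_eq_abs, abs_of_nonneg (by linarith : 0 ≤ σ)] at h1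
  rw [le_div_iff₀ (by linarith)]
  have := le_abs_self ((σ - 1) * Zr σ)
  linarith

lemma inv_etz_growth {w : ℂ} (h : 1 < w.re) : ‖(etz w)⁻¹‖ ≤ 2 * (1 + ‖w‖)^4 / (w.re - 1)^2 := by
  have h0 : w ≠ 0 := by rintro rfl; simp at h; linarith
  have h1 : w ≠ 1 := by rintro rfl; simp at h
  rw [etz_eq h0 h1, mul_inv, norm_mul, norm_inv]
  have a1 := (inv_zeta_le h).trans (Zr_growth h)
  have a2 : w.re - 1 ≤ ‖w - 1‖ := by
    refine le_trans (le_of_eq ?_) (re_le_norm _); simp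
  have a3 : w.re ≤ ‖w‖ := re_le_norm w
  calc ‖w-1‖⁻¹ * ‖(riemannZeta w)⁻¹‖ ≤ (w.re - 1)⁻¹ * (2 * (1 + w.re)^4 / (w.re - 1)) := by
        have : 0 < w.re - 1 := by linarith
        gcongr
    _ = 2 * (1 + w.re)^4 / (w.re-1)^2 := by
        have : w.re - 1 ≠ 0 := by linarith
        field_simp
    _ ≤ _ := by gcongr

lemma Zr_three_half : Zr (3/2) ≤ 2.7 := by
  have h := zeta_EM (N := 1) le_rfl (w := ((3/2:ℝ):ℂ)) (by simp; norm_num)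
  rw [← Zr_eq (by norm_num)] at h
  have hJ := Jr_bound (N := 1) le_rfl (w := ((3/2:ℝ):ℂ)) (by simp; norm_num)
  simp [SEM] at h hJ
  have h2 := congrArg re h
  have hJ2 := (abs_le.mp ((abs_re_le_norm _).trans hJ)).1
  norm_num at h2 hJ2
  linarith

lemma Zr_five_half : Zr (5/2) ≤ 1.45 := by
  have h := zeta_EM (N := 1) le_rfl (w := ((5/2:ℝ):ℂ)) (by simp; norm_num)
  rw [← Zr_eq (by norm_num)] at h
  have hJ := Jr_bound (N := 1) le_rfl (w := ((5/2:ℝ):ℂ)) (by simp; norm_num)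
  simp [SEM] at h hJ
  have h2 := congrArg re h
  have hJ2 := (abs_le.mp ((abs_re_le_norm _).trans hJ)).1
  norm_num at h2 hJ2
  linarith

end

section

/-- auxiliary factor -/
noncomputable def qf (τ : ℝ) (z : ℂ) : ℂ := (z + τ * I) / (z + 1 + τ * I)

lemma qf_ne {τ : ℝ} {z : ℂ} (hz : 0 ≤ z.re) : z + 1 + τ * I ≠ 0 := by
  intro h; have := congrArg re h; simp at this; linarith

lemma qf_le {τ : ℝ} {z : ℂ} (hz : 0 ≤ z.re) : ‖qf τ z‖ ≤ 1 := by
  rw [qf, norm_div, div_le_one (norm_pos_iff.mpr (qf_ne hz)), Complex.norm_def, Complex.norm_def]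
  apply Real.sqrt_le_sqrt
  simp [normSq_apply]
  nlinarith

lemma qf_hor {z : ℂ} (hz : 0 ≤ z.re) {τ : ℝ} (h : z.im = -τ) : ‖qf τ z‖ = z.re / (1 + z.re) := by
  have h1 : z + τ * I = (z.re : ℝ) := by apply Complex.ext <;> simp [h]
  have h2 : z + 1 + τ * I = ((1 + z.re : ℝ):ℂ) := by apply Complex.ext <;> simp [h]; ring
  rw [qf, h1, h2, ← ofReal_div, norm_real, Real.norm_of_nonneg (by positivity)]

lemma qf_diff {τ : ℝ} {z : ℂ} (hz : 0 ≤ z.re) : DifferentiableAt ℂ (qf τ) z := by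
  unfold qf
  have := qf_ne (τ := τ) hz
  fun_prop (disch := assumption)

lemma qf_tendsto (z : ℂ) (l : Filter ℝ) (hl : Tendsto (fun T : ℝ => |T|) l atTop) :
    Tendsto (fun T => qf T z) l (𝓝 1) := by
  have h1 : Tendsto (fun T : ℝ => ‖z + 1 + T * I‖) l atTop := by
    refine tendsto_atTop_mono (f := fun T => |T| - ‖z + 1‖) ?_ (tendsto_atTop_add_const_right _ _ hl)
    intro T
    have : ‖(T:ℂ) * I‖ = |T| := by simp
    have h2 := norm_sub_le (z + 1 + T * I) (z+1)
    rw [show z + 1 + T * I - (z+1) = T * I by ring, this] at h2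
    linarith
  have h2 : Tendsto (fun T : ℝ => 1 - (z + 1 + T * I)⁻¹) l (𝓝 (1 - 0)) := by
    apply Tendsto.const_sub
    rw [tendsto_zero_iff_norm_tendsto_zero]
    simp only [norm_inv]
    exact tendsto_inv_atTop_zero.comp h1
  rw [sub_zero] at h2
  refine h2.congr' ?_
  filter_upwards [h1.eventually_gt_atTop 0] with T hT
  have := norm_pos_iff.mp hT
  rw [qf]
  generalize hu : z + 1 + T * I = u at *
  have : z + T * I = u - 1 := by rw [← hu]; ring
  rw [this]; field_simp

lemma PLpole {F : ℂ → ℂ} (hF : ∀ z : ℂ, 0 ≤ z.re → DifferentiableAt ℂ F z)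
    (h0 : ∀ z : ℂ, z.re = 0 → ‖F z‖ ≤ 1) {C : ℝ} {k : ℕ} (hC : 0 ≤ C)
    (hg : ∀ z : ℂ, 0 < z.re → ‖F z‖ ≤ C * (1 + ‖z‖)^k * (1 + 1/z.re)^2) {z₀ : ℂ} (hz₀ : 0 < z₀.re) :
    ‖F z₀‖ ≤ 1 := by
  -- with epsilon
  have main : ∀ ε : ℝ, 0 < ε → ‖F z₀ / (1 + ε * z₀)^(k+1)‖ ≤ 1 := by
    intro ε hε
    have den : ∀ z : ℂ, 0 ≤ z.re → 1 ≤ ‖1 + ε * z‖ := by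
      intro z hz
      refine le_trans ?_ (re_le_norm _)
      simp; positivity
    have den2 : ∀ z : ℂ, 0 ≤ z.re → ε * ‖z‖ ≤ ‖1 + ε * z‖ := by
      intro z hz
      have : ε * ‖z‖ = ‖(ε:ℂ) * z‖ := by rw [norm_mul, norm_real, Real.norm_of_nonneg hε.le]
      rw [this, Complex.norm_def, Complex.norm_def]
      apply Real.sqrt_le_sqrt
      simp [normSq_apply]
      have : 0 ≤ ε * z.re := by positivity
      nlinarith
    let V : ℝ → ℂ → ℂ := fun T z => F z / (1 + ε * z)^(k+1) * (qf T z * qf (-T) z)^2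
    have hV : ∀ᶠ T : ℝ in atTop, ‖V T z₀‖ ≤ 1 := by
      filter_upwards [eventually_ge_atTop 1, eventually_gt_atTop (‖z₀‖), eventually_ge_atTop (4 * C * 2^k / ε^(k+1))] with T hT1 hT2 hT3
      have big : ∀ z : ℂ, 0 ≤ z.re → T ≤ ‖z‖ → C * (1 + ‖z‖)^k * 4 ≤ ‖(1 + ε * z)^(k+1)‖ := by
        intro z hz hzT
        rw [norm_pow]
        have h1 : (ε * ‖z‖)^(k+1) ≤ ‖1 + ε * z‖^(k+1) := by
          gcongr; exact den2 z hz
        refine le_trans ?_ h1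
        have h2 : (1 + ‖z‖)^k ≤ (2 * ‖z‖)^k := by gcongr; linarith
        have h3 : 4 * C * 2^k ≤ ‖z‖ * ε^(k+1) := by
          rw [div_le_iff₀ (by positivity)] at hT3
          refine hT3.trans ?_
          gcongr
        calc C * (1 + ‖z‖)^k * 4 ≤ C * (2 * ‖z‖)^k * 4 := by gcongr
          _ = (4 * C * 2^k) * ‖z‖^k := by rw [mul_pow]; ring
          _ ≤ (‖z‖ * ε^(k+1)) * ‖z‖^k := by gcongr
          _ = _ := by rw [mul_pow]; ring
      let U : Set ℂ := Ioo 0 T ×ℂ Ioo (-T) T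
      have hUc : closure U = Icc 0 T ×ℂ Icc (-T) T := by
        rw [closure_reProdIm, closure_Ioo (by linarith), closure_Ioo (by linarith)]
      have hVd : ∀ z : ℂ, 0 ≤ z.re → DifferentiableAt ℂ (V T) z := by
        intro z hz
        have : (1 + ε * z)^(k+1) ≠ 0 := by
          apply pow_ne_zero; rw [← norm_pos_iff]; linarith [den z hz]
        have h1 := hF z hz
        have h2 := qf_diff (τ := T) hz
        have h3 := qf_diff (τ := -T) hz
        exact (h1.div (by fun_prop) this).mul ((h2.mul h3).pow 2)
      have hd : DiffContOnCl ℂ (V T) U := by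
        refine DifferentiableOn.diffContOnCl ?_
        rw [hUc]
        intro z hz
        exact (hVd z hz.1.1).differentiableWithinAt
      have hb : Bornology.IsBounded U := (Metric.isBounded_Ioo 0 T).reProdIm (Metric.isBounded_Ioo (-T) T)
      have hfr : ∀ z ∈ frontier U, ‖V T z‖ ≤ 1 := by
        intro z hz
        have hzc : z ∈ closure U := hz.1
        have hzi : z ∉ U := by
          have : IsOpen U := isOpen_Ioo.reProdIm isOpen_Ioo
          rw [this.frontier_eq] at hz; exact hz.2
        rw [hUc] at hzc
        obtain ⟨⟨hx0, hxT⟩, hy0, hyT⟩ := hzc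
        have hq : ‖qf T z * qf (-T) z‖ ≤ 1 := by
          rw [norm_mul]; exact mul_le_one₀ (qf_le hx0) (norm_nonneg _) (qf_le hx0)
        have hd1 : 1 ≤ ‖(1 + ε * z)^(k+1)‖ := by
          rw [norm_pow]; exact one_le_pow₀ (den z hx0)
        simp only [V]
        rw [norm_mul, norm_div, norm_pow (qf T z * _)]
        have hq2 : ‖qf T z * qf (-T) z‖^2 ≤ 1 := pow_le_one₀ (norm_nonneg _) hq
        rcases hx0.eq_or_lt with hx | hx
        · refine mul_le_one₀ ?_ (by positivity) hq2
          rw [div_le_one (by linarith)]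
          exact (h0 z hx.symm).trans hd1
        · have hg' := hg z hx
          by_cases hxx : z.re = T
          · refine mul_le_one₀ ?_ (by positivity) hq2
            rw [div_le_one (by linarith)]
            refine hg'.trans (le_trans ?_ (big z hx0 (hxx ▸ re_le_norm z)))
            have : (1 + 1/z.re)^2 ≤ 4 := by
              rw [hxx]
              have : 1/T ≤ 1 := by rw [div_le_one (by linarith)]; exact hT1
              have : 0 < 1/T := by positivity
              nlinarith
            gcongr
          · have him : z.im = T ∨ z.im = -T := by
              by_contra hcon
              push Not at hcon
              apply hzi
              exact ⟨⟨hx, lt_of_le_of_ne hxT hxx⟩, lt_of_le_of_ne hy0 (Ne.symm hcon.2), lt_of_le_of_ne hyT hcon.1⟩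
            have hq3 : ‖qf T z * qf (-T) z‖ ≤ z.re / (1 + z.re) := by
              rw [norm_mul]
              rcases him with him | him
              · rw [qf_hor (τ := -T) hx0 (by simpa using him)]
                exact mul_le_of_le_one_left (by positivity) (qf_le hx0)
              · rw [qf_hor (τ := T) hx0 him]
                exact mul_le_of_le_one_right (by positivity) (qf_le hx0)
            have hTz : T ≤ ‖z‖ := by
              refine le_trans ?_ (abs_im_le_norm z)
              rcases him with him | him <;> rw [him]
              · exact le_abs_self _
              · rw [abs_neg]; exact le_abs_self _
            have hb2 := big z hx0 hTz
            have hpos : 0 < ‖(1 + ε * z)^(k+1)‖ := by linarith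
            rw [div_mul_eq_mul_div, div_le_one hpos]
            calc ‖F z‖ * ‖qf T z * qf (-T) z‖^2 ≤ (C * (1 + ‖z‖)^k * (1 + 1/z.re)^2) * (z.re / (1 + z.re))^2 := by gcongr
              _ = C * (1 + ‖z‖)^k := by
                have : 1 + z.re ≠ 0 := by positivity
                field_simp
                ring
              _ ≤ C * (1 + ‖z‖)^k * 4 := by
                have : 0 ≤ C * (1 + ‖z‖)^k := by positivity
                linarith
              _ ≤ _ := hb2
      refine norm_le_of_forall_mem_frontier_norm_le hb hd hfr ?_
      rw [hUc]
      have h1 := abs_re_le_norm z₀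
      have h2 := abs_im_le_norm z₀
      rw [abs_le] at h1 h2
      exact ⟨⟨hz₀.le, by linarith⟩, by linarith, by linarith⟩
    have hlim : Tendsto (fun T => ‖V T z₀‖) atTop (𝓝 ‖F z₀ / (1 + ε * z₀)^(k+1) * (1 * 1)^2‖) := by
      have h1 := qf_tendsto z₀ atTop tendsto_abs_atTop_atTop
      have h2 : Tendsto (fun T => qf (-T) z₀) atTop (𝓝 1) :=
        (qf_tendsto z₀ atBot tendsto_abs_atBot_atTop).comp tendsto_neg_atTop_atBot
      exact (((h1.mul h2).pow 2).const_mul _).norm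
    have := le_of_tendsto hlim hV
    simpa using this
  have hlim : Tendsto (fun ε : ℝ => ‖F z₀ / (1 + ε * z₀)^(k+1)‖) (𝓝[>] 0) (𝓝 ‖F z₀‖) := by
    have : ContinuousAt (fun ε : ℝ => ‖F z₀ / (1 + ε * z₀)^(k+1)‖) 0 := by
      apply ContinuousAt.norm
      apply ContinuousAt.div (by fun_prop) (by fun_prop)
      simp
    have h2 := this.tendsto.mono_left (nhdsWithin_le_nhds (s := Ioi 0))
    simpa using h2
  refine le_of_tendsto hlim ?_
  filter_upwards [self_mem_nhdsWithin] with ε hε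
  exact main ε hε

end

section

lemma exp_small {x : ℝ} (h0 : 0 ≤ x) (h : x ≤ 1/32) : Real.exp x - 1 ≤ 0.04 := by
  have := Real.exp_bound' h0 (by linarith) (n := 2) (by norm_num)
  simp [Finset.sum_range_succ] at this
  norm_num at this
  nlinarith

lemma rG_sq' {z : ℂ} (hz : 7/4 ≤ z.re) : ∃ e : ℂ, rG z ^ 2 = (z - 1/4) * (1 + e) ∧ ‖e‖ ≤ 0.04 := by
  obtain ⟨e, h1, h2⟩ := rG_sq (z := z) (by linarith)
  refine ⟨e, h1, h2.trans (exp_small (by positivity) ?_)⟩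
  rw [div_le_div_iff₀ (by nlinarith) (by norm_num)]
  nlinarith

lemma rG_sq_upper {z : ℂ} (hz : 7/4 ≤ z.re) : ‖rG z‖^2 ≤ ‖z - 1/4‖ * 1.04 := by
  obtain ⟨e, h1, h2⟩ := rG_sq' hz
  rw [← norm_pow, h1, norm_mul]
  gcongr
  refine (norm_add_le _ _).trans ?_
  rw [norm_one]; linarith

lemma rG_sq_lower {z : ℂ} (hz : 7/4 ≤ z.re) : ‖z - 1/4‖ * 0.96 ≤ ‖rG z‖^2 := by
  obtain ⟨e, h1, h2⟩ := rG_sq' hz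
  rw [← norm_pow, h1, norm_mul]
  gcongr
  have := norm_sub_le (1 + e) e
  simp at this
  linarith

lemma rG_le {z : ℂ} (hz : 1/2 ≤ z.re) : ‖rG z‖ ≤ 2 * (2 + ‖z‖) := by
  have hst : ∀ w : ℂ, 0 < w.re → ‖rG w‖ ≤ ‖rG (w+1)‖ := by
    intro w hw
    rw [rG_shift hw, norm_mul]
    refine mul_le_of_le_one_right (norm_nonneg _) ?_
    have h1 : w + 1/2 ≠ 0 := by
      intro h; have := congrArg re h; simp at this; linarith
    rw [norm_div, div_le_one (norm_pos_iff.mpr h1), Complex.norm_def, Complex.norm_def]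
    apply Real.sqrt_le_sqrt
    simp [normSq_apply]
    nlinarith
  refine (hst z (by linarith)).trans ((hst (z+1) (by simp; linarith)).trans ?_)
  have h1 := rG_sq_upper (z := z + 1 + 1) (by simp; linarith)
  have h2 : ‖z + 1 + 1 - 1/4‖ ≤ ‖z‖ + 2 := by
    rw [show z + 1 + 1 - 1/4 = z + 7/4 by ring]
    refine (norm_add_le _ _).trans ?_
    norm_num
  have := norm_nonneg z
  have := norm_nonneg (rG (z+1+1))
  by_contra hcon
  push Not at hcon
  nlinarith

noncomputable def Kq (s : ℂ) : ℂ := chi (2*s-1) / chi (2*s)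

lemma Kq_eq {s : ℂ} (hs : 1/2 ≤ s.re) :
    Kq s = (Real.pi:ℂ)^(1/2:ℂ) * rG s * etz (2*s-1) / (s * etz (2*s)) := by
  have h0 : s ≠ 0 := by rintro rfl; simp at hs; linarith
  have he := etz_ne_zero (w := 2*s) (by simp; linarith)
  have hG : Gamma s ≠ 0 := Gamma_ne_zero_of_re_pos (by linarith)
  rw [Kq, chi_eq_etz (w := 2*s-1) (by simp; linarith), chi_eq_etz (w := 2*s) (by simp; linarith), rG,
    show -(2*s-1)/2 = -(2*s)/2 + 1/2 by ring, cpow_add _ _ pi_ne, show (2*s-1)/2 + 1 = s + 1/2 by ring,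
    show 2*s/2+1 = s + 1 by ring, Gamma_add_one _ h0]
  have hp : (Real.pi:ℂ)^(-(2*s)/2) ≠ 0 := by simp [cpow_eq_zero_iff, pi_ne]
  generalize (Real.pi:ℂ)^(-(2*s)/2) = p at *
  field_simp

lemma Kq_diff {s : ℂ} (hs : 1/2 ≤ s.re) : DifferentiableAt ℂ Kq s := by
  unfold Kq
  have h1 := chi_differentiable
  have h2 : chi (2*s) ≠ 0 := chi_ne_zero (by simp; linarith)
  fun_prop (disch := assumption)

lemma conj_line {s : ℂ} (hs : s.re = 1/2) : (starRingEnd ℂ) s = 1 - s := by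
  apply Complex.ext <;> simp [hs]; norm_num

lemma chi_line {s : ℂ} (hs : s.re = 1/2) : chi (2*s-1) = (starRingEnd ℂ) (chi (2*s)) := by
  rw [← chi_conj, ← chi_one_sub, map_mul, conj_line hs]
  congr 1
  rw [show (starRingEnd ℂ) 2 = 2 from map_ofNat _ 2]; ring

lemma Kq_line {s : ℂ} (hs : s.re = 1/2) : ‖Kq s‖ = 1 := by
  have h2 : chi (2*s) ≠ 0 := chi_ne_zero (by simp [hs])
  rw [Kq, chi_line hs, norm_div, RCLike.norm_conj, div_self (norm_ne_zero_iff.mpr h2)]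

lemma pi_half_norm : ‖(Real.pi:ℂ)^(1/2:ℂ)‖ ≤ 2 := by
  rw [norm_cpow_eq_rpow_re_of_pos Real.pi_pos]
  have : Real.pi ^ (1/2:ℝ) = √Real.pi := (Real.sqrt_eq_rpow _).symm
  have h2 : ((1:ℂ)/2).re = 1/2 := by norm_num
  rw [h2, this, Real.sqrt_le_left (by norm_num)]
  linarith [Real.pi_lt_d2]

lemma Kq_le {s : ℂ} (hs : 1/2 ≤ s.re) : ‖Kq s‖ ≤ 1 := by
  rcases hs.eq_or_lt with h | h
  · exact (Kq_line h.symm).le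
  have key := PLpole (F := fun z => Kq (z + 1/2)) (k := 9) (C := 2^20) (z₀ := s - 1/2) ?_ ?_ (by norm_num) ?_ (by simp; linarith)
  · simpa using key
  · intro z hz
    have : DifferentiableAt ℂ Kq (z + 1/2) := Kq_diff (by simp; linarith)
    exact DifferentiableAt.comp (g := Kq) z this (by fun_prop)
  · intro z hz
    exact (Kq_line (by simp [hz])).le
  · intro z hz
    have hre : (z + 1/2).re = z.re + 1/2 := by simp
    rw [Kq_eq (by rw [hre]; linarith)]
    set r := ‖z‖
    have hr : 0 ≤ r := norm_nonneg z
    have a1 : ‖z + 1/2‖ ≤ 1 + r := (norm_add_le _ _).trans (by norm_num; linarith)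
    have a2 : 1/2 ≤ ‖z + 1/2‖ := le_trans (by rw [hre]; linarith) (re_le_norm _)
    have b1 := rG_le (z := z + 1/2) (by rw [hre]; linarith)
    have b1' : ‖rG (z + 1/2)‖ ≤ 8 * (1 + r) := by linarith
    have b2 := etz_growth (w := 2 * (z + 1/2) - 1) (by simp; linarith)
    have b2' : ‖etz (2 * (z + 1/2) - 1)‖ ≤ 2 * (2 * (1 + r))^4 := by
      refine b2.trans ?_
      gcongr
      rw [show 2 * (z + 1/2) - 1 = 2 * z by ring, norm_mul]
      norm_num; linarith
    have b3 := inv_etz_growth (w := 2 * (z + 1/2)) (by simp; linarith)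
    have b3' : ‖(etz (2 * (z + 1/2)))⁻¹‖ ≤ 2 * (2 * (1 + r))^4 / (2*z.re)^2 := by
      refine b3.trans ?_
      have : (2 * (z + 1/2)).re - 1 = 2 * z.re := by simp; ring
      rw [this]
      gcongr
      rw [show 2 * (z + 1/2) = 2 * z + 1 by ring]
      refine le_trans (add_le_add le_rfl (norm_add_le _ _)) ?_
      rw [norm_mul]; norm_num; linarith
    rw [div_eq_mul_inv, mul_inv, norm_mul, norm_mul, norm_mul, norm_mul]
    have b4 : ‖(z + 1/2)⁻¹‖ ≤ 2 := by
      rw [norm_inv]; exact inv_le_of_inv_le₀ (by norm_num) (by linarith)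
    calc _ ≤ 2 * (8 * (1+r)) * (2 * (2 * (1 + r))^4) * (2 * (2 * (2 * (1 + r))^4 / (2*z.re)^2)) := by
          gcongr
          exact pi_half_norm
      _ = 2^13 * (1+r)^9 * (1/z.re)^2 := by field_simp; norm_num
      _ ≤ _ := by
          have : (1/z.re)^2 ≤ (1 + 1/z.re)^2 := by
            have : 0 < 1 / z.re := by positivity
            nlinarith
          gcongr <;> norm_num

end

section

noncomputable def hh (s : ℂ) : ℂ := (A * s + 3) * (s - 1) ^ 2 * chi (s + 2)
    - 2 * (s - 1) * (s - 3) * chi (s + 1) - (s + 2) * (s - 3) * chi s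

noncomputable def ac : ℂ := -3 * Real.pi / (Real.pi + 3)

noncomputable def h1 : ℂ → ℂ := dslope hh (-1)

noncomputable def NN (s : ℂ) : ℂ := h1 s * chi (2*s) + ac * chi s * (chi (2*s) + chi (2*s-1))

noncomputable def TT : ℂ → ℂ := dslope (dslope NN 0) 1

noncomputable def gam (s : ℂ) : ℂ := (s+2)*(s+1)*(Real.pi:ℂ)^(-(s+2)/2) * Gamma ((s+2)/2)

noncomputable def ff (s : ℂ) : ℂ := TT s / (chi (2*s) * gam s)

noncomputable def spi : ℂ := (Real.pi:ℂ)^(1/2:ℂ)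

lemma dslope_diff {f : ℂ → ℂ} (hf : Differentiable ℂ f) (c : ℂ) : Differentiable ℂ (dslope f c) := by
  rw [← differentiableOn_univ, Complex.differentiableOn_dslope (by simp)]
  exact hf.differentiableOn

lemma chi_two : chi 2 = Real.pi / 3 := by
  rw [chi_eq (by norm_num) (by norm_num)]
  have h := riemannZeta_def_of_ne_zero (s := 2) (by norm_num)
  rw [riemannZeta_two, Gammaℝ_def] at h
  have e1 : (Real.pi:ℂ) ^ (-(2:ℂ)/2) = (Real.pi:ℂ)⁻¹ := by
    rw [show -(2:ℂ)/2 = -1 by norm_num, cpow_neg_one]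
  rw [e1, show (2:ℂ)/2 = 1 by norm_num, Gamma_one, mul_one, div_inv_eq_mul] at h
  have := pi_ne
  generalize completedRiemannZeta 2 = X at *
  have hX : X = Real.pi/6 := by
    field_simp at h ⊢
    linear_combination -h
  rw [hX]; ring

lemma chi_neg_one : chi (-1) = Real.pi / 3 := by
  rw [← chi_one_sub, ← chi_two]; norm_num

lemma pi3_ne : (Real.pi:ℂ) + 3 ≠ 0 := by
  have : (Real.pi + 3 : ℝ) ≠ 0 := by positivity
  exact_mod_cast this

lemma hh_diff : Differentiable ℂ hh := by
  unfold hh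
  have := chi_differentiable
  fun_prop

lemma hh_neg_one : hh (-1) = 0 := by
  rw [hh, chi_neg_one, show (-1:ℂ) + 2 = 1 by norm_num, show (-1:ℂ)+1 = 0 by norm_num, chi_zero, chi_one, A]
  ring

lemma h1_mul (s : ℂ) : (s + 1) * h1 s = hh s := by
  have := sub_smul_dslope hh (-1) s
  rw [hh_neg_one] at this
  simpa [h1] using this

lemma h1_diff : Differentiable ℂ h1 := dslope_diff hh_diff _

lemma NN_diff : Differentiable ℂ NN := by
  unfold NN
  have := chi_differentiable
  have := h1_diff
  fun_prop

lemma NN_zero : NN 0 = 0 := by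
  have h := h1_mul 0
  rw [hh] at h
  simp only [zero_add, mul_zero, chi_two, chi_one, chi_zero, one_mul] at h
  rw [NN, h]
  simp only [mul_zero, zero_sub, chi_zero, chi_neg_one, ac]
  have := pi3_ne
  field_simp; ring

lemma NN_one : NN 1 = 0 := by
  have h := h1_mul 1
  rw [hh] at h
  have h' : h1 1 = 3 := by
    rw [sub_self] at h
    simp only [chi_one] at h
    linear_combination h/2
  rw [NN, h']
  norm_num [chi_two, chi_one, ac]
  have := pi3_ne
  field_simp; ring

lemma TT_mul (s : ℂ) : s * (s - 1) * TT s = NN s := by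
  have e1 := sub_smul_dslope NN 0 s
  have e2 := sub_smul_dslope (dslope NN 0) 1 s
  have e3 := sub_smul_dslope NN 0 1
  rw [NN_zero, NN_one] at e3
  have e4 : dslope NN 0 1 = 0 := by simpa using e3
  rw [e4] at e2
  rw [NN_zero] at e1
  simp only [smul_eq_mul, sub_zero] at e1 e2
  rw [TT, mul_assoc, e2, e1]

lemma TT_diff : Differentiable ℂ TT := dslope_diff (dslope_diff NN_diff _) _

lemma Z2_fac (s : ℂ) : Z2 s = (s-2)*(s+1)*s*(s-1)*(TT s - TT (1-s)) := by
  have e1 := TT_mul s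
  have e2 := TT_mul (1-s)
  have e3 : (1-s)*(1-s-1) = s*(s-1) := by ring
  rw [e3] at e2
  have c1 : chi (2*(1-s)) = chi (2*s-1) := by rw [← chi_one_sub]; congr 1; ring
  have c2 : chi (2*(1-s)-1) = chi (2*s) := by rw [← chi_one_sub]; congr 1; ring
  have c3 := chi_one_sub s
  have k1 := h1_mul s
  have k2 := h1_mul (1-s)
  have e4 : f2 s = (s-2) * hh s := rfl
  have e5 : f2 (1-s) = (1-s-2) * hh (1-s) := rfl
  rw [NN] at e1 e2
  rw [c1, c2, c3] at e2
  rw [Z2, e4, e5, ← k1, ← k2]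
  linear_combination (-(s-2)*(s+1)) * e1 + ((s-2)*(s+1)) * e2

lemma gam_ne {s : ℂ} (hs : -1 < s.re) : gam s ≠ 0 := by
  unfold gam
  have h1 : s + 2 ≠ 0 := by intro h; have := congrArg re h; simp at this; linarith
  have h2 : s + 1 ≠ 0 := by intro h; have := congrArg re h; simp at this; linarith
  have h3 : (Real.pi:ℂ)^(-(s+2)/2) ≠ 0 := by simp [cpow_eq_zero_iff, pi_ne]
  have h4 : Gamma ((s+2)/2) ≠ 0 := Gamma_ne_zero_of_re_pos (by simp; linarith)
  simp [h1, h2, h3, h4]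

lemma gam_diff {s : ℂ} (hs : -1 < s.re) : DifferentiableAt ℂ gam s := by
  unfold gam
  have h4 : DifferentiableAt ℂ Gamma ((s+2)/2) := differentiableAt_Gamma _ (by
    intro m h; have := congrArg re h; simp at this
    have : (0:ℝ) ≤ m := Nat.cast_nonneg m
    linarith)
  have h5 : DifferentiableAt ℂ (fun s : ℂ => Gamma ((s+2)/2)) s :=
    DifferentiableAt.comp (g := Gamma) s h4 (by fun_prop)
  have h6 : DifferentiableAt ℂ (fun s : ℂ => (Real.pi:ℂ)^(-(s+2)/2)) s := by
    apply DifferentiableAt.const_cpow (by fun_prop) (Or.inl pi_ne)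
  have h7 : DifferentiableAt ℂ (fun s : ℂ => (s+2)*(s+1)) s := by fun_prop
  exact (h7.mul h6).mul h5

lemma ff_diff {s : ℂ} (hs : 1/2 ≤ s.re) : DifferentiableAt ℂ ff s := by
  unfold ff
  have h1 := TT_diff
  have h2 := chi_differentiable
  have h3 := gam_diff (s := s) (by linarith)
  have h4 : chi (2*s) * gam s ≠ 0 := mul_ne_zero (chi_ne_zero (by simp; linarith)) (gam_ne (by linarith))
  fun_prop (disch := assumption)

section
variable {s : ℂ}

lemma s_ne (hs : 1/2 ≤ s.re) (c : ℝ) (hc : -1/2 < c) : s + c ≠ 0 := by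
  intro h; have := congrArg re h; simp at this; linarith

noncomputable def GG (s : ℂ) : ℂ := (rG ((s+1)/2))⁻¹

lemma GG_mul (hs : 1/2 ≤ s.re) : Gamma ((s+1)/2) = GG s * Gamma ((s+2)/2) := by
  have h1 : Gamma ((s+1)/2) ≠ 0 := Gamma_ne_zero_of_re_pos (by simp; linarith)
  have h2 : Gamma ((s+2)/2) ≠ 0 := Gamma_ne_zero_of_re_pos (by simp; linarith)
  rw [GG, rG, show (s+1)/2 + 1/2 = (s+2)/2 by ring]
  field_simp

lemma spi_sq : spi^2 = Real.pi := by
  rw [spi, ← cpow_nat_mul]; simp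

lemma cA (hs : 1/2 ≤ s.re) : chi (s+2) = gam s * riemannZeta (s+2) := by
  have e2 := s_ne hs 2 (by norm_num)
  have e1 := s_ne hs 1 (by norm_num)
  push_cast at e1 e2
  rw [chi_eq_etz (by simp; linarith), etz_eq e2 (by intro h; apply e1; linear_combination h), gam,
    Gamma_add_one _ (by simpa using e2)]
  ring

lemma cB (hs : 1/2 ≤ s.re) : chi (s+1) = gam s * (spi * GG s * s / (s+2) * riemannZeta (s+1)) := by
  have e2 := s_ne hs 2 (by norm_num)
  have e1 := s_ne hs 1 (by norm_num)
  have e0 := s_ne hs 0 (by norm_num)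
  push_cast at e0 e1 e2
  rw [add_zero] at e0
  rw [chi_eq_etz (by simp; linarith), etz_eq e1 (by simpa using e0), gam,
    Gamma_add_one _ (by simpa using e1), show -(s+1)/2 = -(s+2)/2 + 1/2 by ring, cpow_add _ _ pi_ne, GG_mul hs, ← spi]
  field_simp
  ring

lemma cC (hs : 1/2 ≤ s.re) : chi s = gam s * (2 * Real.pi / ((s+2)*(s+1)) * etz s) := by
  have e2 := s_ne hs 2 (by norm_num)
  have e1 := s_ne hs 1 (by norm_num)
  push_cast at e1 e2
  rw [chi_eq_etz (by linarith), gam, show -s/2 = -(s+2)/2 + 1 by ring, cpow_add _ _ pi_ne, cpow_one,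
    show s/2 + 1 = (s+2)/2 by ring]
  field_simp

lemma cD (hs : 1/2 ≤ s.re) : chi (s-1) = gam s * (2 * Real.pi * spi * GG s / ((s+2)*(s+1)) * etz (s-1)) := by
  have e2 := s_ne hs 2 (by norm_num)
  have e1 := s_ne hs 1 (by norm_num)
  push_cast at e1 e2
  rw [chi_eq_etz (by simp; linarith), gam, show -(s-1)/2 = -(s+2)/2 + 1/2 + 1 by ring, cpow_add _ _ pi_ne, cpow_add _ _ pi_ne, cpow_one,
    show (s-1)/2 + 1 = (s+1)/2 by ring, GG_mul hs, ← spi]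
  field_simp

lemma cE (hs : 1/2 ≤ s.re) : chi (s-2) = gam s * (4 * Real.pi^2 / (s*(s+2)*(s+1)) * etz (s-2)) := by
  have e2 := s_ne hs 2 (by norm_num)
  have e1 := s_ne hs 1 (by norm_num)
  have e0 := s_ne hs 0 (by norm_num)
  push_cast at e0 e1 e2
  rw [add_zero] at e0
  rw [chi_eq_etz (by simp; linarith), gam, show -(s-2)/2 = -(s+2)/2 + 1 + 1 by ring, cpow_add _ _ pi_ne, cpow_add _ _ pi_ne, cpow_one,
    show (s-2)/2 + 1 = s/2 by ring, show (s+2)/2 = s/2+1 by ring, Gamma_add_one _ (by simpa using e0)]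
  field_simp
  ring

lemma Kq_mul (hs : 1/2 ≤ s.re) : chi (2*s-1) = Kq s * chi (2*s) := by
  rw [Kq, div_mul_cancel₀]; exact chi_ne_zero (by simp; linarith)

lemma ff_eq (hs : 1/2 ≤ s.re) (hs1 : s ≠ 1) :
    ff s = ((A*s+3)*(s-1)/s * riemannZeta (s+2) - 2*(s-3)/(s+2)*spi*GG s * riemannZeta (s+1)
      - 2*Real.pi/s*((s-3)/(s+1) - ac*(1 + Kq s)/(s+2)) * riemannZeta s) / (s+1) := by
  have e2 := s_ne hs 2 (by norm_num)
  have e1 := s_ne hs 1 (by norm_num)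
  have e0 := s_ne hs 0 (by norm_num)
  push_cast at e0 e1 e2
  rw [add_zero] at e0
  have e3 : s - 1 ≠ 0 := sub_ne_zero.mpr hs1
  have hg := gam_ne (s := s) (by linarith)
  have hc : chi (2*s) ≠ 0 := chi_ne_zero (by simp; linarith)
  have hT := TT_mul s
  have hh1 := h1_mul s
  have h1e : h1 s = hh s / (s+1) := by rw [← hh1]; field_simp
  rw [NN, Kq_mul hs, h1e, hh, cA hs, cB hs, cC hs, etz_eq e0 hs1] at hT
  have hT2 : TT s = ((((A * s + 3) * (s - 1) ^ 2 * (gam s * riemannZeta (s + 2)) -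
              2 * (s - 1) * (s - 3) * (gam s * (spi * GG s * s / (s + 2) * riemannZeta (s + 1))) -
            (s + 2) * (s - 3) * (gam s * (2 * Real.pi / ((s + 2) * (s + 1)) * ((s - 1) * riemannZeta s)))) /
          (s + 1) * chi (2 * s) +
        ac * (gam s * (2 * Real.pi / ((s + 2) * (s + 1)) * ((s - 1) * riemannZeta s))) *
          (chi (2 * s) + Kq s * chi (2 * s)))) / (s * (s-1)) := by
    rw [← hT]; field_simp
  rw [ff, hT2]
  generalize gam s = g at *
  generalize chi (2*s) = c at *
  field_simp
  ring
end

end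

section

lemma GG_le {s : ℂ} (hs : 1/2 ≤ s.re) : ‖GG s‖ ≤ 2 := by
  rw [GG, norm_inv]
  have hre : ((s+1)/2).re = (s.re+1)/2 := by simp
  set z := (s+1)/2
  have hz : 3/4 ≤ z.re := by linarith
  have hzn : 3/4 ≤ ‖z‖ := hz.trans (re_le_norm z)
  rw [rG_shift (by linarith), norm_mul, norm_div]
  have h1 := rG_sq_lower (z := z+1) (by simp; linarith)
  have h2 : 3/2 ≤ ‖z + 1 - 1/4‖ := by
    refine le_trans ?_ (re_le_norm _)
    simp; linarith
  have h3 : 1.2 ≤ ‖rG (z+1)‖ := by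
    by_contra hcon; push Not at hcon
    have := norm_nonneg (rG (z+1))
    nlinarith
  have h4 : ‖z + 1/2‖ ≤ ‖z‖ + 1/2 := (norm_add_le _ _).trans (by norm_num)
  have h6 : 0 < ‖z + 1/2‖ := by
    have := re_le_norm (z + 1/2)
    simp at this ⊢
    intro h
    rw [h] at this
    simp at this
    linarith
  have h5 : 0.6 ≤ ‖z‖ / ‖z + 1/2‖ := by
    rw [le_div_iff₀ h6]; linarith
  apply inv_le_of_inv_le₀ (by norm_num)
  nlinarith

lemma A_norm : ‖A‖ ≤ 1 := by
  have : A = ((Real.pi/3 - 1 : ℝ) : ℂ) := by simp [A]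
  rw [this, norm_real, Real.norm_eq_abs, abs_le]
  constructor <;> linarith [Real.pi_gt_three, Real.pi_lt_d2]

lemma ac_norm : ‖ac‖ ≤ 3 := by
  have : ac = ((-3 * Real.pi / (Real.pi + 3) : ℝ) : ℂ) := by simp [ac]
  have hp := Real.pi_gt_three
  rw [this, norm_real, Real.norm_eq_abs, abs_div, div_le_iff₀ (by positivity), abs_of_neg (by linarith), abs_of_pos (by linarith)]
  linarith

lemma pi_norm : ‖(Real.pi:ℂ)‖ ≤ 4 := by
  rw [norm_real, Real.norm_of_nonneg Real.pi_pos.le]; linarith [Real.pi_lt_d2]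

lemma norm_add_ge {s : ℂ} (hs : 0 ≤ s.re) {c : ℝ} (hc : 0 ≤ c) : ‖s‖ ≤ ‖s + c‖ := by
  rw [Complex.norm_def, Complex.norm_def]
  apply Real.sqrt_le_sqrt
  simp [normSq_apply]
  nlinarith

lemma zeta_b {w : ℂ} (hw : 3/2 ≤ w.re) : ‖riemannZeta w‖ ≤ 2.7 :=
  (zeta_norm_le (by norm_num) hw).trans Zr_three_half

lemma ff_bound {s : ℂ} (hs : 1/2 ≤ s.re) (hr : 10 ≤ ‖s‖) : ‖ff s‖ ≤ 60 + 24 * ‖riemannZeta s‖ / ‖s‖^2 := by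
  have hs1 : s ≠ 1 := by rintro rfl; norm_num at hr
  rw [ff_eq hs hs1]
  have z2 := zeta_b (w := s+2) (by simp; linarith)
  have z1 := zeta_b (w := s+1) (by simp; linarith)
  have g := GG_le hs
  have k := Kq_le hs
  have n2 : ‖s‖ ≤ ‖s + 2‖ := by simpa using norm_add_ge (s := s) (by linarith) (c := 2) (by norm_num)
  have n1 : ‖s‖ ≤ ‖s + 1‖ := by simpa using norm_add_ge (s := s) (by linarith) (c := 1) (by norm_num)
  set r := ‖s‖
  have hr0 : 0 < r := by linarith
  have m1 : ‖s - 1‖ ≤ 2*r := (norm_sub_le _ _).trans (by norm_num; linarith)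
  have m3 : ‖s - 3‖ ≤ 2*r := (norm_sub_le _ _).trans (by norm_num; linarith)
  have mA : ‖A * s + 3‖ ≤ 2*r := by
    refine (norm_add_le _ _).trans ?_
    rw [norm_mul]
    have := mul_le_mul_of_nonneg_right A_norm (norm_nonneg s)
    norm_num; linarith
  have t1 : ‖(A*s+3)*(s-1)/s * riemannZeta (s+2)‖ ≤ (2*r)*(2*r)/r*2.7 := by
    rw [norm_mul, norm_div, norm_mul]; gcongr
  have t2 : ‖2*(s-3)/(s+2)*spi*GG s * riemannZeta (s+1)‖ ≤ 2*(2*r)/r*2*2*2.7 := by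
    rw [norm_mul, norm_mul, norm_mul, norm_div, norm_mul]
    have : ‖(2:ℂ)‖ = 2 := by norm_num
    rw [this]
    gcongr
    exact pi_half_norm
  have t3 : ‖2*Real.pi/s*((s-3)/(s+1) - ac*(1 + Kq s)/(s+2)) * riemannZeta s‖ ≤ 2*4/r*(2*r/r + 3*(1+1)/r) * ‖riemannZeta s‖ := by
    rw [norm_mul, norm_mul, norm_div, norm_mul]
    have e : ‖(2:ℂ)‖ = 2 := by norm_num
    rw [e]
    gcongr
    · exact pi_norm
    · refine (norm_sub_le _ _).trans ?_
      rw [norm_div, norm_div, norm_mul]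
      gcongr
      · exact ac_norm
      · refine (norm_add_le _ _).trans ?_
        rw [norm_one]; linarith
  rw [norm_div, div_le_iff₀ (by linarith)]
  refine (norm_sub_le _ _).trans ?_
  refine (add_le_add (norm_sub_le _ _) le_rfl).trans ?_
  refine (add_le_add (add_le_add t1 t2) t3).trans ?_
  have : 0 ≤ 24 * ‖riemannZeta s‖ / r^2 := by positivity
  refine le_trans ?_ (mul_le_mul_of_nonneg_left n1 (by positivity))
  have e1 : (2*r)*(2*r)/r*2.7 = 10.8 * r := by field_simp; norm_num
  have e2 : 2*(2*r)/r*2*2*2.7 = 43.2 := by field_simp; norm_num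
  have e3 : (60 + 24 * ‖riemannZeta s‖ / r^2) * r = 60 * r + 24/r*‖riemannZeta s‖ := by field_simp
  rw [e1, e2, e3]
  have e4 : 2*4/r*(2*r/r + 3*(1+1)/r) ≤ 24/r := by
    have : 2*r/r + 3*(1+1)/r ≤ 3 := by
      rw [← add_div, div_le_iff₀ hr0]; linarith
    calc _ ≤ 2*4/r*3 := by gcongr
      _ = _ := by ring
  have := mul_le_mul_of_nonneg_right e4 (norm_nonneg (riemannZeta s))
  linarith

noncomputable def RR (s : ℂ) : ℂ := TT (1-s) / (chi (2*s) * gam s)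

lemma RR_eq {s : ℂ} (hs : 1/2 ≤ s.re) (hs1 : s ≠ 1) (hs2 : s ≠ 2) :
    RR s = (((A*(1-s)+3)*s^2*(4 * Real.pi^2 / (s*(s+2)*(s+1)) * etz (s-2))
      - 2*s*(s+2)*(2 * Real.pi * spi * GG s / ((s+2)*(s+1)) * etz (s-1))
      - (s-3)*(s+2)*(2 * Real.pi / ((s+2)*(s+1)) * etz s)) / (2-s) * Kq s +
      ac * (1 + Kq s) * (2 * Real.pi / ((s+2)*(s+1)) * etz s)) / (s * (s-1)) := by
  have e2 := s_ne hs 2 (by norm_num)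
  have e1 := s_ne hs 1 (by norm_num)
  have e0 := s_ne hs 0 (by norm_num)
  push_cast at e0 e1 e2
  rw [add_zero] at e0
  have e3 : s - 1 ≠ 0 := sub_ne_zero.mpr hs1
  have e4 : 2 - s ≠ 0 := sub_ne_zero.mpr hs2.symm
  have hg := gam_ne (s := s) (by linarith)
  have hc : chi (2*s) ≠ 0 := chi_ne_zero (by simp; linarith)
  have hT := TT_mul (1-s)
  have hh1 := h1_mul (1-s)
  have h1e : h1 (1-s) = hh (1-s) / (2-s) := by
    rw [← hh1, show 1 - s + 1 = 2 - s by ring]; field_simp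
  have c1 : chi (2*(1-s)) = chi (2*s-1) := by rw [← chi_one_sub]; congr 1; ring
  have c2 : chi (2*(1-s)-1) = chi (2*s) := by rw [← chi_one_sub]; congr 1; ring
  have c3 : chi (1-s+2) = chi (s-2) := by rw [← chi_one_sub]; congr 1; ring
  have c4 : chi (1-s+1) = chi (s-1) := by rw [← chi_one_sub]; congr 1; ring
  rw [NN, c1, c2, h1e, hh, c3, c4, chi_one_sub, Kq_mul hs, cC hs, cD hs, cE hs, show (1-s)*(1-s-1) = s*(s-1) by ring] at hT
  have hT2 := eq_div_of_mul_eq (mul_ne_zero e0 e3) ((mul_comm _ _).trans hT)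
  rw [RR, hT2]
  generalize gam s = g at *
  generalize chi (2*s) = c at *
  generalize etz s = x0
  generalize etz (s-1) = x1
  generalize etz (s-2) = x2
  field_simp
  ring

lemma RR_bound {s : ℂ} (hs : 1/2 ≤ s.re) (hr : 10 ≤ ‖s‖) {M : ℝ} (m0 : ‖etz s‖ ≤ M)
    (m1 : ‖etz (s-1)‖ ≤ M) (m2 : ‖etz (s-2)‖ ≤ M) : ‖RR s‖ ≤ 2000 * M / ‖s‖^3 := by
  have hs1 : s ≠ 1 := by rintro rfl; norm_num at hr
  have hs2 : s ≠ 2 := by rintro rfl; norm_num at hr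
  have hM : 0 ≤ M := (norm_nonneg _).trans m0
  rw [RR_eq hs hs1 hs2]
  have g := GG_le hs
  have k := Kq_le hs
  have n2 : ‖s‖ ≤ ‖s + 2‖ := by simpa using norm_add_ge (s := s) (by linarith) (c := 2) (by norm_num)
  have n1 : ‖s‖ ≤ ‖s + 1‖ := by simpa using norm_add_ge (s := s) (by linarith) (c := 1) (by norm_num)
  have e0 : s ≠ 0 := by rintro rfl; norm_num at hr
  have e2 := s_ne hs 2 (by norm_num)
  push_cast at e2
  set r := ‖s‖
  have hr0 : 0 < r := by linarith
  have l1 : r/2 ≤ ‖s - 1‖ := by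
    have := norm_sub_norm_le s 1
    rw [norm_one] at this
    change r - 1 ≤ _ at this
    linarith
  have l2 : r/2 ≤ ‖2 - s‖ := by
    have := norm_sub_norm_le s 2
    rw [norm_sub_rev, show ‖(2:ℂ)‖ = 2 by norm_num] at this
    change r - 2 ≤ _ at this
    linarith
  have p3 : ‖s - 3‖ ≤ 2*r := (norm_sub_le _ _).trans (by norm_num; linarith)
  have p2 : ‖s + 2‖ ≤ 2*r := (norm_add_le _ _).trans (by norm_num; linarith)
  have mA : ‖A * (1-s) + 3‖ ≤ 2*r := by
    refine (norm_add_le _ _).trans ?_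
    rw [norm_mul]
    have h1 : ‖1 - s‖ ≤ 1 + r := (norm_sub_le _ _).trans (by rw [norm_one])
    have := mul_le_mul A_norm h1 (norm_nonneg _) (by norm_num)
    norm_num; linarith
  have pn := pi_norm
  have w2 : ‖(2:ℂ)‖ = 2 := by norm_num
  have w4 : ‖(4:ℂ)‖ = 4 := by norm_num
  have sp : ‖spi‖ ≤ 2 := pi_half_norm
  have t1 : ‖(A*(1-s)+3)*s^2*(4 * Real.pi^2 / (s*(s+2)*(s+1)) * etz (s-2))‖ ≤ (2*r)*r^2*(4*4^2/(r*r*r)*M) := by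
    simp only [norm_mul, norm_div, norm_pow, w4]; gcongr
  have t2 : ‖2*s*(s+2)*(2 * Real.pi * spi * GG s / ((s+2)*(s+1)) * etz (s-1))‖ ≤ 2*r*(2*r)*(2*4*2*2/(r*r)*M) := by
    simp only [norm_mul, norm_div, norm_pow, w2]; gcongr
  have t3' : ‖2 * Real.pi / ((s+2)*(s+1)) * etz s‖ ≤ 2*4/(r*r)*M := by
    simp only [norm_mul, norm_div, norm_pow, w2]; gcongr
  have t3 : ‖(s-3)*(s+2)*(2 * Real.pi / ((s+2)*(s+1)) * etz s)‖ ≤ (2*r)*(2*r)*(2*4/(r*r)*M) := by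
    rw [norm_mul, norm_mul]; gcongr
  have t5 : ‖ac * (1 + Kq s) * (2 * Real.pi / ((s+2)*(s+1)) * etz s)‖ ≤ 3 * (1+1) * (2*4/(r*r)*M) := by
    rw [norm_mul, norm_mul]
    gcongr
    · exact ac_norm
    · refine (norm_add_le _ _).trans ?_
      rw [norm_one]; linarith
  have t6 : ‖(A*(1-s)+3)*s^2*(4 * Real.pi^2 / (s*(s+2)*(s+1)) * etz (s-2))
      - 2*s*(s+2)*(2 * Real.pi * spi * GG s / ((s+2)*(s+1)) * etz (s-1))
      - (s-3)*(s+2)*(2 * Real.pi / ((s+2)*(s+1)) * etz s)‖ ≤ 288 * M := by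
    refine (norm_sub_le _ _).trans ?_
    refine (add_le_add (norm_sub_le _ _) le_rfl).trans ?_
    refine (add_le_add (add_le_add t1 t2) t3).trans (le_of_eq ?_)
    field_simp; ring
  have l1' : 0 < ‖s - 1‖ := by linarith
  rw [norm_div, norm_mul, div_le_iff₀ (by positivity)]
  refine (norm_add_le _ _).trans ?_
  refine (add_le_add (b := 288 * M / (r/2) * 1) ?_ t5).trans ?_
  · rw [norm_mul, norm_div]; gcongr
  have e5 : 288 * M / (r/2) * 1 + 3 * (1+1) * (2*4/(r*r)*M) ≤ 600 * M / r - 0 := by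
    have : 48/(r*r) * M ≤ 5/r*M := by
      gcongr ?_ * M
      rw [div_le_div_iff₀ (by positivity) (by positivity)]; nlinarith
    calc _ = 576 / r * M + 48/(r*r)*M := by field_simp; ring
      _ ≤ 576/r*M + 5/r*M := by linarith
      _ ≤ 600 / r * M := by
        rw [← add_mul]
        gcongr
        rw [← add_div]
        gcongr; norm_num
      _ = _ := by ring
  refine e5.trans ?_
  rw [sub_zero]
  have : 2000 * M / r^3 * (r * (r/2)) ≤ 2000 * M / r^3 * (r * ‖s - 1‖) := by gcongr
  refine le_trans ?_ this
  have : 2000 * M / r^3 * (r * (r/2)) = 1000 * M / r := by field_simp; ring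
  rw [this]
  gcongr; norm_num

end

section

lemma etz_shift_growth {s : ℂ} (hs : 1/2 ≤ s.re) (hr : 10 ≤ ‖s‖) {j : ℝ} (hj : 0 ≤ j) (hj2 : j ≤ 2) :
    ‖etz (s - j)‖ ≤ 32 * ‖s‖^4 := by
  refine (etz_growth (by simp; linarith)).trans ?_
  have : ‖s - j‖ ≤ ‖s‖ + j := (norm_sub_le _ _).trans (by rw [norm_real, Real.norm_of_nonneg hj])
  calc 2 * (1 + ‖s - j‖)^4 ≤ 2 * (2 * ‖s‖)^4 := by gcongr; linarith
    _ = _ := by ring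

lemma etz_shift_real {x : ℝ} (hx : 10 ≤ x) {j : ℝ} (hj : 0 ≤ j) (hj2 : j ≤ 2) :
    ‖etz ((x:ℂ) - j)‖ ≤ 2.7 * x := by
  have e : (x:ℂ) - j = ((x - j : ℝ):ℂ) := by push_cast; rfl
  rw [e, etz_eq (by norm_cast; linarith) (by norm_cast; linarith), norm_mul]
  have h1 := zeta_b (w := ((x - j : ℝ):ℂ)) (by simp; linarith)
  have h2 : ‖((x - j : ℝ):ℂ) - 1‖ ≤ x := by
    rw [← ofReal_one, ← ofReal_sub, norm_real, Real.norm_of_nonneg (by linarith)]; linarith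
  calc _ ≤ x * 2.7 := by gcongr
    _ = _ := by ring

lemma RR_growth {s : ℂ} (hs : 1/2 ≤ s.re) (hr : 10 ≤ ‖s‖) : ‖RR s‖ ≤ 64000 * ‖s‖ := by
  have h0 := etz_shift_growth hs hr (j := 0) (by norm_num) (by norm_num)
  have h1 := etz_shift_growth hs hr (j := 1) (by norm_num) (by norm_num)
  have h2 := etz_shift_growth hs hr (j := 2) (by norm_num) (by norm_num)
  simp only [ofReal_zero, sub_zero, ofReal_one, ofReal_ofNat] at h0 h1 h2
  refine (RR_bound hs hr h0 h1 h2).trans (le_of_eq ?_)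
  have : ‖s‖ ≠ 0 := by linarith
  field_simp; norm_num

lemma RR_real {x : ℝ} (hx : 10 ≤ x) : ‖RR x‖ ≤ 5400 / x := by
  have h0 := etz_shift_real hx (j := 0) (by norm_num) (by norm_num)
  have h1 := etz_shift_real hx (j := 1) (by norm_num) (by norm_num)
  have h2 := etz_shift_real hx (j := 2) (by norm_num) (by norm_num)
  simp only [ofReal_zero, sub_zero, ofReal_one, ofReal_ofNat] at h0 h1 h2
  have hn : ‖(x:ℂ)‖ = x := by rw [norm_real, Real.norm_of_nonneg (by linarith)]
  have := RR_bound (s := x) (by simp; linarith) (by rw [hn]; exact hx) h0 h1 h2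
  rw [hn] at this
  refine this.trans ?_
  have hx0 : 0 < x := by linarith
  have e : 2000 * (2.7 * x) / x^3 = 5400 / x * (1/x) := by field_simp; norm_num
  rw [e]
  refine mul_le_of_le_one_right (by positivity) ?_
  rw [div_le_one hx0]; linarith

lemma ff_growth {s : ℂ} (hs : 1/2 ≤ s.re) (hr : 10 ≤ ‖s‖) : ‖ff s‖ ≤ 2000 * ‖s‖ := by
  refine (ff_bound hs hr).trans ?_
  have h0 := etz_shift_growth hs hr (j := 0) (by norm_num) (by norm_num)
  simp only [ofReal_zero, sub_zero] at h0
  have hs0 : s ≠ 0 := by rintro rfl; norm_num at hr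
  have hs1 : s ≠ 1 := by rintro rfl; norm_num at hr
  rw [etz_eq hs0 hs1, norm_mul] at h0
  have l1 : ‖s‖/2 ≤ ‖s - 1‖ := by
    have := norm_sub_norm_le s 1
    rw [norm_one] at this
    linarith
  have hz := norm_nonneg (riemannZeta s)
  set r := ‖s‖
  have h3 : r/2 * ‖riemannZeta s‖ ≤ 32 * r^4 := le_trans (by gcongr) h0
  have h4 : ‖riemannZeta s‖ ≤ 64 * r^3 := by
    have : r/2 * ‖riemannZeta s‖ ≤ r/2 * (64 * r^3) := h3.trans (le_of_eq (by ring))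
    exact le_of_mul_le_mul_left this (by linarith)
  have h5 : 24 * ‖riemannZeta s‖ / r^2 ≤ 24 * (64 * r^3) / r^2 := by gcongr
  have h6 : 24 * (64 * r^3) / r^2 = 1536 * r := by
    have : r ≠ 0 := by linarith
    field_simp; norm_num
  linarith

lemma ff_real {x : ℝ} (hx : 10 ≤ x) : ‖ff x‖ ≤ 200 := by
  have hn : ‖(x:ℂ)‖ = x := by rw [norm_real, Real.norm_of_nonneg (by linarith)]
  refine (ff_bound (by simp; linarith) (by rw [hn]; exact hx)).trans ?_
  have := zeta_b (w := (x:ℂ)) (by simp; linarith)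
  rw [hn]
  have : 24 * ‖riemannZeta x‖ / x^2 ≤ 24 * 2.7 / 1 := by
    gcongr
    nlinarith
  linarith

lemma ev_far : ∀ᶠ z : ℂ in Bornology.cobounded ℂ ⊓ 𝓟 {z : ℂ | 0 < z.re},
    1/2 ≤ (z + 1/2).re ∧ 10 ≤ ‖z + 1/2‖ ∧ ‖z + 1/2‖ ≤ 2 * ‖z‖ := by
  rw [eventually_inf_principal]
  have : ∀ᶠ z : ℂ in Bornology.cobounded ℂ, 20 ≤ ‖z‖ := tendsto_norm_cobounded_atTop.eventually_ge_atTop 20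
  filter_upwards [this] with z hz hre
  have hre' : 0 < z.re := hre
  refine ⟨by simp; linarith, ?_, ?_⟩
  · have := norm_add_ge (s := z) hre'.le (c := 1/2) (by norm_num)
    push_cast at this
    linarith
  · refine (norm_add_le _ _).trans ?_
    norm_num; linarith

lemma ff_re {ε : ℝ} (hline : ∀ s : ℂ, s.re = 1/2 → ε ≤ (ff s).re) {s : ℂ} (hs : 1/2 ≤ s.re) :
    ε ≤ (ff s).re := by
  have key := PhragmenLindelof.right_half_plane_of_bounded_on_real (f := fun z => cexp (-ff (z + 1/2))) (C := Real.exp (-ε))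
    (z := s - 1/2) ?_ ?_ ?_ ?_ (by simp; linarith)
  · simp [norm_exp] at key
    exact key
  · have hd : ∀ z : ℂ, 0 ≤ z.re → DifferentiableAt ℂ (fun z => cexp (-ff (z + 1/2))) z := by
      intro z hz
      have : DifferentiableAt ℂ ff (z + 1/2) := ff_diff (by simp; linarith)
      have h2 : DifferentiableAt ℂ (fun z => ff (z + 1/2)) z := DifferentiableAt.comp (g := ff) z this (by fun_prop)
      fun_prop
    refine DifferentiableOn.diffContOnCl ?_
    intro z hz
    have hz' : 0 ≤ z.re := by
      have : closure {z : ℂ | 0 < z.re} = {z : ℂ | 0 ≤ z.re} := closure_setOf_lt_re 0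
      rw [this] at hz; exact hz
    exact (hd z hz').differentiableWithinAt
  · refine ⟨1, by norm_num, 4000, ?_⟩
    refine Asymptotics.IsBigO.of_bound 1 ?_
    filter_upwards [ev_far] with z hz
    obtain ⟨h1, h2, h3⟩ := hz
    rw [norm_exp, Real.norm_of_nonneg (Real.exp_pos _).le, one_mul, Real.rpow_one]
    apply Real.exp_le_exp.mpr
    refine (re_le_norm _).trans ?_
    rw [norm_neg]
    refine (ff_growth h1 h2).trans ?_
    linarith
  · refine ⟨Real.exp 200, ?_⟩
    rw [eventually_map]
    filter_upwards [eventually_ge_atTop 10] with x hx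
    rw [norm_exp]
    apply Real.exp_le_exp.mpr
    refine (re_le_norm _).trans ?_
    rw [norm_neg, show (x:ℂ) + 1/2 = ((x + 1/2 : ℝ) : ℂ) by push_cast; rfl]
    exact ff_real (by linarith)
  · intro x
    rw [norm_exp]
    apply Real.exp_le_exp.mpr
    rw [neg_re, neg_le_neg_iff]
    exact hline _ (by simp)

lemma TT_conj {s : ℂ} (hs : s.re = 1/2) : TT (1 - s) = (starRingEnd ℂ) (TT s) := by
  have hc := conj_line hs
  have e1 : s ≠ 0 := by rintro rfl; norm_num at hs
  have e2 : s - 1 ≠ 0 := by intro h; have := congrArg re h; simp [hs] at this; norm_num at this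
  have e3 : s + 1 ≠ 0 := by intro h; have := congrArg re h; simp [hs] at this; norm_num at this
  have hA : (starRingEnd ℂ) A = A := by
    have : A = ((Real.pi/3 - 1 : ℝ) : ℂ) := by simp [A]
    rw [this, conj_ofReal]
  have ha : (starRingEnd ℂ) ac = ac := by
    have : ac = ((-3 * Real.pi / (Real.pi + 3) : ℝ) : ℂ) := by simp [ac]
    rw [this, conj_ofReal]
  have n2 : (starRingEnd ℂ) 2 = 2 := map_ofNat _ 2
  have n3 : (starRingEnd ℂ) 3 = 3 := map_ofNat _ 3
  have hhc : hh ((starRingEnd ℂ) s) = (starRingEnd ℂ) (hh s) := by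
    simp only [hh, map_sub, map_add, map_mul, map_pow, hA, map_one, n2, n3, ← chi_conj]
  have h1c : h1 ((starRingEnd ℂ) s) = (starRingEnd ℂ) (h1 s) := by
    have k1 := h1_mul s
    have k2 := h1_mul ((starRingEnd ℂ) s)
    rw [hhc, ← k1, map_mul, map_add, map_one] at k2
    refine mul_left_cancel₀ ?_ k2
    rw [← map_one (starRingEnd ℂ), ← map_add]
    exact (map_ne_zero _).mpr e3
  have hNc : NN ((starRingEnd ℂ) s) = (starRingEnd ℂ) (NN s) := by
    simp only [NN, map_sub, map_add, map_mul, ha, map_one, n2, ← chi_conj, h1c]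
  have k1 := TT_mul s
  have k2 := TT_mul ((starRingEnd ℂ) s)
  rw [hNc, ← k1, map_mul, map_mul, map_sub, map_one] at k2
  rw [← hc]
  refine mul_left_cancel₀ ?_ k2
  rw [← map_one (starRingEnd ℂ), ← map_sub, ← map_mul]
  exact (map_ne_zero _).mpr (mul_ne_zero e1 e2)

section
variable {ε : ℝ} (hε : 0 < ε) (hline : ∀ s : ℂ, s.re = 1/2 → ε ≤ (ff s).re)
include hε hline

lemma ff_norm {s : ℂ} (hs : 1/2 ≤ s.re) : ε ≤ ‖ff s‖ := (ff_re hline hs).trans (re_le_norm _)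

lemma TT_ne {s : ℂ} (hs : 1/2 ≤ s.re) : TT s ≠ 0 := by
  intro h
  have := ff_norm hε hline hs
  rw [ff, h] at this
  simp at this
  linarith

lemma QQ_eq {s : ℂ} (hs : 1/2 ≤ s.re) : TT (1-s) / TT s = RR s / ff s := by
  have h1 := TT_ne hε hline hs
  have hg := gam_ne (s := s) (by linarith)
  have hc : chi (2*s) ≠ 0 := chi_ne_zero (by simp; linarith)
  rw [RR, ff]
  generalize chi (2*s) = c at *
  field_simp

lemma QQ_diff {s : ℂ} (hs : 1/2 ≤ s.re) : DifferentiableAt ℂ (fun s => TT (1-s) / TT s) s := by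
  have h1 := TT_ne hε hline hs
  have := TT_diff
  fun_prop (disch := assumption)

lemma QQ_real {x : ℝ} (hx : 10 ≤ x) : ‖TT (1-x) / TT x‖ ≤ 5400 / ε / x := by
  have hs : 1/2 ≤ (x:ℂ).re := by simp; linarith
  rw [QQ_eq hε hline hs, norm_div]
  have h1 := ff_norm hε hline hs
  have h2 := RR_real hx
  have hx0 : 0 < x := by linarith
  calc _ ≤ (5400/x) / ε := by gcongr
    _ = _ := by field_simp

lemma QQ_le {s : ℂ} (hs : 1/2 ≤ s.re) : ‖TT (1-s) / TT s‖ ≤ 1 := by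
  have key := PhragmenLindelof.right_half_plane_of_bounded_on_real
    (f := fun z => (fun s => TT (1-s) / TT s) (z + 1/2)) (C := 1)
    (z := s - 1/2) ?_ ?_ ?_ ?_ (by simp; linarith)
  · simpa using key
  · refine DifferentiableOn.diffContOnCl ?_
    intro z hz
    have hz' : 0 ≤ z.re := by
      have : closure {z : ℂ | 0 < z.re} = {z : ℂ | 0 ≤ z.re} := closure_setOf_lt_re 0
      rw [this] at hz; exact hz
    apply DifferentiableAt.differentiableWithinAt
    have h1 := QQ_diff hε hline (s := z + 1/2) (by simp; linarith)
    exact DifferentiableAt.comp (g := fun s => TT (1-s) / TT s) (f := fun z : ℂ => z + 1/2) z h1 (by fun_prop)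
  · refine ⟨1, by norm_num, 1, ?_⟩
    refine Asymptotics.IsBigO.of_bound (128000 / ε) ?_
    filter_upwards [ev_far] with z hz
    obtain ⟨h1, h2, h3⟩ := hz
    rw [QQ_eq hε hline h1, Real.norm_of_nonneg (Real.exp_pos _).le, one_mul, Real.rpow_one, norm_div]
    have k1 := RR_growth h1 h2
    have k2 := ff_norm hε hline h1
    have k3 := Real.add_one_le_exp ‖z‖
    calc _ ≤ (64000 * (2 * ‖z‖)) / ε := by gcongr; linarith
      _ = 128000 / ε * ‖z‖ := by ring
      _ ≤ _ := by gcongr; linarith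
  · refine ⟨5400 / ε, ?_⟩
    rw [eventually_map]
    filter_upwards [eventually_ge_atTop 10] with x hx
    have := QQ_real hε hline (x := x + 1/2) (by linarith)
    push_cast at this
    refine this.trans (div_le_self (by positivity) (by linarith))
  · intro x
    have hre : ((x:ℂ) * I + 1/2).re = 1/2 := by simp
    simp only
    rw [TT_conj hre, norm_div, RCLike.norm_conj]
    exact div_self_le_one _

lemma QQ_lt {s : ℂ} (hs : 1/2 < s.re) : ‖TT (1-s)‖ < ‖TT s‖ := by
  have h1 := TT_ne hε hline hs.le
  have h2 := QQ_le hε hline hs.le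
  rw [← div_lt_one (norm_pos_iff.mpr h1), ← norm_div]
  refine lt_of_le_of_ne h2 ?_
  intro heq
  let U : Set ℂ := {s | 1/2 < s.re}
  have hU : IsOpen U := isOpen_lt continuous_const continuous_re
  have hUc : IsPreconnected U := (convex_halfSpace_re_gt _).isPreconnected
  have hd : DifferentiableOn ℂ (fun s => TT (1-s) / TT s) U := fun z hz =>
    (QQ_diff hε hline (le_of_lt hz)).differentiableWithinAt
  have hm : IsMaxOn (norm ∘ (fun s => TT (1-s) / TT s)) U s := by
    intro z hz
    simp only [Function.comp, mem_setOf_eq, heq]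
    exact QQ_le hε hline (le_of_lt hz)
  have h3 := norm_eqOn_of_isPreconnected_of_isMaxOn hUc hU hd hs hm
  let x : ℝ := 10 + 5400 / ε
  have hx : 10 ≤ x := by simp only [x]; linarith [div_pos (by norm_num : (0:ℝ) < 5400) hε]
  have hxU : (x:ℂ) ∈ U := by
    change 1/2 < (x:ℂ).re
    simp; linarith
  have h4 := h3 hxU
  have h5 := QQ_real hε hline hx
  simp only [Function.comp, Function.const, heq] at h4
  rw [h4, le_div_iff₀ (by linarith)] at h5
  simp only [x] at h5
  linarith

lemma TT_neq {s : ℂ} (hs : s.re ≠ 1/2) : TT s - TT (1-s) ≠ 0 := by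
  intro h
  have h' := congrArg norm (sub_eq_zero.mp h)
  rcases lt_or_gt_of_ne hs with h1 | h1
  · have := QQ_lt hε hline (s := 1 - s) (by simp; linarith)
    rw [sub_sub_cancel] at this
    linarith
  · have := QQ_lt hε hline h1
    linarith

theorem final (ρ : ℂ) :
    (Z2 ρ = 0 → ρ ∉ ({-1, 0, 1, 2} : Set ℂ) → ρ.re = 1 / 2) ∧
    (ρ ∈ ({-1, 0, 1, 2} : Set ℂ) → Z2 ρ = 0 ∧ deriv Z2 ρ ≠ 0) := by
  constructor
  · intro h hn
    by_contra hre
    have := TT_neq hε hline hre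
    rw [Z2_fac] at h
    simp only [mem_insert_iff, mem_singleton_iff, not_or] at hn
    obtain ⟨n1, n2, n3, n4⟩ := hn
    have e1 : ρ - 2 ≠ 0 := sub_ne_zero.mpr n4
    have e2 : ρ + 1 ≠ 0 := by intro h; apply n1; linear_combination h
    have e3 : ρ - 1 ≠ 0 := sub_ne_zero.mpr n3
    exact absurd h (by simp [this, e1, e2, e3, n2])
  · intro h
    have hre : ρ.re ≠ 1/2 := by
      simp only [mem_insert_iff, mem_singleton_iff] at h
      rcases h with rfl | rfl | rfl | rfl <;> norm_num
    have hD := TT_neq hε hline hre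
    have hZ : Z2 = fun s => ((s-2)*(s+1)*s*(s-1))*(TT s - TT (1-s)) := by
      ext s; exact Z2_fac s
    have hP : (ρ-2)*(ρ+1)*ρ*(ρ-1) = 0 := by
      simp only [mem_insert_iff, mem_singleton_iff] at h
      rcases h with rfl | rfl | rfl | rfl <;> norm_num
    have hP' : HasDerivAt (fun s : ℂ => (s-2)*(s+1)*s*(s-1)) (((1 * (ρ+1) + (ρ-2)*1)*ρ + (ρ-2)*(ρ+1)*1)*(ρ-1) + (ρ-2)*(ρ+1)*ρ*1) ρ :=
      (((((hasDerivAt_id ρ).sub_const 2).mul ((hasDerivAt_id ρ).add_const 1)).mul (hasDerivAt_id ρ)).mul ((hasDerivAt_id ρ).sub_const 1))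
    have hDd : DifferentiableAt ℂ (fun s => TT s - TT (1-s)) ρ := by
      have := TT_diff
      fun_prop
    have hd := (hP'.mul hDd.hasDerivAt).deriv
    refine ⟨by rw [Z2_fac, hP, zero_mul], ?_⟩
    have e : Z2 = (fun s : ℂ => (s-2)*(s+1)*s*(s-1)) * (fun s => TT s - TT (1-s)) := by
      rw [hZ]; rfl
    rw [e, hd, hP, zero_mul, add_zero]
    refine mul_ne_zero ?_ hD
    simp only [mem_insert_iff, mem_singleton_iff] at h
    rcases h with rfl | rfl | rfl | rfl <;> norm_num
end

end

section

structure TM where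
  x : Int
  y : Int
  u : Int
  v : Int
  r : Int

namespace TM
def frcN {α : Type} (n : Nat) (k : Nat → α) : α :=
  match n with
  | 0 => k 0
  | m+1 => k (Nat.succ m)
def frcI {α : Type} (a : Int) (k : Int → α) : α :=
  match a with
  | .ofNat n => frcN n fun n => k (.ofNat n)
  | .negSucc n => frcN n fun n => k (.negSucc n)
def frc {α : Type} (a : TM) (k : TM → α) : α :=
  frcI a.x fun x => frcI a.y fun y => frcI a.u fun u => frcI a.v fun v => frcI a.r fun r => k ⟨x,y,u,v,r⟩

def iabs (a : Int) : Int := match a with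
  | .ofNat n => .ofNat n
  | .negSucc n => .ofNat (Nat.succ n)
def nU (x y : Int) : Int :=
  frcI (iabs x) fun a => frcI (iabs y) fun b =>
  frcI (if a ≤ b then b + a/2 + 1 else a + b/2 + 1) fun c =>
  (c + (x*x+y*y)/c)/2 + 1
def nL (x y : Int) : Int := (x*x+y*y)/nU x y
def hU (h : Int) (a : TM) : Int := nU a.u a.v * h / 4294967296 + 1
def bd (h : Int) (a : TM) : Int := nU a.x a.y + hU h a + a.r
def add (a b : TM) : TM := ⟨a.x+b.x, a.y+b.y, a.u+b.u, a.v+b.v, a.r+b.r⟩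
def sub (a b : TM) : TM := ⟨a.x-b.x, a.y-b.y, a.u-b.u, a.v-b.v, a.r+b.r⟩
def mul (h : Int) (a b : TM) : TM :=
  ⟨(a.x*b.x-a.y*b.y)/4294967296, (a.x*b.y+a.y*b.x)/4294967296,
   (a.x*b.u-a.y*b.v+a.u*b.x-a.v*b.y)/4294967296, (a.x*b.v+a.y*b.u+a.u*b.y+a.v*b.x)/4294967296,
   frcI (hU h a) fun a1 => frcI (hU h b) fun b1 =>
   ((nU a.x a.y + a1) * b.r + (nU b.x b.y + b1) * a.r + a.r*b.r + a1*b1)/4294967296 + (4 + 2 * (h/4294967296 + 1))⟩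
def mulK (h : Int) (a b : TM) (k : TM → Bool) : Bool := frc (mul h a b) k
def addK (a b : TM) (k : TM → Bool) : Bool := frc (add a b) k
def subK (a b : TM) (k : TM → Bool) : Bool := frc (sub a b) k
def divK (h : Int) (p q : TM) (k : TM → Bool) : Bool :=
  frcI (q.x*q.x+q.y*q.y) fun n =>
  frcI ((p.x*q.x+p.y*q.y)*4294967296/n) fun x =>
  frcI ((p.y*q.x-p.x*q.y)*4294967296/n) fun y =>
  frcI (p.u - (x*q.u-y*q.v)/4294967296) fun e =>
  frcI (p.v - (x*q.v+y*q.u)/4294967296) fun f =>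
  frcI ((e*q.x+f*q.y)*4294967296/n) fun u =>
  frcI ((f*q.x-e*q.y)*4294967296/n) fun v =>
  subK p (mul h ⟨x,y,u,v,0⟩ q) fun d =>
  frcI (nL q.x q.y - hU h q - q.r) fun L =>
  if 0 < L then frcI (bd h d * 4294967296 / L + 1) fun r => k ⟨x,y,u,v,r⟩ else false
def sqrtK (h : Int) (p : TM) (k : TM → Bool) : Bool :=
  frcI ((nU p.x p.y + p.x)/2*4294967296) fun n =>
  frcI ((4294967296 + n/4294967296)/2) fun c =>
  frcI ((c + n/c)/2) fun c =>
  frcI ((c + n/c)/2) fun c =>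
  frcI ((c + n/c)/2) fun c =>
  frcI ((c + n/c)/2) fun c =>
  frcI ((c + n/c)/2) fun c =>
  frcI (p.y*4294967296/(2*c)) fun d =>
  frcI (c*c+d*d) fun n =>
  frcI ((c + (p.x*c+p.y*d)*4294967296/n)/2) fun x =>
  frcI ((d + (p.y*c-p.x*d)*4294967296/n)/2) fun y =>
  frcI (x*x+y*y) fun n =>
  frcI ((p.u*x+p.v*y)*4294967296/(2*n)) fun u =>
  frcI ((p.v*x-p.u*y)*4294967296/(2*n)) fun v =>
  subK p (mul h ⟨x,y,u,v,0⟩ ⟨x,y,u,v,0⟩) fun e =>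
  frcI (x - hU h ⟨x,y,u,v,0⟩) fun L =>
  if 0 < L then frcI (bd h e * 4294967296 / L + 1) fun r => k ⟨x,y,u,v,r⟩ else false
def qt (n : Int) : TM := ⟨n*1073741824,0,0,0,0⟩
def fat (a : TM) (r : Int) : TM := ⟨a.x,a.y,a.u,a.v,a.r+r⟩
def scl (n : Int) (a : TM) : TM := ⟨n*a.x,n*a.y,n*a.u,n*a.v,iabs n*a.r⟩
def dvd (h n : Int) (a : TM) : TM := ⟨a.x/n,a.y/n,a.u/n,a.v/n,a.r/n+1 + (4 + 2 * (h/4294967296 + 1))⟩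
def pi : TM := ⟨13493037704,0,0,0,1⟩
def lg2 : TM := ⟨2977044472,0,0,0,2⟩
def lg3 : TM := ⟨4718503851,0,0,0,2⟩
def rt2 : TM := ⟨3037000500,0,0,0,2⟩
def rt3 : TM := ⟨2479700525,0,0,0,2⟩
def sv (t : Int) : TM := ⟨2147483648,t,4294967296,0,0⟩
def disc (r : Int) : TM := ⟨0,0,0,0,r⟩
def lo (h : Int) (a : TM) : Int := a.x - hU h a - a.r

def rfunK (h : Int) (z : TM) (k : TM → Bool) : Bool :=
  mulK h pi (add z (qt 19)) fun q =>
  frc (fat q (bd h q * 6012955 / 4294967296 + 1)) fun q =>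
  sqrtK h q fun q =>
  mulK h z q fun q =>
  mulK h (add z (qt 4)) q fun q =>
  mulK h (add z (qt 8)) q fun q =>
  mulK h (add z (qt 12)) q fun q =>
  mulK h (add z (qt 16)) q fun q =>
  mulK h (add z (qt 2)) (add z (qt 6)) fun p =>
  mulK h p (add z (qt 10)) fun p =>
  mulK h p (add z (qt 14)) fun p =>
  mulK h p (add z (qt 18)) fun p =>
  divK h q p k

def expK (h : Int) (lg s : TM) (k : TM → Bool) : Bool :=
  mulK h (sub s (qt 2)) lg fun x =>
  frc (dvd h 64 (scl (-1) x)) fun x =>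
  frcI (bd h x) fun b =>
  if b ≤ 4294967296 then
  mulK h x x fun x2 =>
  mulK h x2 x fun x3 =>
  mulK h x2 x2 fun x4 =>
  frc (fat (add (add (add (add (qt 4) x) (dvd h 2 x2)) (dvd h 6 x3)) (dvd h 24 x4))
    (b*b*b*b*b/34028236692093846346337460743176821145600 + 1)) fun e =>
  mulK h e e fun e =>
  mulK h e e fun e =>
  mulK h e e fun e =>
  mulK h e e fun e =>
  mulK h e e fun e =>
  mulK h e e k
  else false

def remK (h : Int) (w : TM) (cn : Int) (k : Int → Bool) : Bool :=
  mulK h w (add w (qt 4)) fun v =>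
  mulK h v (add w (qt 8)) fun v =>
  frcI (bd h v * cn / 1000000 + 1) k

def etaK (h : Int) (w A2 A3 A4 : TM) (cn : Int) (k : TM → Bool) : Bool :=
  subK w (qt 4) fun w1 =>
  remK h w cn fun R =>
  mulK h A4 (add (qt 2) (dvd h 48 w)) fun m =>
  mulK h w1 (fat (add (add (add (qt 4) A2) A3) m) R) fun m =>
  frc (add m (scl 4 A4)) k

def zetK (h : Int) (w A2 A3 A4 : TM) (cn : Int) (k : TM → Bool) : Bool :=
  divK h (qt 16) (sub w (qt 4)) fun w1 =>
  remK h w cn fun R =>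
  mulK h A4 (add (add (qt 2) (dvd h 48 w)) w1) fun m =>
  frc (fat (add (add (add (qt 4) A2) A3) m) R) k

def KfK (h : Int) (s E F : TM) (k : TM → Bool) : Bool :=
  mulK h E E fun EE =>
  mulK h F F fun FF =>
  mulK h EE EE fun E4 =>
  etaK h (sub (scl 2 s) (qt 4)) EE FF E4 251 fun p =>
  etaK h (scl 2 s) (dvd h 2 EE) (dvd h 3 FF) (dvd h 4 E4) 42 fun q =>
  rfunK h s fun g =>
  mulK h g p fun p =>
  mulK h s q fun q =>
  divK h p q k

def PPK (h : Int) (s K : TM) (k : TM → TM → TM → Bool) : Bool :=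
  rfunK h (dvd h 2 (add s (qt 4))) fun g =>
  divK h pi g fun q =>
  divK h (qt 12) s fun i0 =>
  frc (dvd h 3 (sub pi (qt 12))) fun AA =>
  mulK h AA s fun As =>
  frc (sub (add As (sub (qt 12) AA)) i0) fun P2 =>
  frc (add s (qt 8)) fun s2 =>
  divK h (qt 40) s2 fun i2 =>
  mulK h (sub i2 (qt 8)) q fun P1 =>
  divK h (scl (-3) pi) (add pi (qt 12)) fun ac =>
  mulK h ac (add (qt 4) K) fun aK =>
  divK h aK s2 fun aK =>
  divK h (qt 16) (add s (qt 4)) fun i1 =>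
  divK h pi s fun ps =>
  mulK h (scl (-2) ps) (sub (sub (qt 4) i1) aK) fun P0 =>
  k P2 P1 P0

def gAK (h t : Int) (useK : Bool) : Bool :=
  frc (sv t) fun s =>
  expK h lg2 s fun E =>
  expK h lg3 s fun F =>
  (bif useK then KfK h s E F else fun k => k (disc 4294967296)) fun K =>
  PPK h s K fun P2 P1 P0 =>
  mulK h E rt2 fun A2 =>
  mulK h F rt3 fun A3 =>
  mulK h A2 A2 fun A4 =>
  zetK h s A2 A3 A4 101 fun z0 =>
  zetK h (add s (qt 4)) (dvd h 2 A2) (dvd h 3 A3) (dvd h 4 A4) 18 fun z1 =>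
  zetK h (add s (qt 8)) (dvd h 4 A2) (dvd h 9 A3) (dvd h 16 A4) 4 fun z2 =>
  mulK h P0 z0 fun q0 =>
  mulK h P1 z1 fun q1 =>
  mulK h P2 z2 fun q2 =>
  divK h (add (add q0 q1) q2) (add s (qt 4)) fun g =>
  decide (4294967 ≤ lo h g)
end TM

end

section
namespace TM

lemma frcN_eq {α : Type} (n : Nat) (k : Nat → α) : frcN n k = k n := by cases n <;> rfl
lemma frcI_eq {α : Type} (n : Int) (k : Int → α) : frcI n k = k n := by cases n <;> simp [frcI, frcN_eq]
lemma frc_eq {α : Type} (a : TM) (k : TM → α) : frc a k = k a := by simp [frc, frcI_eq]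
lemma iabs_eq (a : Int) : iabs a = |a| := by 
  cases a with
  | ofNat n => simp [iabs]
  | negSucc n => rw [iabs, abs_of_neg (Int.negSucc_lt_zero n)]; rfl

noncomputable def cz (x y : ℤ) : ℂ := (x:ℂ) + (y:ℂ) * I

lemma cz_re (x y : ℤ) : (cz x y).re = x := by simp [cz]
lemma cz_im (x y : ℤ) : (cz x y).im = y := by simp [cz]

lemma cz_sq (x y : ℤ) : ‖cz x y‖^2 = (x:ℝ)^2 + (y:ℝ)^2 := by
  rw [← Complex.normSq_eq_norm_sq, Complex.normSq_apply, cz_re, cz_im]; ring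

lemma fd_le (a b : ℤ) (hb : 0 < b) : ((a/b:ℤ):ℝ) ≤ (a:ℝ)/b := by
  have hb' : (0:ℝ) < b := by exact_mod_cast hb
  rw [le_div_iff₀ hb']
  exact_mod_cast Int.ediv_mul_le a hb.ne'

lemma le_fd (a b : ℤ) (hb : 0 < b) : (a:ℝ)/b ≤ ((a/b:ℤ):ℝ) + 1 := by
  have hb' : (0:ℝ) < b := by exact_mod_cast hb
  rw [div_le_iff₀ hb']
  exact_mod_cast (Int.lt_ediv_add_one_mul_self a hb).le

lemma cz_nU (x y : ℤ) : ‖cz x y‖ ≤ (nU x y : ℝ) := by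
  have key : ∀ c : ℤ, 0 < c → ‖cz x y‖ ≤ (((c + (x*x+y*y)/c)/2 + 1 : ℤ):ℝ) := by
    intro c hc
    have hc' : (0:ℝ) < c := by exact_mod_cast hc
    have h1 := le_fd (x*x+y*y) c hc
    have h2 := le_fd (c + (x*x+y*y)/c) 2 (by norm_num)
    push_cast at h1 h2 ⊢
    have h3 : 2 * ‖cz x y‖ ≤ c + (x*x+y*y:ℝ)/c := by
      have e : (x*x+y*y:ℝ) = ‖cz x y‖^2 := by rw [cz_sq]; ring
      rw [e, ← sub_nonneg]
      have : (c:ℝ) + ‖cz x y‖^2/c - 2*‖cz x y‖ = (c - ‖cz x y‖)^2/c := by field_simp; ring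
      rw [this]; positivity
    have h4 : ((c:ℝ) + ((x*x+y*y)/c:ℤ))/2 ≤ (((c + (x*x+y*y)/c)/2 : ℤ):ℝ) + 1/2 := by
      have : c + (x*x+y*y)/c ≤ 2 * ((c + (x*x+y*y)/c)/2) + 1 := by omega
      have : ((c + (x*x+y*y)/c : ℤ):ℝ) ≤ 2 * (((c + (x*x+y*y)/c)/2 : ℤ):ℝ) + 1 := by exact_mod_cast this
      push_cast at this ⊢
      linarith
    push_cast at h4
    linarith
  rw [nU]
  simp only [frcI_eq, iabs_eq]
  apply key
  have := abs_nonneg x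
  have := abs_nonneg y
  split_ifs <;> omega

lemma nL_le (x y : ℤ) : (nL x y : ℝ) ≤ ‖cz x y‖ := by
  have h := cz_nU x y
  have h0 : (0:ℝ) ≤ nU x y := (norm_nonneg _).trans h
  have h0' : 0 ≤ nU x y := by exact_mod_cast h0
  rw [nL]
  rcases h0'.eq_or_lt with h1 | h1
  · rw [← h1]; simp
  · refine (fd_le _ _ h1).trans ?_
    have h1' : (0:ℝ) < nU x y := by exact_mod_cast h1
    rw [div_le_iff₀ h1']
    push_cast
    have e : (x*x+y*y:ℝ) = ‖cz x y‖^2 := by rw [cz_sq]; ring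
    rw [e, sq]; gcongr

/-- membership of `q` in the first order model -/
def mem (δ q : ℂ) (a : TM) : Prop := ‖4294967296*q - (cz a.x a.y + cz a.u a.v * δ)‖ ≤ (a.r:ℝ)

variable {h : ℤ} {δ p q : ℂ} {a b : TM}

lemma hU_le (hδ : ‖δ‖ * 4294967296 ≤ h) (a : TM) : ‖cz a.u a.v * δ‖ ≤ (hU h a : ℝ) := by
  rw [norm_mul, hU]
  have h1 := le_fd (nU a.u a.v * h) 4294967296 (by norm_num)
  push_cast at h1 ⊢
  refine le_trans ?_ h1
  have h2 := cz_nU a.u a.v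
  rw [le_div_iff₀ (by norm_num), mul_assoc]
  gcongr
  exact (norm_nonneg _).trans h2

lemma mem_bd (hδ : ‖δ‖ * 4294967296 ≤ h) (ha : mem δ q a) : ‖q‖ * 4294967296 ≤ (bd h a : ℝ) := by
  have h1 := hU_le hδ a
  have h2 := cz_nU a.x a.y
  rw [mem] at ha
  have e : 4294967296 * q = (4294967296*q - (cz a.x a.y + cz a.u a.v * δ)) + cz a.x a.y + cz a.u a.v * δ := by ring
  have h3 : ‖4294967296 * q‖ ≤ a.r + nU a.x a.y + hU h a := by
    rw [e]
    refine (norm_add_le _ _).trans (add_le_add ((norm_add_le _ _).trans (add_le_add ha h2)) h1)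
  rw [norm_mul] at h3
  norm_num at h3
  rw [bd]; push_cast; linarith

lemma mem_lo (hδ : ‖δ‖ * 4294967296 ≤ h) (ha : mem δ q a) : (lo h a : ℝ) ≤ q.re * 4294967296 := by
  have h1 := hU_le hδ a
  rw [mem] at ha
  have h2 := (abs_le.mp ((abs_re_le_norm _).trans ha)).1
  have h3 := (abs_le.mp ((abs_re_le_norm _).trans h1)).1
  rw [sub_re, add_re, cz_re] at h2
  have : (4294967296*q).re = 4294967296 * q.re := by simp
  rw [lo]; push_cast
  linarith

lemma lower (hδ : ‖δ‖ * 4294967296 ≤ h) (ha : mem δ q a) :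
    ((nL a.x a.y - hU h a - a.r : ℤ):ℝ) ≤ ‖q‖ * 4294967296 := by
  have h1 := hU_le hδ a
  rw [mem] at ha
  have h2 := nL_le a.x a.y
  have e : cz a.x a.y = 4294967296 * q + (-(4294967296*q - (cz a.x a.y + cz a.u a.v * δ))) + (- (cz a.u a.v * δ)) := by ring
  have h3 : ‖cz a.x a.y‖ ≤ ‖4294967296 * q‖ + a.r + hU h a := by
    rw [e]
    refine (norm_add_le _ _).trans (add_le_add ((norm_add_le _ _).trans (add_le_add le_rfl ?_)) ?_)
    · rw [norm_neg]; convert ha using 2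
    · rwa [norm_neg]
  rw [norm_mul] at h3
  norm_num at h3
  push_cast; linarith

lemma mem_add (ha : mem δ p a) (hb : mem δ q b) : mem δ (p+q) (add a b) := by
  rw [mem] at *
  have e : 4294967296*(p+q) - (cz (add a b).x (add a b).y + cz (add a b).u (add a b).v * δ) =
    (4294967296*p - (cz a.x a.y + cz a.u a.v * δ)) + (4294967296*q - (cz b.x b.y + cz b.u b.v * δ)) := by
    simp only [add, cz]; push_cast; ring
  rw [e]
  refine (norm_add_le _ _).trans ?_
  simp only [add]; push_cast; linarith

lemma mem_sub (ha : mem δ p a) (hb : mem δ q b) : mem δ (p-q) (sub a b) := by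
  rw [mem] at *
  have e : 4294967296*(p-q) - (cz (sub a b).x (sub a b).y + cz (sub a b).u (sub a b).v * δ) =
    (4294967296*p - (cz a.x a.y + cz a.u a.v * δ)) - (4294967296*q - (cz b.x b.y + cz b.u b.v * δ)) := by
    simp only [sub, cz]; push_cast; ring
  rw [e]
  refine (norm_sub_le _ _).trans ?_
  simp only [sub]; push_cast; linarith

lemma mem_scl (n : ℤ) (ha : mem δ p a) : mem δ (n*p) (scl n a) := by
  rw [mem] at *
  have e : 4294967296*(n*p) - (cz (scl n a).x (scl n a).y + cz (scl n a).u (scl n a).v * δ) =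
    n * (4294967296*p - (cz a.x a.y + cz a.u a.v * δ)) := by
    simp only [scl, cz]; push_cast; ring
  rw [e, norm_mul]
  simp only [scl, iabs_eq]; push_cast
  rw [Complex.norm_intCast]
  gcongr

lemma rnd (X Y n : ℤ) (hn : 0 < n) : ‖cz X Y / n - cz (X/n) (Y/n)‖ ≤ 2 := by
  have h1 := fd_le X n hn
  have h2 := le_fd X n hn
  have h3 := fd_le Y n hn
  have h4 := le_fd Y n hn
  refine (norm_le_abs_re_add_abs_im _).trans ?_
  have e : cz X Y / n - cz (X/n) (Y/n) = (((X:ℝ)/n - ((X/n:ℤ):ℝ) : ℝ):ℂ) + (((Y:ℝ)/n - ((Y/n:ℤ):ℝ) : ℝ):ℂ) * I := by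
    simp only [cz]; push_cast; ring
  rw [e]
  simp only [add_re, ofReal_re, mul_re, I_re, ofReal_im, I_im, add_im, mul_im]
  norm_num
  have a1 : |(X:ℝ)/n - ((X/n:ℤ):ℝ)| ≤ 1 := by rw [abs_le]; constructor <;> linarith
  have a2 : |(Y:ℝ)/n - ((Y/n:ℤ):ℝ)| ≤ 1 := by rw [abs_le]; constructor <;> linarith
  linarith

lemma two_h (hδ : ‖δ‖ * 4294967296 ≤ h) : 2 * ‖δ‖ ≤ 2 * (((h/4294967296 : ℤ):ℝ) + 1) := by
  have := le_fd h 4294967296 (by norm_num)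
  push_cast at this
  have h2 : ‖δ‖ ≤ (h:ℝ)/4294967296 := by rw [le_div_iff₀ (by norm_num)]; exact hδ
  linarith

lemma mem_dvd (hδ : ‖δ‖ * 4294967296 ≤ h) {n : ℤ} (hn : 0 < n) (ha : mem δ p a) : mem δ (p/n) (dvd h n a) := by
  rw [mem] at *
  have hn' : (n:ℂ) ≠ 0 := by exact_mod_cast hn.ne'
  have hn2 : (0:ℝ) < n := by exact_mod_cast hn
  have e : 4294967296*(p/n) - (cz (dvd h n a).x (dvd h n a).y + cz (dvd h n a).u (dvd h n a).v * δ) =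
    (4294967296*p - (cz a.x a.y + cz a.u a.v * δ)) / n + (cz a.x a.y / n - cz (a.x/n) (a.y/n))
     + (cz a.u a.v / n - cz (a.u/n) (a.v/n)) * δ := by
    simp only [dvd]; ring
  rw [e]
  have h1 := rnd a.x a.y n hn
  have h2 := rnd a.u a.v n hn
  have h3 := two_h hδ
  have h4 := le_fd a.r n hn
  have h5 : ‖(4294967296*p - (cz a.x a.y + cz a.u a.v * δ)) / n‖ ≤ a.r / n := by
    rw [norm_div, Complex.norm_intCast, abs_of_pos hn2]; gcongr
  have h6 : ‖(cz a.u a.v / n - cz (a.u/n) (a.v/n)) * δ‖ ≤ 2 * ‖δ‖ := by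
    rw [norm_mul]; gcongr
  refine (norm_add_le _ _).trans ((add_le_add ((norm_add_le _ _).trans (add_le_add h5 h1)) h6).trans ?_)
  simp only [dvd]; push_cast; linarith

lemma mem_mul (hδ : ‖δ‖ * 4294967296 ≤ h) (ha : mem δ p a) (hb : mem δ q b) : mem δ (p*q) (mul h a b) := by
  have A1 := hU_le hδ a
  have B1 := hU_le hδ b
  have A0 := cz_nU a.x a.y
  have B0 := cz_nU b.x b.y
  rw [mem] at *
  set e := 4294967296*p - (cz a.x a.y + cz a.u a.v * δ) with he
  set f := 4294967296*q - (cz b.x b.y + cz b.u b.v * δ) with hf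
  have r1 := rnd (a.x*b.x-a.y*b.y) (a.x*b.y+a.y*b.x) 4294967296 (by norm_num)
  have r2 := rnd (a.x*b.u-a.y*b.v+a.u*b.x-a.v*b.y) (a.x*b.v+a.y*b.u+a.u*b.y+a.v*b.x) 4294967296 (by norm_num)
  have E : 4294967296*(p*q) - (cz (mul h a b).x (mul h a b).y + cz (mul h a b).u (mul h a b).v * δ) =
    (cz (a.x*b.x-a.y*b.y) (a.x*b.y+a.y*b.x) / (4294967296:ℤ) - cz ((a.x*b.x-a.y*b.y)/4294967296) ((a.x*b.y+a.y*b.x)/4294967296))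
    + (cz (a.x*b.u-a.y*b.v+a.u*b.x-a.v*b.y) (a.x*b.v+a.y*b.u+a.u*b.y+a.v*b.x) / (4294967296:ℤ) - cz ((a.x*b.u-a.y*b.v+a.u*b.x-a.v*b.y)/4294967296) ((a.x*b.v+a.y*b.u+a.u*b.y+a.v*b.x)/4294967296)) * δ
    + ((cz a.x a.y + cz a.u a.v * δ) * f + (cz b.x b.y + cz b.u b.v * δ) * e + e * f + (cz a.u a.v * δ) * (cz b.u b.v * δ)) / 4294967296 := by
    have hp : p = (e + (cz a.x a.y + cz a.u a.v * δ))/4294967296 := by rw [he]; ring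
    have hq : q = (f + (cz b.x b.y + cz b.u b.v * δ))/4294967296 := by rw [hf]; ring
    rw [hp, hq]
    clear_value e f
    simp only [mul]
    have c1 : cz (a.x*b.x-a.y*b.y) (a.x*b.y+a.y*b.x) = cz a.x a.y * cz b.x b.y := by
      simp only [cz]; push_cast; linear_combination (-(a.y:ℂ)*b.y) * I_sq
    have c2 : cz (a.x*b.u-a.y*b.v+a.u*b.x-a.v*b.y) (a.x*b.v+a.y*b.u+a.u*b.y+a.v*b.x) = cz a.x a.y * cz b.u b.v + cz a.u a.v * cz b.x b.y := by
      simp only [cz]; push_cast; linear_combination (-(a.y:ℂ)*b.v - a.v * b.y) * I_sq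
    rw [c1, c2]
    push_cast
    ring
  rw [E]
  have h3 := two_h hδ
  have k1 : ‖cz a.x a.y + cz a.u a.v * δ‖ ≤ nU a.x a.y + hU h a := (norm_add_le _ _).trans (add_le_add A0 A1)
  have k2 : ‖cz b.x b.y + cz b.u b.v * δ‖ ≤ nU b.x b.y + hU h b := (norm_add_le _ _).trans (add_le_add B0 B1)
  have k3 : ‖(cz a.x a.y + cz a.u a.v * δ) * f + (cz b.x b.y + cz b.u b.v * δ) * e + e * f + (cz a.u a.v * δ) * (cz b.u b.v * δ)‖
     ≤ (nU a.x a.y + hU h a) * b.r + (nU b.x b.y + hU h b) * a.r + a.r * b.r + hU h a * hU h b := by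
    refine (norm_add_le _ _).trans (add_le_add ((norm_add_le _ _).trans (add_le_add ((norm_add_le _ _).trans (add_le_add ?_ ?_)) ?_)) ?_)
    · rw [norm_mul]; exact mul_le_mul k1 hb (norm_nonneg _) ((norm_nonneg _).trans k1)
    · rw [norm_mul]; exact mul_le_mul k2 ha (norm_nonneg _) ((norm_nonneg _).trans k2)
    · rw [norm_mul]; exact mul_le_mul ha hb (norm_nonneg _) ((norm_nonneg _).trans ha)
    · rw [norm_mul]; exact mul_le_mul A1 B1 (norm_nonneg _) ((norm_nonneg _).trans A1)
  have k4 := le_fd ((nU a.x a.y + hU h a) * b.r + (nU b.x b.y + hU h b) * a.r + a.r*b.r + hU h a*hU h b) 4294967296 (by norm_num)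
  have k5 : ∀ X Y Z : ℂ, ‖X‖ ≤ 2 → ‖Y‖ ≤ 2 → ‖Z‖ ≤ (nU a.x a.y + hU h a) * b.r + (nU b.x b.y + hU h b) * a.r + a.r * b.r + hU h a * hU h b →
      ‖X + Y * δ + Z / 4294967296‖ ≤ ((mul h a b).r : ℝ) := by
    intro X Y Z hX hY hZ
    have hY' : ‖Y * δ‖ ≤ 2 * ‖δ‖ := by rw [norm_mul]; gcongr
    have hZ' : ‖Z / 4294967296‖ ≤ ((nU a.x a.y + hU h a) * b.r + (nU b.x b.y + hU h b) * a.r + a.r * b.r + hU h a * hU h b)/4294967296 := by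
      rw [norm_div]
      have : ‖(4294967296:ℂ)‖ = 4294967296 := by norm_num
      rw [this]; gcongr
    have := norm_add₃_le (a := X) (b := Y * δ) (c := Z / 4294967296)
    simp only [mul, frcI_eq]
    push_cast at k4 ⊢
    linarith
  exact k5 _ _ _ r1 r2 k3

variable {k : TM → Bool}

lemma mulK_s (hk : mulK h a b k = true) (hδ : ‖δ‖ * 4294967296 ≤ h) (ha : mem δ p a) (hb : mem δ q b) :
    ∃ m, mem δ (p*q) m ∧ k m = true := ⟨mul h a b, mem_mul hδ ha hb, by rwa [mulK, frc_eq] at hk⟩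

lemma frc_s (hk : frc a k = true) (ha : mem δ p a) : ∃ m, mem δ p m ∧ k m = true :=
  ⟨a, ha, by rwa [frc_eq] at hk⟩

lemma mem_exact (x y u v : ℤ) : mem δ ((cz x y + cz u v * δ)/4294967296) ⟨x,y,u,v,0⟩ := by
  rw [mem]
  simp only
  have : (4294967296:ℂ) * ((cz x y + cz u v * δ)/4294967296) - (cz x y + cz u v * δ) = 0 := by ring
  rw [this]; simp

lemma mem_widen {x y u v r : ℤ} (hq : ‖q - (cz x y + cz u v * δ)/4294967296‖ * 4294967296 ≤ r) :
    mem δ q ⟨x,y,u,v,r⟩ := by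
  rw [mem]; simp only
  have : (4294967296:ℂ) * q - (cz x y + cz u v * δ) = 4294967296 * (q - (cz x y + cz u v * δ)/4294967296) := by ring
  rw [this, norm_mul, mul_comm]
  convert hq using 2; norm_num

lemma quot_bound {e L : ℤ} {x y : ℝ} (hL : 0 < L) (hx : x * 4294967296 ≤ e) (hx0 : 0 ≤ x) (hy : (L:ℝ) ≤ y * 4294967296)
   : x / y * 4294967296 ≤ ((e * 4294967296 / L + 1 : ℤ):ℝ) := by
  have hL' : (0:ℝ) < L := by exact_mod_cast hL
  have hy0 : 0 < y := by nlinarith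
  have := le_fd (e * 4294967296) L hL
  push_cast at this ⊢
  refine le_trans ?_ this
  rw [div_mul_eq_mul_div, div_le_div_iff₀ hy0 hL']
  have he : (0:ℝ) ≤ e := le_trans (by positivity) hx
  calc x * 4294967296 * L ≤ e * (y * 4294967296) := by gcongr
    _ = _ := by ring

lemma div_aux (x y u v : ℤ) (hδ : ‖δ‖ * 4294967296 ≤ h) (ha : mem δ p a) (hb : mem δ q b)
    (hL : 0 < nL b.x b.y - hU h b - b.r) :
    mem δ (p/q) ⟨x,y,u,v, bd h (sub a (mul h ⟨x,y,u,v,0⟩ b)) * 4294967296 / (nL b.x b.y - hU h b - b.r) + 1⟩ := by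
  apply mem_widen
  have hm := mem_exact (δ := δ) x y u v
  have hd := mem_bd hδ (mem_sub ha (mem_mul hδ hm hb))
  have hl := lower hδ hb
  have hq0 : q ≠ 0 := by
    rintro rfl
    have : (0:ℝ) < ((nL b.x b.y - hU h b - b.r : ℤ):ℝ) := by exact_mod_cast hL
    simp only [norm_zero, zero_mul] at hl
    linarith
  have e : p / q - (cz x y + cz u v * δ)/4294967296 = (p - (cz x y + cz u v * δ)/4294967296 * q)/q := by
    field_simp
  rw [e, norm_div]
  exact quot_bound hL hd (norm_nonneg _) hl

lemma divK_s (hk : divK h a b k = true) (hδ : ‖δ‖ * 4294967296 ≤ h) (ha : mem δ p a) (hb : mem δ q b) :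
    ∃ m, mem δ (p/q) m ∧ k m = true := by
  simp only [divK, frcI_eq, subK, frc_eq] at hk
  split_ifs at hk with hL
  exact ⟨_, div_aux _ _ _ _ hδ ha hb hL, hk⟩

lemma sqrt_aux (x y u v : ℤ) (hδ : ‖δ‖ * 4294967296 ≤ h) (ha : mem δ (q^2) a) (hq : 0 < q.re)
    (hL : 0 < x - hU h ⟨x,y,u,v,0⟩) :
    mem δ q ⟨x,y,u,v, bd h (sub a (mul h ⟨x,y,u,v,0⟩ ⟨x,y,u,v,0⟩)) * 4294967296 / (x - hU h ⟨x,y,u,v,0⟩) + 1⟩ := by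
  apply mem_widen
  have hm := mem_exact (δ := δ) x y u v
  have hd := mem_bd hδ (mem_sub ha (mem_mul hδ hm hm))
  have hl := mem_lo hδ hm
  simp only [lo, sub_zero] at hl
  set m := (cz x y + cz u v * δ)/4294967296 with hmdef
  have hpos : (0:ℝ) < ((x - hU h ⟨x,y,u,v,0⟩ : ℤ):ℝ) := by exact_mod_cast hL
  have hl2 : ((x - hU h ⟨x,y,u,v,0⟩ : ℤ):ℝ) ≤ ‖q + m‖ * 4294967296 := by
    refine hl.trans ?_
    gcongr
    refine le_trans ?_ (re_le_norm _)
    rw [add_re]; linarith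
  have hq0 : q + m ≠ 0 := by
    intro h0
    rw [h0] at hl2; simp only [norm_zero, zero_mul] at hl2
    linarith
  have e : q - m = (q^2 - m * m)/(q+m) := by
    field_simp; ring
  rw [e, norm_div]
  exact quot_bound hL hd (norm_nonneg _) hl2

lemma sqrtK_s (hk : sqrtK h a k = true) (hδ : ‖δ‖ * 4294967296 ≤ h) (ha : mem δ (q^2) a) (hq : 0 < q.re) :
    ∃ m, mem δ q m ∧ k m = true := by
  simp only [sqrtK, frcI_eq, subK, frc_eq] at hk
  split_ifs at hk with hL
  exact ⟨_, sqrt_aux _ _ _ _ hδ ha hq hL, hk⟩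

lemma mem_qt (n : ℤ) : mem δ ((n:ℂ)/4) (qt n) := by
  rw [mem, qt]; simp only [cz]
  have : (4294967296:ℂ) * ((n:ℂ)/4) - (((n*1073741824:ℤ):ℂ) + ((0:ℤ):ℂ)*I + (((0:ℤ):ℂ)+((0:ℤ):ℂ)*I)*δ) = 0 := by
    push_cast; ring
  rw [this]; simp

lemma mem_fat {d : ℂ} {r : ℤ} (ha : mem δ p a) (hd : ‖d‖ * 4294967296 ≤ r) : mem δ (p + d) (fat a r) := by
  rw [mem] at *
  simp only [fat]
  have e : 4294967296*(p+d) - (cz a.x a.y + cz a.u a.v * δ) =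
    (4294967296*p - (cz a.x a.y + cz a.u a.v * δ)) + d * 4294967296 := by ring
  rw [e]
  refine (norm_add_le _ _).trans ?_
  push_cast
  refine add_le_add ha ?_
  have : ‖(4294967296:ℂ)‖ = 4294967296 := by norm_num
  rw [norm_mul, this]; exact hd

lemma mem_disc {d : ℂ} {r : ℤ} (hd : ‖d‖ * 4294967296 ≤ r) : mem δ d (disc r) := by
  rw [mem, disc]; simp only [cz]
  simp only [Int.cast_zero, zero_mul, add_zero, sub_zero]
  rw [norm_mul, mul_comm]; convert hd using 2; norm_num

lemma mem_real {c : ℝ} {x r : ℤ} (h1 : (x:ℝ) - r ≤ 4294967296 * c) (h2 : 4294967296 * c ≤ x + r) :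
    mem δ (c:ℂ) ⟨x,0,0,0,r⟩ := by
  rw [mem]; simp only [cz]
  simp only [Int.cast_zero, zero_mul, add_zero]
  have : (4294967296:ℂ) * c - (x:ℂ) = ((4294967296 * c - x : ℝ):ℂ) := by push_cast; ring
  rw [this, norm_real, Real.norm_eq_abs, abs_le]
  constructor <;> linarith

lemma mem_sv (t : ℤ) (s : ℂ) : mem (s - (1/2 + (t:ℂ)/4294967296 * I)) s (sv t) := by
  rw [mem, sv]; simp only [cz]
  have : (4294967296:ℂ) * s - (((2147483648:ℤ):ℂ) + (t:ℂ)*I + (((4294967296:ℤ):ℂ)+((0:ℤ):ℂ)*I)*(s - (1/2 + (t:ℂ)/4294967296 * I))) = 0 := by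
    push_cast; ring
  rw [this]; simp

lemma mem_pi : mem δ (Real.pi:ℂ) pi := by
  have := Real.pi_gt_d20
  have := Real.pi_lt_d20
  apply mem_real <;> push_cast <;> linarith
lemma mem_lg2 : mem δ (Real.log 2:ℂ) lg2 := by
  have h1 := Real.log_two_gt_d9
  have h2 := Real.log_two_lt_d9
  have := mem_real (δ := δ) (c := Real.log 2) (x := 2977044472) (r := 2) (by push_cast; linarith) (by push_cast; linarith)
  exact this
lemma mem_lg3 : mem δ (Real.log 3:ℂ) lg3 := by
  have h1 := Real.log_three_gt_d9
  have h2 := Real.log_three_lt_d9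
  have := mem_real (δ := δ) (c := Real.log 3) (x := 4718503851) (r := 2) (by push_cast; linarith) (by push_cast; linarith)
  exact this
lemma mem_rt2 : mem δ (((Real.sqrt (1/2):ℝ)):ℂ) rt2 := by
  apply mem_real
  · have : (3037000498/4294967296:ℝ) ≤ Real.sqrt (1/2) := Real.le_sqrt_of_sq_le (by norm_num)
    push_cast; linarith
  · have : Real.sqrt (1/2) ≤ (3037000502/4294967296:ℝ) := Real.sqrt_le_iff.mpr (by norm_num)
    push_cast; linarith
lemma mem_rt3 : mem δ (((Real.sqrt (1/3):ℝ)):ℂ) rt3 := by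
  apply mem_real
  · have : (2479700523/4294967296:ℝ) ≤ Real.sqrt (1/3) := Real.le_sqrt_of_sq_le (by norm_num)
    push_cast; linarith
  · have : Real.sqrt (1/3) ≤ (2479700527/4294967296:ℝ) := Real.sqrt_le_iff.mpr (by norm_num)
    push_cast; linarith
end TM

end

section
namespace TM
variable {δ p q w s z : ℂ} {h : ℤ} {a b : TM} 

lemma mem_cast (ha : mem δ p a) (e : p = q) : mem δ q a := e ▸ ha

lemma mem_q (n : ℤ) {c : ℂ} (e : (n:ℂ)/4 = c := by norm_num) : mem δ c (qt n) := e ▸ mem_qt n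

lemma spi_re : 0 < spi.re ∧ spi.im = 0 := by
  rw [spi, show (1/2:ℂ) = ((1/2:ℝ):ℂ) by norm_num, ← ofReal_cpow Real.pi_pos.le]
  simp; positivity

lemma rfun_e {z : ℂ} (hz : 1/2 ≤ z.re) : ∃ e : ℂ, rG (z+5) ^ 2 = (z + 19/4) * (1 + e) ∧ ‖e‖ ≤ 0.0014 := by
  obtain ⟨e, h1, h2⟩ := rG_sq (z := z+5) (by simp; linarith)
  refine ⟨e, by rw [h1]; ring, h2.trans ?_⟩
  have hre : (z+5).re = z.re + 5 := by simp
  have hx : 1 / (32 * ((z+5).re - 3/4)^2) ≤ (1/722:ℝ) := by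
    rw [hre]; rw [div_le_div_iff₀ (by nlinarith) (by norm_num)]
    nlinarith
  have := Real.exp_bound' (x := 1/722) (by norm_num) (by norm_num) (n := 2) (by norm_num)
  simp [Finset.sum_range_succ] at this
  have h3 := Real.exp_le_exp.mpr hx
  have h4 : Real.exp (1 / (32 * ((z+5).re - 3/4)^2)) - 1 ≤ 2088027 / 2085136 - 1 := by
    have h5 : Real.exp (1/722) ≤ 2088027 / 2085136 := by norm_num at this ⊢; exact this
    linarith
  refine h4.trans (by norm_num)

lemma rG_shift5 {z : ℂ} (hz : 1/2 ≤ z.re) : rG z = rG (z+5) * (((((z+4)*((z+3)*((z+2)*((z+1)*z))))) / 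
   ((((z+1/2)*(z+3/2))*(z+5/2))*(z+7/2)*(z+9/2)))) := by
  rw [rG_shift (z := z) (by linarith), rG_shift (z := z+1) (by simp; linarith), rG_shift (z := z+1+1) (by simp; linarith)
   , rG_shift (z := z+1+1+1) (by simp; linarith), rG_shift (z := z+1+1+1+1) (by simp; linarith)]
  rw [show z + 1 + 1/2 = z + 3/2 by ring, show z + 1 + 1 + 1/2 = z + 5/2 by ring, show z + 1 + 1 + 1 + 1/2 = z + 7/2 by ring,
    show z + 1 + 1 + 1 + 1 + 1/2 = z + 9/2 by ring, show z + 1 + 1 + 1 + 1 + 1 = z + 5 by ring]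
  rw [show z + 1 + 1 + 1 + 1 = z + 4 by ring, show z + 1 + 1 + 1 = z + 3 by ring, show z + 1 + 1 = z + 2 by ring]
  generalize z+1/2 = b1 at *
  generalize z+3/2 = b2 at *
  generalize z+5/2 = b3 at *
  generalize z+7/2 = b4 at *
  generalize z+9/2 = b5 at *
  generalize z+1 = c1 at *
  generalize z+2 = c2 at *
  generalize z+3 = c3 at *
  generalize z+4 = c4 at *
  ring

lemma rfunK_s {k : TM → Bool} (hk : rfunK h a k = true) (hδ : ‖δ‖ * 4294967296 ≤ h) (ha : mem δ z a) (hz : 1/2 ≤ z.re) :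
    ∃ m, mem δ (spi * rG z) m ∧ k m = true := by
  unfold rfunK at hk
  obtain ⟨q1, hq1, hk⟩ := mulK_s hk hδ mem_pi (mem_add ha (mem_q 19 (c := 19/4)))
  obtain ⟨e, he1, he2⟩ := rfun_e hz
  have hb := mem_bd hδ hq1
  have hfat : ‖Real.pi * (z+19/4) * e‖ * 4294967296 ≤ ((bd h q1 * 6012955 / 4294967296 + 1 : ℤ):ℝ) := by
    have h1 := le_fd (bd h q1 * 6012955) 4294967296 (by norm_num)
    push_cast at h1 ⊢
    refine le_trans ?_ h1
    rw [norm_mul, le_div_iff₀ (by norm_num)]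
    have h0 := norm_nonneg (Real.pi * (z+19/4))
    have : ‖Real.pi * (z+19/4)‖ * ‖e‖ ≤ ‖Real.pi * (z+19/4)‖ * 0.0014 := by gcongr
    nlinarith
  obtain ⟨q2, hq2, hk⟩ := frc_s hk (mem_fat hq1 hfat)
  have hsq : (Real.pi * (z+19/4) + Real.pi * (z+19/4) * e : ℂ) = (spi * rG (z+5))^2 := by
    rw [mul_pow, spi_sq, he1]; ring
  rw [hsq] at hq2
  have hpos : 0 < (spi * rG (z+5)).re := by
    have := rG_re_pos (z := z+5) (by simp; linarith)
    rw [mul_re, spi_re.2, zero_mul, sub_zero]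
    exact mul_pos spi_re.1 this
  obtain ⟨q, hq, hk⟩ := sqrtK_s hk hδ hq2 hpos
  obtain ⟨q, hq, hk⟩ := mulK_s hk hδ ha hq
  obtain ⟨q, hq, hk⟩ := mulK_s hk hδ (mem_add ha (mem_q 4 (c := 1))) hq
  obtain ⟨q, hq, hk⟩ := mulK_s hk hδ (mem_add ha (mem_q 8 (c := 2))) hq
  obtain ⟨q, hq, hk⟩ := mulK_s hk hδ (mem_add ha (mem_q 12 (c := 3))) hq
  obtain ⟨q, hq, hk⟩ := mulK_s hk hδ (mem_add ha (mem_q 16 (c := 4))) hq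
  obtain ⟨p, hp, hk⟩ := mulK_s hk hδ (mem_add ha (mem_q 2 (c := 1/2))) (mem_add ha (mem_q 6 (c := 3/2)))
  obtain ⟨p, hp, hk⟩ := mulK_s hk hδ hp (mem_add ha (mem_q 10 (c := 5/2)))
  obtain ⟨p, hp, hk⟩ := mulK_s hk hδ hp (mem_add ha (mem_q 14 (c := 7/2)))
  obtain ⟨p, hp, hk⟩ := mulK_s hk hδ hp (mem_add ha (mem_q 18 (c := 9/2)))
  obtain ⟨m, hm, hk⟩ := divK_s hk hδ hq hp
  refine ⟨m, mem_cast hm ?_, hk⟩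
  rw [rG_shift5 hz]; ring

lemma expK_s {k : TM → Bool} {L : ℂ} (hk : expK h b a k = true) (hδ : ‖δ‖ * 4294967296 ≤ h) (ha : mem δ s a) (hb : mem δ L b) :
    ∃ m, mem δ (exp (-(s-1/2)*L)) m ∧ k m = true := by
  unfold expK at hk
  obtain ⟨x, hx, hk⟩ := mulK_s hk hδ (mem_sub ha (mem_q 2 (c := 1/2))) hb
  obtain ⟨x, hx, hk⟩ := frc_s hk (mem_dvd hδ (n := 64) (by norm_num) (mem_scl (-1) hx))
  rw [frcI_eq] at hk
  set X : ℂ := ((-1:ℤ):ℂ) * ((s-1/2)*L) / ((64:ℤ):ℂ) with hX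
  have hbd := mem_bd hδ hx
  split_ifs at hk with hB
  have hB' : ((bd h x : ℤ):ℝ) ≤ 4294967296 := by exact_mod_cast hB
  have hX1 : ‖X‖ ≤ 1 := by linarith
  obtain ⟨x2, hx2, hk⟩ := mulK_s hk hδ hx hx
  obtain ⟨x3, hx3, hk⟩ := mulK_s hk hδ hx2 hx
  obtain ⟨x4, hx4, hk⟩ := mulK_s hk hδ hx2 hx2
  have ht := Complex.exp_bound hX1 (n := 5) (by norm_num)
  set d := exp X - ∑ m ∈ Finset.range 5, X ^ m / m.factorial with hd
  have hdd : ‖d‖ * 4294967296 ≤ ((bd h x*bd h x*bd h x*bd h x*bd h x/34028236692093846346337460743176821145600 + 1 : ℤ):ℝ) := by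
    have h1 := le_fd (bd h x*bd h x*bd h x*bd h x*bd h x) 34028236692093846346337460743176821145600 (by norm_num)
    push_cast at h1 ⊢
    refine le_trans ?_ h1
    rw [le_div_iff₀ (by norm_num)]
    have h2 : (‖X‖ * 4294967296)^5 ≤ (bd h x:ℝ)^5 := by gcongr
    have h3 : ‖d‖ ≤ ‖X‖^5 * (1/100) := by
      refine ht.trans (le_of_eq ?_)
      norm_num [Nat.factorial]
    nlinarith
  obtain ⟨e, he, hk⟩ := frc_s hk (mem_fat (mem_add (mem_add (mem_add (mem_add (mem_q 4 (c := 1)) hx) 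
    (mem_dvd hδ (n := 2) (by norm_num) hx2)) (mem_dvd hδ (n := 6) (by norm_num) hx3)) (mem_dvd hδ (n := 24) (by norm_num) hx4)) hdd)
  have he := mem_cast (q := exp X) he (by
    rw [hd]; simp [Finset.sum_range_succ, Nat.factorial]; ring)
  obtain ⟨e, he, hk⟩ := mulK_s hk hδ he he
  obtain ⟨e, he, hk⟩ := mulK_s hk hδ he he
  obtain ⟨e, he, hk⟩ := mulK_s hk hδ he he
  obtain ⟨e, he, hk⟩ := mulK_s hk hδ he he
  obtain ⟨e, he, hk⟩ := mulK_s hk hδ he he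
  obtain ⟨e, he, hk⟩ := mulK_s hk hδ he he
  refine ⟨e, mem_cast he ?_, hk⟩
  simp only [← Complex.exp_add]
  congr 1
  rw [hX]; push_cast; ring

lemma remK_s {k : ℤ → Bool} {cn : ℤ} (hk : remK h a cn k = true) (hδ : ‖δ‖ * 4294967296 ≤ h) (ha : mem δ w a) (hc : 0 ≤ cn) :
    ∃ r : ℤ, ‖w*(w+1)*(w+2)‖ * (cn/1000000) * 4294967296 ≤ r ∧ k r = true := by
  unfold remK at hk
  obtain ⟨v, hv, hk⟩ := mulK_s hk hδ ha (mem_add ha (mem_q 4 (c := 1)))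
  obtain ⟨v, hv, hk⟩ := mulK_s hk hδ hv (mem_add ha (mem_q 8 (c := 2)))
  rw [frcI_eq] at hk
  refine ⟨_, ?_, hk⟩
  have h1 := le_fd (bd h v * cn) 1000000 (by norm_num)
  have h2 := mem_bd hδ hv
  push_cast at h1 ⊢
  refine le_trans ?_ h1
  rw [le_div_iff₀ (by norm_num)]
  have : (0:ℝ) ≤ cn := by exact_mod_cast hc
  nlinarith

lemma EM4 {cn : ℝ} (hw : -2 < w.re) (hc : 0.008019 * ((4:ℝ)^(-w.re-2)/(w.re+2)) ≤ cn) : 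
    ∃ R : ℂ, ‖R‖ ≤ ‖w*(w+1)*(w+2)‖ * cn ∧ 
     etz w = (w-1)*(1 + (2:ℂ)^(-w) + (3:ℂ)^(-w) + (4:ℂ)^(-w)*(1/2+w/48) + R) + 4*(4:ℂ)^(-w) := by
  refine ⟨-(w*(w+1)*(w+2)/6 * Jr 4 w), ?_, ?_⟩
  · have := Jr_bound (N := 4) (w := w) (by norm_num) hw
    rw [norm_neg, norm_mul, norm_div]
    push_cast at this
    have h6 : ‖(6:ℂ)‖ = 6 := by norm_num
    rw [h6]
    have h0 := norm_nonneg (w*(w+1)*(w+2))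
    calc _ ≤ ‖w*(w+1)*(w+2)‖/6 * (0.048114*((4:ℝ)^(-w.re-2)/(w.re+2))) := by gcongr
      _ = ‖w*(w+1)*(w+2)‖ * (0.008019 * ((4:ℝ)^(-w.re-2)/(w.re+2))) := by ring
      _ ≤ _ := by gcongr
  · rw [etz_EM (N := 4) (by norm_num) hw]
    have e1 : (4:ℂ)^(1-w) = 4 * (4:ℂ)^(-w) := by
      rw [sub_eq_add_neg, cpow_add _ _ (by norm_num), cpow_one]
    have e2 : (4:ℂ)^(-w-1) = (4:ℂ)^(-w)/4 := by
      rw [cpow_sub _ _ (by norm_num), cpow_one]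
    have e3 : Finset.Ico 1 4 = {1,2,3} := by decide
    rw [e3]
    push_cast
    rw [e1, e2]
    simp
    ring

lemma etaK_s {k : TM → Bool} {A2 A3 A4 : TM} {cn : ℤ} (hk : etaK h a A2 A3 A4 cn k = true) (hδ : ‖δ‖ * 4294967296 ≤ h) (ha : mem δ w a) 
    (h2 : mem δ ((2:ℂ)^(-w)) A2) (h3 : mem δ ((3:ℂ)^(-w)) A3) (h4 : mem δ ((4:ℂ)^(-w)) A4) (hc : 0 ≤ cn)
    (hw : -2 < w.re) (hcn : 0.008019 * ((4:ℝ)^(-w.re-2)/(w.re+2)) ≤ cn/1000000) :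
    ∃ m, mem δ (etz w) m ∧ k m = true := by
  unfold etaK subK at hk
  obtain ⟨w1, hw1, hk⟩ := frc_s hk (mem_sub ha (mem_q 4 (c := 1)))
  obtain ⟨r, hr, hk⟩ := remK_s hk hδ ha hc
  obtain ⟨m, hm, hk⟩ := mulK_s hk hδ h4 (mem_add (mem_q 2 (c := 1/2)) (mem_dvd hδ (n := 48) (by norm_num) ha))
  obtain ⟨R, hR, he⟩ := EM4 hw hcn
  obtain ⟨m, hm, hk⟩ := mulK_s hk hδ hw1 (mem_fat (mem_add (mem_add (mem_add (mem_q 4 (c := 1)) h2) h3) hm) 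
     (d := R) (le_trans (by gcongr) hr))
  obtain ⟨m, hm, hk⟩ := frc_s hk (mem_add hm (mem_scl 4 h4))
  refine ⟨m, mem_cast hm ?_, hk⟩
  rw [he]; push_cast; ring

lemma zetK_s {k : TM → Bool} {A2 A3 A4 : TM} {cn : ℤ} (hk : zetK h a A2 A3 A4 cn k = true) (hδ : ‖δ‖ * 4294967296 ≤ h) (ha : mem δ w a) 
    (h2 : mem δ ((2:ℂ)^(-w)) A2) (h3 : mem δ ((3:ℂ)^(-w)) A3) (h4 : mem δ ((4:ℂ)^(-w)) A4) (hc : 0 ≤ cn)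
    (hw : -2 < w.re) (hcn : 0.008019 * ((4:ℝ)^(-w.re-2)/(w.re+2)) ≤ cn/1000000) (w0 : w ≠ 0) (w1 : w ≠ 1) :
    ∃ m, mem δ (riemannZeta w) m ∧ k m = true := by
  unfold zetK at hk
  obtain ⟨m1, hm1, hk⟩ := divK_s hk hδ (mem_q 16 (c := 4)) (mem_sub ha (mem_q 4 (c := 1)))
  obtain ⟨r, hr, hk⟩ := remK_s hk hδ ha hc
  obtain ⟨m, hm, hk⟩ := mulK_s hk hδ h4 (mem_add (mem_add (mem_q 2 (c := 1/2)) (mem_dvd hδ (n := 48) (by norm_num) ha)) hm1)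
  obtain ⟨R, hR, he⟩ := EM4 hw hcn
  obtain ⟨m, hm, hk⟩ := frc_s hk (mem_fat (mem_add (mem_add (mem_add (mem_q 4 (c := 1)) h2) h3) hm) 
     (d := R) (le_trans (by gcongr) hr))
  refine ⟨m, mem_cast hm ?_, hk⟩
  rw [etz_eq w0 w1] at he
  have hne : w - 1 ≠ 0 := sub_ne_zero.mpr w1
  apply mul_left_cancel₀ hne
  rw [he]; push_cast; field_simp; ring
end TM

end

section

noncomputable def Pv2 (s : ℂ) : ℂ := A*s + (3-A) - 3/s
noncomputable def Pv1 (s : ℂ) : ℂ := (10/(s+2) - 2) * (Real.pi / (spi * rG ((s+1)/2)))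
noncomputable def Pv0 (s : ℂ) : ℂ := -2*(Real.pi/s) * (1 - 4/(s+1) - ac*(1 + Kq s)/(s+2))

lemma spi_ne : spi ≠ 0 := by
  intro h
  have := spi_sq
  rw [h] at this
  simp at this
  exact Real.pi_ne_zero (by exact_mod_cast this.symm)

lemma ff_P {s : ℂ} (hs : 1/2 ≤ s.re) (hs1 : s ≠ 1) :
    ff s = (Pv0 s * riemannZeta s + Pv1 s * riemannZeta (s+1) + Pv2 s * riemannZeta (s+2))/(s+1) := by
  have nz : ∀ c : ℝ, 0 ≤ c → s + (c:ℂ) ≠ 0 := by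
    intro c hc h0
    have := congrArg Complex.re h0
    simp at this; linarith
  have n0 : s ≠ 0 := by have := nz 0 le_rfl; simpa using this
  have n1 : s + 1 ≠ 0 := by have := nz 1 (by norm_num); simpa using this
  have n2 : s + 2 ≠ 0 := by have := nz 2 (by norm_num); simpa using this
  rw [ff_eq hs hs1]
  congr 1
  have a0 : - (2*Real.pi/s*((s-3)/(s+1) - ac*(1 + Kq s)/(s+2))) = Pv0 s := by
    rw [Pv0, show (s-3)/(s+1) = 1 - 4/(s+1) by field_simp; ring]; ring
  have a1 : - (2*(s-3)/(s+2)*spi*GG s) = Pv1 s := by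
    rw [Pv1, GG, show (10/(s+2) - 2) = -(2*(s-3)/(s+2)) by field_simp; ring, ← spi_sq]
    have : rG ((s+1)/2) ≠ 0 := rG_ne (by simp; linarith)
    have := spi_ne
    field_simp
  have a2 : (A*s+3)*(s-1)/s = Pv2 s := by
    rw [Pv2]; field_simp; ring
  rw [← a0, ← a1, ← a2]; ring

lemma re_quarter {s : ℂ} (hs : s.re = 1/2) : s ≠ 1 := by
  rintro rfl; norm_num at hs

namespace TM
variable {δ p q w s z : ℂ} {h : ℤ} {a b : TM} 

lemma npw {n : ℕ} (hn : n ≠ 0) (x : ℂ) : (n:ℂ)^x = exp ((Real.log n:ℂ) * x) := by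
  rw [cpow_def_of_ne_zero (by exact_mod_cast hn), ← natCast_log]

lemma npw_half {n : ℕ} (hn : n ≠ 0) : ((Real.sqrt (1/n):ℝ):ℂ) = exp (-(Real.log n:ℂ)/2) := by
  have hn' : (0:ℝ) < n := by exact_mod_cast Nat.pos_of_ne_zero hn
  rw [show (-(Real.log n:ℂ)/2) = ((-(Real.log n)/2:ℝ):ℂ) by push_cast; ring, ← ofReal_exp]
  congr 1
  rw [Real.sqrt_eq_rpow, Real.rpow_def_of_pos (by positivity)]
  congr 1
  rw [one_div, Real.log_inv]; ring

lemma pw1 {n : ℕ} (hn : n ≠ 0) : (n:ℂ)^(-s) = exp (-(s-1/2)*(Real.log n:ℂ)) * ((Real.sqrt (1/n):ℝ):ℂ) := by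
  rw [npw hn, npw_half hn, ← Complex.exp_add]; congr 1; ring

lemma pw2 {n : ℕ} (hn : n ≠ 0) : (n:ℂ)^(-(2*s-1)) = exp (-(s-1/2)*(Real.log n:ℂ)) * exp (-(s-1/2)*(Real.log n:ℂ)) := by
  rw [npw hn, ← Complex.exp_add]; congr 1; ring

lemma pw3 {c : ℂ} (hc : c ≠ 0) : c^(-(w+1)) = c^(-w)/c := by
  rw [show -(w+1) = -w-1 by ring, cpow_sub _ _ hc, cpow_one]

lemma pw4 : (4:ℂ)^w = (2:ℂ)^w * (2:ℂ)^w := by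
  have h1 := npw (n := 4) (by norm_num) w
  have h2 := npw (n := 2) (by norm_num) w
  push_cast at h1 h2
  rw [h1, h2, ← Complex.exp_add]
  congr 1
  rw [show (4:ℝ) = 2^2 by norm_num, Real.log_pow]; push_cast; ring

lemma r4 (c : ℝ) (n : ℕ) (h : c = -(n:ℝ)/2) : (4:ℝ)^c = (1/2)^n := by
  rw [h, show (4:ℝ) = 2^(2:ℝ) by norm_num, ← Real.rpow_mul (by norm_num), show 2 * (-(n:ℝ)/2) = -n by ring,
   Real.rpow_neg (by norm_num), Real.rpow_natCast]; simp

lemma KfK_s {k : TM → Bool} {E F : TM} (hk : KfK h a E F k = true) (hδ : ‖δ‖ * 4294967296 ≤ h) (ha : mem δ s a) (hs : s.re = 1/2)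
    (hE : mem δ (exp (-(s-1/2)*(Real.log 2:ℂ))) E) (hF : mem δ (exp (-(s-1/2)*(Real.log 3:ℂ))) F) :
    ∃ m, mem δ (Kq s) m ∧ k m = true := by
  unfold KfK at hk
  have p2 := pw2 (s := s) (n := 2) (by norm_num)
  have p3 := pw2 (s := s) (n := 3) (by norm_num)
  push_cast at p2 p3
  obtain ⟨EE, hEE, hk⟩ := mulK_s hk hδ hE hE
  obtain ⟨FF, hFF, hk⟩ := mulK_s hk hδ hF hF
  obtain ⟨E4, hE4, hk⟩ := mulK_s hk hδ hEE hEE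
  rw [← p2] at hEE hE4
  rw [← p3] at hFF
  rw [← pw4] at hE4
  have r1 : (2*s-1).re = 0 := by simp [hs]
  have r2 : (2*s).re = 1 := by simp [hs]
  have ha2 : mem δ (2*s) (scl 2 a) := by simpa using mem_scl 2 ha
  obtain ⟨p, hp, hk⟩ := etaK_s hk hδ (mem_sub ha2 (mem_q 4 (c := 1))) hEE hFF hE4 (by norm_num) (by rw [r1]; norm_num)
    (by rw [r1, r4 _ 4 (by norm_num)]; norm_num)
  have e : ∀ c : ℂ, c ≠ 0 → c^(-(2*s-1))/c = c^(-(2*s)) := by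
    intro c hc
    rw [← pw3 hc]; congr 1; ring
  have hEE := mem_cast (mem_dvd hδ (n := 2) (by norm_num) hEE) (by push_cast; exact e 2 (by norm_num))
  have hFF := mem_cast (mem_dvd hδ (n := 3) (by norm_num) hFF) (by push_cast; exact e 3 (by norm_num))
  have hE4 := mem_cast (mem_dvd hδ (n := 4) (by norm_num) hE4) (by push_cast; exact e 4 (by norm_num))
  obtain ⟨q, hq, hk⟩ := etaK_s hk hδ ha2 hEE hFF hE4 (by norm_num) (by rw [r2]; norm_num)
    (by rw [r2, r4 _ 6 (by norm_num)]; norm_num)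
  obtain ⟨g, hg, hk⟩ := rfunK_s hk hδ ha hs.ge
  obtain ⟨p, hp, hk⟩ := mulK_s hk hδ hg hp
  obtain ⟨q, hq, hk⟩ := mulK_s hk hδ ha hq
  obtain ⟨m, hm, hk⟩ := divK_s hk hδ hp hq
  exact ⟨m, mem_cast hm (by rw [Kq_eq hs.ge, spi]), hk⟩

lemma PPK_s {k : TM → TM → TM → Bool} (hk : PPK h a b k = true) (hδ : ‖δ‖ * 4294967296 ≤ h) (ha : mem δ s a) (hs : s.re = 1/2)
    (hb : mem δ (Kq s) b) :
    ∃ m2 m1 m0, mem δ (Pv2 s) m2 ∧ mem δ (Pv1 s) m1 ∧ mem δ (Pv0 s) m0 ∧ k m2 m1 m0 = true := by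
  unfold PPK at hk
  obtain ⟨g, hg, hk⟩ := rfunK_s hk hδ (mem_dvd hδ (n := 2) (by norm_num) (mem_add ha (mem_q 4 (c := 1)))) (by 
    push_cast; simp [hs]; norm_num)
  obtain ⟨q, hq, hk⟩ := divK_s hk hδ mem_pi hg
  obtain ⟨i0, hi0, hk⟩ := divK_s hk hδ (mem_q 12 (c := 3)) ha
  obtain ⟨AA, hAA, hk⟩ := frc_s hk (mem_dvd hδ (n := 3) (by norm_num) (mem_sub mem_pi (mem_q 12 (c := 3))))
  have hAA := mem_cast (q := A) hAA (by rw [A]; push_cast; ring)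
  obtain ⟨As, hAs, hk⟩ := mulK_s hk hδ hAA ha
  obtain ⟨P2, hP2, hk⟩ := frc_s hk (mem_sub (mem_add hAs (mem_sub (mem_q 12 (c := 3)) hAA)) hi0)
  obtain ⟨s2, hs2, hk⟩ := frc_s hk (mem_add ha (mem_q 8 (c := 2)))
  obtain ⟨i2, hi2, hk⟩ := divK_s hk hδ (mem_q 40 (c := 10)) hs2
  obtain ⟨P1, hP1, hk⟩ := mulK_s hk hδ (mem_sub hi2 (mem_q 8 (c := 2))) hq
  obtain ⟨ac', hac, hk⟩ := divK_s hk hδ (mem_scl (-3) mem_pi) (mem_add mem_pi (mem_q 12 (c := 3)))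
  have hac := mem_cast (q := ac) hac (by rw [ac]; push_cast; ring)
  obtain ⟨aK, haK, hk⟩ := mulK_s hk hδ hac (mem_add (mem_q 4 (c := 1)) hb)
  obtain ⟨aK, haK, hk⟩ := divK_s hk hδ haK hs2
  obtain ⟨i1, hi1, hk⟩ := divK_s hk hδ (mem_q 16 (c := 4)) (mem_add ha (mem_q 4 (c := 1)))
  obtain ⟨ps, hps, hk⟩ := divK_s hk hδ mem_pi ha
  obtain ⟨P0, hP0, hk⟩ := mulK_s hk hδ (mem_scl (-2) hps) (mem_sub (mem_sub (mem_q 4 (c := 1)) hi1) haK)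
  refine ⟨P2, P1, P0, hP2, mem_cast hP1 ?_, mem_cast hP0 ?_, hk⟩
  · rw [Pv1]; push_cast; rfl
  · rw [Pv0]; push_cast; rfl

lemma gAK_s {t : ℤ} {useK : Bool} (hk : gAK h t useK = true) (hs : s.re = 1/2) 
   (hδ : ‖s - (1/2 + (t:ℂ)/4294967296 * I)‖ * 4294967296 ≤ h) : 0.0009 ≤ (ff s).re := by
  unfold gAK at hk
  have ha := mem_sv t s
  generalize s - (1/2 + (t:ℂ)/4294967296 * I) = δ at *
  obtain ⟨a, ha, hk⟩ := frc_s hk ha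
  obtain ⟨E, hE, hk⟩ := expK_s hk hδ ha mem_lg2
  obtain ⟨F, hF, hk⟩ := expK_s hk hδ ha mem_lg3
  have hK : ∃ m, mem δ (Kq s) m ∧ (PPK h a m fun P2 P1 P0 =>
    mulK h E rt2 fun A2 =>
    mulK h F rt3 fun A3 =>
    mulK h A2 A2 fun A4 =>
    zetK h a A2 A3 A4 101 fun z0 =>
    zetK h (add a (qt 4)) (dvd h 2 A2) (dvd h 3 A3) (dvd h 4 A4) 18 fun z1 =>
    zetK h (add a (qt 8)) (dvd h 4 A2) (dvd h 9 A3) (dvd h 16 A4) 4 fun z2 =>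
    mulK h P0 z0 fun q0 =>
    mulK h P1 z1 fun q1 =>
    mulK h P2 z2 fun q2 =>
    divK h (add (add q0 q1) q2) (add a (qt 4)) fun g =>
    decide (4294967 ≤ lo h g)) = true := by
    cases useK with
    | true => exact KfK_s hk hδ ha hs hE hF
    | false => exact ⟨_, mem_disc (by rw [Kq_line hs]; norm_num), hk⟩
  clear hk
  obtain ⟨K, hK, hk⟩ := hK
  obtain ⟨P2, P1, P0, hP2, hP1, hP0, hk⟩ := PPK_s hk hδ ha hs hK
  obtain ⟨A2, hA2, hk⟩ := mulK_s hk hδ hE mem_rt2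
  obtain ⟨A3, hA3, hk⟩ := mulK_s hk hδ hF mem_rt3
  obtain ⟨A4, hA4, hk⟩ := mulK_s hk hδ hA2 hA2
  have p2 := pw1 (s := s) (n := 2) (by norm_num)
  have p3 := pw1 (s := s) (n := 3) (by norm_num)
  push_cast at p2 p3 hA2 hA3 hA4
  rw [← p2] at hA2 hA4
  rw [← p3] at hA3
  rw [← pw4] at hA4
  have n0 : s ≠ 0 := by rintro rfl; norm_num at hs
  have n0' : s ≠ 1 := by rintro rfl; norm_num at hs
  have n1 : s+1 ≠ 0 := by intro h0; have := congrArg re h0; simp [hs] at this; norm_num at this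
  have n1' : s+1 ≠ 1 := by intro h0; have := congrArg re h0; simp [hs] at this
  have n2 : s+2 ≠ 0 := by intro h0; have := congrArg re h0; simp [hs] at this; norm_num at this
  have n2' : s+2 ≠ 1 := by intro h0; have := congrArg re h0; simp [hs] at this; norm_num at this
  have r1 : (s+1).re = 3/2 := by simp [hs]; norm_num
  have r2 : (s+2).re = 5/2 := by simp [hs]; norm_num
  obtain ⟨z0, hz0, hk⟩ := zetK_s hk hδ ha hA2 hA3 hA4 (by norm_num) (by rw [hs]; norm_num)
    (by rw [hs, r4 _ 5 (by norm_num)]; norm_num) n0 n0'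
  have e1 : ∀ c : ℂ, c ≠ 0 → c^(-s)/c = c^(-(s+1)) := by
    intro c hc
    rw [← pw3 hc]
  have e2 : ∀ c : ℂ, c ≠ 0 → c^(-s)/(c*c) = c^(-(s+2)) := by
    intro c hc
    rw [show s+2 = (s+1)+1 by ring, pw3 hc, pw3 hc, div_div]
  obtain ⟨z1, hz1, hk⟩ := zetK_s hk hδ (mem_add ha (mem_q 4 (c := 1)))
    (mem_cast (mem_dvd hδ (n := 2) (by norm_num) hA2) (by push_cast; exact e1 2 (by norm_num)))
    (mem_cast (mem_dvd hδ (n := 3) (by norm_num) hA3) (by push_cast; exact e1 3 (by norm_num)))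
    (mem_cast (mem_dvd hδ (n := 4) (by norm_num) hA4) (by push_cast; exact e1 4 (by norm_num)))
    (by norm_num) (by rw [r1]; norm_num)
    (by rw [r1, r4 _ 7 (by norm_num)]; norm_num) n1 n1'
  obtain ⟨z2, hz2, hk⟩ := zetK_s hk hδ (mem_add ha (mem_q 8 (c := 2)))
    (mem_cast (mem_dvd hδ (n := 4) (by norm_num) hA2) (by rw [← e2 2 (by norm_num)]; push_cast; norm_num))
    (mem_cast (mem_dvd hδ (n := 9) (by norm_num) hA3) (by rw [← e2 3 (by norm_num)]; push_cast; norm_num))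
    (mem_cast (mem_dvd hδ (n := 16) (by norm_num) hA4) (by rw [← e2 4 (by norm_num)]; push_cast; norm_num))
    (by norm_num) (by rw [r2]; norm_num)
    (by rw [r2, r4 _ 9 (by norm_num)]; norm_num) n2 n2'
  obtain ⟨q0, hq0, hk⟩ := mulK_s hk hδ hP0 hz0
  obtain ⟨q1, hq1, hk⟩ := mulK_s hk hδ hP1 hz1
  obtain ⟨q2, hq2, hk⟩ := mulK_s hk hδ hP2 hz2
  obtain ⟨g, hg, hk⟩ := divK_s hk hδ (mem_add (mem_add hq0 hq1) hq2) (mem_add ha (mem_q 4 (c := 1)))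
  rw [← ff_P hs.ge n0'] at hg
  have := mem_lo hδ hg
  have hl : (4294967:ℝ) ≤ lo h g := by exact_mod_cast of_decide_eq_true hk
  linarith
end TM

end

section
namespace TM

def isq (n : ℤ) : ℤ :=
  frcI (18446744073709551616/n+1) fun m =>
  frcI ((1431655765 + m/1431655765)/2) fun c =>
  frcI ((c + m/c)/2) fun c =>
  frcI ((c + m/c)/2) fun c =>
  if 0 < c then (c + m/c)/2+1 else 4294967296

def cB (h : ℤ) (P0 P1 P2 : TM) (n : ℤ) : TM := add (add P0 (dvd h n P1)) (dvd h (n*n) P2)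

def sumB (h : ℤ) (P0 P1 P2 : TM) : ℕ → ℕ → ℤ → (ℤ → Bool) → Bool
  | 0, _, acc, k => k acc
  | m+1, n, acc, k => frcI (acc + (isq (Int.ofNat n) * bd h (cB h P0 P1 P2 (Int.ofNat n)) / 4294967296 + 1)) fun acc =>
     frcN (n+1) fun n => sumB h P0 P1 P2 m n acc k

def lfK (h : ℤ) (w : TM) (N : ℤ) (k : TM → Bool) : Bool :=
  divK h (qt (4*N)) (sub w (qt 4)) fun q =>
  frc (add (add q (qt 2)) (dvd h (12*N) w)) k

def gBK (h t : ℤ) (M : ℕ) : Bool :=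
  frcI (Int.ofNat (M+2)) fun N =>
  frc (sv t) fun s =>
  PPK h s (disc 4294967296) fun P2 P1 P0 =>
  sumB h P0 P1 P2 M 2 0 fun acc =>
  lfK h s N fun l0 =>
  lfK h (add s (qt 4)) N fun l1 =>
  lfK h (add s (qt 8)) N fun l2 =>
  mulK h P0 l0 fun d0 =>
  mulK h P1 l1 fun d1 =>
  mulK h P2 l2 fun d2 =>
  frc (cB h d0 d1 d2 N) fun d =>
  remK h s 16038 fun r0 =>
  remK h (add s (qt 4)) 16038 fun r1 =>
  remK h (add s (qt 8)) 16038 fun r2 =>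
  frcI (bd h P0 * r0 / (5*N*N) + 1) fun r0 =>
  frcI (bd h P1 * r1 / (7*N*N*N) + 1) fun r1 =>
  frcI (bd h P2 * r2 / (9*N*N*N*N) + 1) fun r2 =>
  frcI (isq N) fun iN =>
  frcI (acc + (iN * bd h d / 4294967296 + 1) + (iN * ((r0+r1+r2)/4294967296+1)/4294967296+1)) fun tot =>
  divK h (fat (add (add P0 P1) P2) tot) (add s (qt 4)) fun g =>
  decide (4294967 ≤ lo h g)

def chkB (t : ℤ) : List (ℤ × ℕ) → ℤ → Bool
  | [], T => decide (T ≤ t)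
  | (h, M) :: l, T => (gBK h (t+h) M) && frcI (t + 2*h) fun t => chkB t l T
def chkA (b : Bool) (t : ℤ) : List ℤ → ℤ → Bool
  | [], T => decide (T ≤ t)
  | h :: l, T => (gAK h (t+h) b) && frcI (t + 2*h) fun t => chkA b t l T
end TM

end

section

lemma EMN {w : ℂ} {N : ℕ} (hN : 1 ≤ N) (hw : -2 < w.re) (w0 : w ≠ 0) (w1 : w ≠ 1) :
    ∃ R : ℂ, ‖R‖ ≤ ‖w*(w+1)*(w+2)‖ * (0.008019 * ((N:ℝ)^(-w.re-2)/(w.re+2))) ∧ 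
     riemannZeta w = ∑ n ∈ Finset.Ico 1 N, (n:ℂ)^(-w) + (N:ℂ)^(-w) * (N/(w-1) + 1/2 + w/(12*N)) + R := by
  have hN' : (N:ℂ) ≠ 0 := by exact_mod_cast (by omega : N ≠ 0)
  refine ⟨-(w*(w+1)*(w+2)/6 * Jr N w), ?_, ?_⟩
  · have := Jr_bound (N := N) (w := w) hN hw
    rw [norm_neg, norm_mul, norm_div]
    have h6 : ‖(6:ℂ)‖ = 6 := by norm_num
    rw [h6]
    have h0 := norm_nonneg (w*(w+1)*(w+2))
    calc _ ≤ ‖w*(w+1)*(w+2)‖/6 * (0.048114*((N:ℝ)^(-w.re-2)/(w.re+2))) := by gcongr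
      _ = _ := by ring
  · have he := etz_EM (N := N) hN hw
    have e1 : (N:ℂ)^(1-w) = N * (N:ℂ)^(-w) := by
      rw [sub_eq_add_neg, cpow_add _ _ hN', cpow_one]
    have e2 : (N:ℂ)^(-w-1) = (N:ℂ)^(-w)/N := by
      rw [cpow_sub _ _ hN', cpow_one]
    rw [etz_eq w0 w1, e1, e2] at he
    have hne : w - 1 ≠ 0 := sub_ne_zero.mpr w1
    apply mul_left_cancel₀ hne
    rw [he]; field_simp; ring

namespace TM
variable {δ p q w s z : ℂ} {h : ℤ} {a b : TM} 

lemma isq_ge {n : ℕ} (hn : 1 ≤ n) : (n:ℝ)^(-(1/2:ℝ)) * 4294967296 ≤ (isq n : ℝ) := by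
  have hn' : (1:ℝ) ≤ n := by exact_mod_cast hn
  have hn0 : (0:ℝ) < n := by linarith
  simp only [isq, frcI_eq]
  have hx0 : 0 ≤ (n:ℝ)^(-(1/2:ℝ)) := by positivity
  have hx2 : ((n:ℝ)^(-(1/2:ℝ)))^2 = 1/n := by
    rw [← Real.rpow_natCast, ← Real.rpow_mul hn0.le]; norm_num
    rw [Real.rpow_neg_one]
  set x := (n:ℝ)^(-(1/2:ℝ))
  have hm := le_fd 18446744073709551616 n (by omega)
  set m : ℤ := 18446744073709551616/n+1 with hmd
  have hm' : (x*4294967296)^2 ≤ m := by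
    rw [mul_pow, hx2, hmd]; push_cast at hm ⊢
    refine le_trans (le_of_eq ?_) hm
    ring
  clear_value m
  generalize (1431655765 + m/1431655765)/2 = c
  generalize (c + m/c)/2 = c
  generalize (c + m/c)/2 = c
  split_ifs with hc
  · have hc' : (0:ℝ) < c := by exact_mod_cast hc
    have h1 := le_fd m c hc
    have hz : (m:ℝ) ≤ c * ((m/c:ℤ):ℝ) + c := by
      rw [div_le_iff₀ hc'] at h1; linarith
    have : (c + m/c) < 2 * ((c + m/c)/2 + 1) := by omega
    have hmc : (m:ℝ) < c * (2 * (((c + m/c)/2 + 1 : ℤ):ℝ) - c) := by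
      have i1 : m < c * (m/c + 1) := by
        have := Int.lt_ediv_add_one_mul_self m hc; linarith
      have i2 : m / c + 1 ≤ 2 * ((c + m/c)/2 + 1) - c := by omega
      have : m < c * (2 * ((c + m/c)/2 + 1) - c) := lt_of_lt_of_le i1 (by gcongr)
      exact_mod_cast this
    set y := (((c + m/c)/2 + 1 : ℤ):ℝ)
    by_contra hcon
    push Not at hcon
    have hy0 : 0 < 2 * y - c := by
      by_contra h9
      push Not at h9
      have : (0:ℝ) ≤ m := le_trans (by positivity) hm'
      nlinarith
    nlinarith [sq_nonneg (y - c)]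
  · push_cast
    have : x ≤ 1 := by
      have : x^2 ≤ 1 := by rw [hx2, div_le_one hn0]; exact hn'
      nlinarith
    linarith

lemma mem_cB {P0 P1 P2 : TM} {p0 p1 p2 : ℂ} {n : ℤ} (hn : 0 < n) (hδ : ‖δ‖ * 4294967296 ≤ h) (h0 : mem δ p0 P0) 
    (h1 : mem δ p1 P1) (h2 : mem δ p2 P2) : mem δ (p0 + p1/n + p2/(n*n)) (cB h P0 P1 P2 n) := by
  have := mem_add (mem_add h0 (mem_dvd hδ hn h1)) (mem_dvd hδ (n := n*n) (by positivity) h2)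
  push_cast at this
  exact this

lemma prod_bound {x y : ℝ} {X Y : ℤ} (hx : 0 ≤ x) (hy : 0 ≤ y) (h1 : x * 4294967296 ≤ X) (h2 : y * 4294967296 ≤ Y) :
    x * y * 4294967296 ≤ ((X * Y / 4294967296 + 1 : ℤ):ℝ) := by
  have := le_fd (X*Y) 4294967296 (by norm_num)
  push_cast at this ⊢
  refine le_trans ?_ this
  rw [le_div_iff₀ (by norm_num)]
  calc _ = (x * 4294967296) * (y*4294967296) := by ring
    _ ≤ X * Y := by
      have : (0:ℝ) ≤ X := le_trans (by positivity) h1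
      gcongr

lemma sumB_s {P0 P1 P2 : TM} {p0 p1 p2 : ℂ} (hδ : ‖δ‖ * 4294967296 ≤ h) (h0 : mem δ p0 P0) 
    (h1 : mem δ p1 P1) (h2 : mem δ p2 P2) {k : ℤ → Bool} (m : ℕ) : ∀ (n : ℕ) (acc : ℤ), 1 ≤ n → sumB h P0 P1 P2 m n acc k = true →
    ∃ r : ℤ, k r = true ∧ acc + (∑ j ∈ Finset.Ico n (n+m), (j:ℝ)^(-(1/2:ℝ)) * ‖p0 + p1/j + p2/(j*j)‖) * 4294967296 ≤ r := by
  induction m with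
  | zero => intro n acc hn hk; exact ⟨acc, hk, by simp⟩
  | succ m ih =>
    intro n acc hn hk
    simp only [sumB, frcI_eq, frcN_eq] at hk
    obtain ⟨r, hr, hb⟩ := ih (n+1) _ (by omega) hk
    refine ⟨r, hr, le_trans ?_ hb⟩
    have hb := mem_bd hδ (mem_cB (n := n) (by omega) hδ h0 h1 h2)
    have := prod_bound (by positivity) (norm_nonneg _) (isq_ge hn) hb
    rw [Finset.sum_eq_sum_Ico_succ_bot (by omega), show n + 1 + m = n + (m+1) by ring, add_mul, Int.cast_add]
    simp only [Int.ofNat_eq_natCast] at this ⊢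
    push_cast at this ⊢
    linarith

lemma lfK_s {k : TM → Bool} {N : ℤ} (hN : 0 < N) (hk : lfK h a N k = true) (hδ : ‖δ‖ * 4294967296 ≤ h) (ha : mem δ w a) : 
   ∃ m, mem δ (N/(w-1) + 1/2 + w/(12*N)) m ∧ k m = true := by
  unfold lfK at hk
  obtain ⟨q, hq, hk⟩ := divK_s hk hδ (mem_q (4*N) (c := N) (by push_cast; ring)) (mem_sub ha (mem_q 4 (c := 1)))
  obtain ⟨m, hm, hk⟩ := frc_s hk (mem_add (mem_add hq (mem_q 2 (c := 1/2))) (mem_dvd hδ (n := 12*N) (by omega) ha))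
  refine ⟨m, mem_cast hm (by push_cast; ring), hk⟩

lemma rem_bound {x y z : ℝ} {X Y D : ℤ} (hx : 0 ≤ x) (hy : 0 ≤ y) (h1 : x * 4294967296 ≤ X) (h2 : y * 4294967296 ≤ Y) (hD : 0 < D)
   (hz : z ≤ x * y / D) :
    z * 18446744073709551616 ≤ ((X * Y / D + 1 : ℤ):ℝ) := by
  have := le_fd (X*Y) D hD
  have hD' : (0:ℝ) < D := by exact_mod_cast hD
  push_cast at this ⊢
  refine le_trans ?_ this
  rw [le_div_iff₀ hD']
  rw [le_div_iff₀ hD'] at hz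
  calc _ = (z * D) * 18446744073709551616 := by ring
    _ ≤ (x * y) * 18446744073709551616 := by gcongr
    _ = (x * 4294967296) * (y*4294967296) := by ring
    _ ≤ X * Y := by
      have : (0:ℝ) ≤ X := le_trans (by positivity) h1
      gcongr
end TM

end

section
namespace TM
variable {δ p q w s z : ℂ} {h : ℤ} {a b : TM} 

lemma rpw {N : ℕ} (hN : 1 ≤ N) {c : ℝ} (k : ℕ) (hc : c = -(1/2) - k) : (N:ℝ)^c = (N:ℝ)^(-(1/2:ℝ)) / (N:ℝ)^k := by
  have : (0:ℝ) < N := by exact_mod_cast hN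
  rw [hc, Real.rpow_sub this, Real.rpow_natCast]

lemma Dsplit (hs : s.re = 1/2) {N : ℕ} (hN : 2 ≤ N) (P0 P1 P2 : ℂ) : ∃ R0 R1 R2 : ℂ,
   ‖R0‖ ≤ (N:ℝ)^(-(1/2:ℝ)) * (‖s*(s+1)*(s+2)‖ * (16038/1000000) / (5*N*N)) ∧
   ‖R1‖ ≤ (N:ℝ)^(-(1/2:ℝ)) * (‖(s+1)*(s+1+1)*(s+1+2)‖ * (16038/1000000) / (7*N*N*N)) ∧
   ‖R2‖ ≤ (N:ℝ)^(-(1/2:ℝ)) * (‖(s+2)*(s+2+1)*(s+2+2)‖ * (16038/1000000) / (9*N*N*N*N)) ∧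
   P0 * riemannZeta s + P1 * riemannZeta (s+1) + P2 * riemannZeta (s+2) = P0 + P1 + P2 + 
     (∑ j ∈ Finset.Ico 2 N, (j:ℂ)^(-s) * (P0 + P1/j + P2/(j*j)) + 
      (N:ℂ)^(-s) * (P0 * (N/(s-1) + 1/2 + s/(12*N)) + P1 * (N/(s+1-1) + 1/2 + (s+1)/(12*N))/N + P2 * (N/(s+2-1) + 1/2 + (s+2)/(12*N))/(N*N)) + 
      (P0 * R0 + P1 * R1 + P2 * R2)) := by
  have n0 : s ≠ 0 := by rintro rfl; norm_num at hs
  have n0' : s ≠ 1 := by rintro rfl; norm_num at hs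
  have n1 : s+1 ≠ 0 := by intro h0; have := congrArg re h0; simp [hs] at this; norm_num at this
  have n1' : s+1 ≠ 1 := by intro h0; have := congrArg re h0; simp [hs] at this
  have n2 : s+2 ≠ 0 := by intro h0; have := congrArg re h0; simp [hs] at this; norm_num at this
  have n2' : s+2 ≠ 1 := by intro h0; have := congrArg re h0; simp [hs] at this; norm_num at this
  have r1 : (s+1).re = 3/2 := by simp [hs]; norm_num
  have r2 : (s+2).re = 5/2 := by simp [hs]; norm_num
  have hN1 : 1 ≤ N := by omega
  have hNr : (0:ℝ) < N := by exact_mod_cast hN1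
  obtain ⟨R0, hR0, e0⟩ := EMN (N := N) hN1 (by rw [hs]; norm_num) n0 n0'
  obtain ⟨R1, hR1, e1⟩ := EMN (N := N) hN1 (by rw [r1]; norm_num) n1 n1'
  obtain ⟨R2, hR2, e2⟩ := EMN (N := N) hN1 (by rw [r2]; norm_num) n2 n2'
  rw [hs, rpw hN1 2 (by norm_num)] at hR0
  rw [r1, rpw hN1 3 (by norm_num)] at hR1
  rw [r2, rpw hN1 4 (by norm_num)] at hR2
  refine ⟨R0, R1, R2, hR0.trans (le_of_eq ?_), hR1.trans (le_of_eq ?_), hR2.trans (le_of_eq ?_), ?_⟩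
  · field_simp; norm_num
  · field_simp; norm_num; ring
  · field_simp; norm_num; ring
  have q1 : ∀ j : ℕ, 1 ≤ j → (j:ℂ)^(-(s+1)) = (j:ℂ)^(-s)/j := fun j hj => pw3 (by exact_mod_cast (by omega : j ≠ 0))
  have q2 : ∀ j : ℕ, 1 ≤ j → (j:ℂ)^(-(s+2)) = (j:ℂ)^(-s)/(j*j) := by
    intro j hj
    rw [show s+2 = s+1+1 by ring, pw3 (by exact_mod_cast (by omega : j ≠ 0)), q1 j hj, div_div]
  have s1 : ∑ n ∈ Finset.Ico 1 N, (n:ℂ)^(-(s+1)) = ∑ n ∈ Finset.Ico 1 N, (n:ℂ)^(-s)/n := 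
    Finset.sum_congr rfl fun j hj => q1 j (Finset.mem_Ico.mp hj).1
  have s2 : ∑ n ∈ Finset.Ico 1 N, (n:ℂ)^(-(s+2)) = ∑ n ∈ Finset.Ico 1 N, (n:ℂ)^(-s)/(n*n) := 
    Finset.sum_congr rfl fun j hj => q2 j (Finset.mem_Ico.mp hj).1
  have s0 : P0 * ∑ n ∈ Finset.Ico 1 N, (n:ℂ)^(-s) + P1 * ∑ n ∈ Finset.Ico 1 N, (n:ℂ)^(-s)/n + P2 * ∑ n ∈ Finset.Ico 1 N, (n:ℂ)^(-s)/(n*n)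
    = P0 + P1 + P2 + ∑ j ∈ Finset.Ico 2 N, (j:ℂ)^(-s) * (P0 + P1/j + P2/(j*j)) := by
    rw [Finset.mul_sum, Finset.mul_sum, Finset.mul_sum, ← Finset.sum_add_distrib, ← Finset.sum_add_distrib,
      Finset.sum_eq_sum_Ico_succ_bot (by omega)]
    congr 1
    · simp
    · exact Finset.sum_congr rfl fun j hj => by ring
  rw [e0, e1, e2, s1, s2, q1 N hN1, q2 N hN1]
  linear_combination s0

lemma gBK_s {t : ℤ} {M : ℕ} (hk : gBK h t M = true) (hs : s.re = 1/2) 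
   (hδ : ‖s - (1/2 + (t:ℂ)/4294967296 * I)‖ * 4294967296 ≤ h) : 0.0009 ≤ (ff s).re := by
  unfold gBK at hk
  have ha := mem_sv t s
  generalize s - (1/2 + (t:ℂ)/4294967296 * I) = δ at *
  rw [frcI_eq] at hk
  have hNpos : (0:ℤ) < Int.ofNat (M+2) := by simp; omega
  have hNc : ((Int.ofNat (M+2) : ℤ) : ℂ) = ((M+2:ℕ):ℂ) := by simp
  have hNr : ((Int.ofNat (M+2) : ℤ) : ℝ) = ((M+2:ℕ):ℝ) := by simp
  have hiq := isq_ge (n := M+2) (by omega)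
  rw [show ((M+2:ℕ):ℤ) = Int.ofNat (M+2) from rfl] at hiq
  obtain ⟨a, ha, hk⟩ := frc_s hk ha
  obtain ⟨P2, P1, P0, hP2, hP1, hP0, hk⟩ := PPK_s hk hδ ha hs (mem_disc (by rw [Kq_line hs]; norm_num))
  obtain ⟨acc, hk, hacc⟩ := sumB_s hδ hP0 hP1 hP2 M 2 0 (by norm_num) hk
  generalize Int.ofNat (M+2) = N at *
  have a1 := mem_add ha (mem_q 4 (c := 1))
  have a2 := mem_add ha (mem_q 8 (c := 2))
  obtain ⟨l0, hl0, hk⟩ := lfK_s hNpos hk hδ ha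
  obtain ⟨l1, hl1, hk⟩ := lfK_s hNpos hk hδ a1
  obtain ⟨l2, hl2, hk⟩ := lfK_s hNpos hk hδ a2
  obtain ⟨d0, hd0, hk⟩ := mulK_s hk hδ hP0 hl0
  obtain ⟨d1, hd1, hk⟩ := mulK_s hk hδ hP1 hl1
  obtain ⟨d2, hd2, hk⟩ := mulK_s hk hδ hP2 hl2
  obtain ⟨d, hd, hk⟩ := frc_s hk (mem_cB hNpos hδ hd0 hd1 hd2)
  obtain ⟨r0, hr0, hk⟩ := remK_s hk hδ ha (by norm_num)
  obtain ⟨r1, hr1, hk⟩ := remK_s hk hδ a1 (by norm_num)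
  obtain ⟨r2, hr2, hk⟩ := remK_s hk hδ a2 (by norm_num)
  simp only [frcI_eq] at hk
  obtain ⟨R0, R1, R2, hR0, hR1, hR2, he⟩ := Dsplit hs (N := M+2) (by omega) (Pv0 s) (Pv1 s) (Pv2 s)
  rw [hNc] at hd
  rw [← hNr] at hR0 hR1 hR2 hiq
  have hNr0 : (0:ℝ) < N := by exact_mod_cast hNpos
  set x := (N:ℝ)^(-(1/2:ℝ)) with hx
  have hx0 : 0 ≤ x := by positivity
  push_cast at hr0 hr1 hr2
  have b0 := rem_bound (norm_nonneg _) (by positivity) (mem_bd hδ hP0) hr0 (D := 5*N*N) (by positivity) le_rfl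
  have b1 := rem_bound (norm_nonneg _) (by positivity) (mem_bd hδ hP1) hr1 (D := 7*N*N*N) (by positivity) le_rfl
  have b2 := rem_bound (norm_nonneg _) (by positivity) (mem_bd hδ hP2) hr2 (D := 9*N*N*N*N) (by positivity) le_rfl
  generalize bd h P0 * r0 / (5*N*N) + 1 = B0 at *
  generalize bd h P1 * r1 / (7*N*N*N) + 1 = B1 at *
  generalize bd h P2 * r2 / (9*N*N*N*N) + 1 = B2 at *
  have hB := le_fd (B0+B1+B2) 4294967296 (by norm_num)
  have cR := prod_bound hx0 (y := (‖Pv0 s‖ * (‖s*(s+1)*(s+2)‖ * (16038/1000000)) / (5*N*N:ℤ)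
    + ‖Pv1 s‖ * (‖(s+1)*(s+1+1)*(s+1+2)‖ * (16038/1000000)) / (7*N*N*N:ℤ)
    + ‖Pv2 s‖ * (‖(s+2)*(s+2+1)*(s+2+2)‖ * (16038/1000000)) / (9*N*N*N*N:ℤ))) (Y := (B0+B1+B2)/4294967296+1) (by positivity) hiq
    (by push_cast at hB b0 b1 b2 ⊢
        refine le_trans ?_ hB
        rw [le_div_iff₀ (by norm_num)]
        linarith)
  have cN := prod_bound hx0 (norm_nonneg _) hiq (mem_bd hδ hd)
  have hD : ‖∑ j ∈ Finset.Ico 2 (M+2), (j:ℂ)^(-s) * (Pv0 s + Pv1 s/j + Pv2 s/(j*j)) + 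
      ((M+2:ℕ):ℂ)^(-s) * (Pv0 s * (((M+2:ℕ):ℂ)/(s-1) + 1/2 + s/(12*((M+2:ℕ):ℂ))) + Pv1 s * (((M+2:ℕ):ℂ)/(s+1-1) + 1/2 + (s+1)/(12*((M+2:ℕ):ℂ)))/((M+2:ℕ):ℂ) 
      + Pv2 s * (((M+2:ℕ):ℂ)/(s+2-1) + 1/2 + (s+2)/(12*((M+2:ℕ):ℂ)))/(((M+2:ℕ):ℂ)*((M+2:ℕ):ℂ))) + 
      (Pv0 s * R0 + Pv1 s * R1 + Pv2 s * R2)‖ * 4294967296 ≤ ((acc + (isq N * bd h d / 4294967296 + 1) + 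
      (isq N * ((B0+B1+B2)/4294967296+1)/4294967296+1) : ℤ):ℝ) := by
    have np : ∀ j : ℕ, 1 ≤ j → ‖(j:ℂ)^(-s)‖ = (j:ℝ)^(-(1/2:ℝ)) := by
      intro j hj
      rw [norm_natCast_cpow_of_pos (by omega), neg_re, hs]
    have t1 : ‖∑ j ∈ Finset.Ico 2 (M+2), (j:ℂ)^(-s) * (Pv0 s + Pv1 s/j + Pv2 s/(j*j))‖ ≤ 
      ∑ j ∈ Finset.Ico 2 (2+M), (j:ℝ)^(-(1/2:ℝ)) * ‖Pv0 s + Pv1 s/j + Pv2 s/(j*j)‖ := by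
      rw [add_comm M 2]
      refine (norm_sum_le _ _).trans (Finset.sum_le_sum fun j hj => ?_)
      rw [norm_mul, np j (by have := (Finset.mem_Ico.mp hj).1; omega)]
    have t3 : ‖Pv0 s * R0 + Pv1 s * R1 + Pv2 s * R2‖ ≤ x * (‖Pv0 s‖ * (‖s*(s+1)*(s+2)‖ * (16038/1000000)) / (5*N*N:ℤ)
    + ‖Pv1 s‖ * (‖(s+1)*(s+1+1)*(s+1+2)‖ * (16038/1000000)) / (7*N*N*N:ℤ)
    + ‖Pv2 s‖ * (‖(s+2)*(s+2+1)*(s+2+2)‖ * (16038/1000000)) / (9*N*N*N*N:ℤ)) := by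
      refine (norm_add₃_le).trans ?_
      rw [norm_mul, norm_mul, norm_mul]
      have u0 := mul_le_mul_of_nonneg_left hR0 (norm_nonneg (Pv0 s))
      have u1 := mul_le_mul_of_nonneg_left hR1 (norm_nonneg (Pv1 s))
      have u2 := mul_le_mul_of_nonneg_left hR2 (norm_nonneg (Pv2 s))
      refine (add_le_add (add_le_add u0 u1) u2).trans (le_of_eq ?_)
      push_cast
      ring
    rw [Int.cast_add, Int.cast_add]
    rw [Int.cast_zero, zero_add] at hacc
    refine le_trans (mul_le_mul_of_nonneg_right (norm_add₃_le) (by norm_num)) ?_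
    rw [add_mul, add_mul, norm_mul, np (M+2) (by omega)]
    rw [← hNr, ← hx] 
    refine add_le_add (add_le_add (le_trans (by gcongr) hacc) cN) (le_trans (by gcongr) cR)
  obtain ⟨g, hg, hk⟩ := divK_s hk hδ (mem_fat (mem_add (mem_add hP0 hP1) hP2) hD) a1
  rw [← he, ← ff_P hs.ge (re_quarter hs)] at hg
  have := mem_lo hδ hg
  have hl : (4294967:ℝ) ≤ lo h g := by exact_mod_cast of_decide_eq_true hk
  linarith

lemma seg {s : ℂ} {t h : ℤ} (hs : s.re = 1/2) (h1 : (t:ℝ) ≤ s.im * 4294967296) (h2 : s.im * 4294967296 ≤ ((t+2*h:ℤ):ℝ)) : 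
   ‖s - (1/2 + ((t+h:ℤ):ℂ)/4294967296 * I)‖ * 4294967296 ≤ h := by
  have e : s - (1/2 + ((t+h:ℤ):ℂ)/4294967296 * I) = ((s.im - (t+h)/4294967296 : ℝ):ℂ) * I := by
    apply Complex.ext
    · simp [hs]
    · simp
  rw [e, norm_mul, norm_I, mul_one, norm_real, Real.norm_eq_abs]
  push_cast at h2
  have : |s.im - (t+h)/4294967296| ≤ (h:ℝ)/4294967296 := by
    rw [abs_le]; constructor <;> linarith
  linarith

lemma chkB_s {s : ℂ} (hs : s.re = 1/2) {T : ℤ} (l : List (ℤ × ℕ)) : ∀ t : ℤ, chkB t l T = true → (t:ℝ) ≤ s.im * 4294967296 →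
   s.im * 4294967296 < T → 0.0009 ≤ (ff s).re := by
  induction l with
  | nil =>
    intro t hk h1 h2
    have : (T:ℝ) ≤ t := by exact_mod_cast of_decide_eq_true hk
    linarith
  | cons x l ih =>
    intro t hk h1 h2
    obtain ⟨h, M⟩ := x
    simp only [chkB, frcI_eq, Bool.and_eq_true] at hk
    rcases le_total (s.im * 4294967296) ((t+2*h:ℤ):ℝ) with h3 | h3
    · exact gBK_s hk.1 hs (seg hs h1 h3)
    · exact ih _ hk.2 h3 h2

lemma chkA_s {s : ℂ} (hs : s.re = 1/2) {T : ℤ} {b : Bool} (l : List ℤ) : ∀ t : ℤ, chkA b t l T = true → (t:ℝ) ≤ s.im * 4294967296 →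
   s.im * 4294967296 < T → 0.0009 ≤ (ff s).re := by
  induction l with
  | nil =>
    intro t hk h1 h2
    have : (T:ℝ) ≤ t := by exact_mod_cast of_decide_eq_true hk
    linarith
  | cons h l ih =>
    intro t hk h1 h2
    simp only [chkA, frcI_eq, Bool.and_eq_true] at hk
    rcases le_total (s.im * 4294967296) ((t+2*h:ℤ):ℝ) with h3 | h3
    · exact gAK_s hk.1 hs (seg hs h1 h3)
    · exact ih _ hk.2 h3 h2
end TM

end

section
namespace TM
def lA1 : List ℤ :=   [62620622, 59902497, 57302355, 60905640, 58261955, 61925582, 65819584, 62962604, 66921817, 71129993, 68042509,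
    72321156, 76868853, 81702518, 86840134, 83070731, 88294382, 93846508, 99747762, 106020098, 112686851, 119772823,
    127304375, 135309528, 143818059, 152861625, 162473868, 172690548, 203944082, 216768492, 230399326, 244887294,
    289206995, 307392907, 326722385, 385852600, 410115781, 484338533, 514794707, 607962250, 646192131, 763139980,
    901253052]
def lA2 : List ℤ := [606512808, 795866105, 1044335502, 1233339339, 1618387880, 1911283717, 2257187842, 2665693695, 2833317844, 3011482535,
    2592688967, 2008921652, 2135246661, 3113189631, 3676614688, 2848791717, 1986624501, 2111547420, 3078636138,
    3272226934, 3130191994, 3327024726, 2864350100]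
def lB : List (ℤ × ℕ) := [(4294967296, 4), (6442450944, 5), (7827577896, 5), (9510507143, 6), (11555266177, 7), (14039648404, 7),
    (17058172810, 8), (20725679963, 8), (27979667949, 15), (33995296557, 15), (41304285315, 15), (50184706656, 15),
    (60974418586, 15), (74083918581, 15), (90011961074, 15), (109364532704, 16), (132877907235, 18),
    (161446657289, 20)]
set_option maxRecDepth 1000000
lemma run1 : chkA true 0 lA1 17179869184 = true := by decide +kernel
lemma run2 : chkA false 17179869184 lA2 120259084288 = true := by decide +kernel
lemma run3 : chkB 120259084288 lB 1717986918400 = true := by decide +kernel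
end TM

end

section

section
variable {s : ℂ}

lemma sum_half (N : ℕ) (hN : 4 ≤ N) : ∑ n ∈ Finset.Ico 1 N, (n:ℝ)^(-(1/2:ℝ)) ≤ (N:ℝ)/2 + 1 := by
  induction N, hN using Nat.le_induction with
  | base =>
    have e3 : Finset.Ico 1 4 = {1,2,3} := by decide
    rw [e3]
    rw [Finset.sum_insert (by decide), Finset.sum_insert (by decide), Finset.sum_singleton]
    have : ∀ x : ℝ, 1 ≤ x → x^(-(1/2:ℝ)) ≤ 1 := fun x hx => Real.rpow_le_one_of_one_le_of_nonpos hx (by norm_num)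
    have h1 := this 1 le_rfl
    have h2 := this 2 (by norm_num)
    have h3 := this 3 (by norm_num)
    norm_num at h1 h2 h3 ⊢
    linarith
  | succ n hn ih =>
    rw [Finset.sum_Ico_succ_top (by omega)]
    have h1 : (n:ℝ)^(-(1/2:ℝ)) ≤ (4:ℝ)^(-(1/2:ℝ)) := 
      Real.rpow_le_rpow_of_nonpos (by norm_num) (by exact_mod_cast hn) (by norm_num)
    have h2 : (4:ℝ)^(-(1/2:ℝ)) = 1/2 := by rw [TM.r4 _ 1 (by norm_num)]; norm_num
    push_cast; linarith

lemma zeta_line (hs : s.re = 1/2) (ht : 400 ≤ s.im) : ‖riemannZeta s‖ ≤ 0.51 * s.im := by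
  set t := s.im
  have n0 : s ≠ 0 := by rintro rfl; norm_num at hs
  have n1 : s ≠ 1 := by rintro rfl; norm_num at hs
  obtain ⟨N, hN1, hN2⟩ : ∃ N : ℕ, t ≤ N ∧ (N:ℝ) ≤ t + 1 := ⟨⌈t⌉₊, Nat.le_ceil t, (Nat.ceil_lt_add_one (by linarith)).le⟩
  have hN400 : (400:ℝ) ≤ N := by linarith
  have hN4 : 400 ≤ N := by exact_mod_cast hN400
  obtain ⟨R, hR, he⟩ := EMN (N := N) (by omega) (by rw [hs]; norm_num) n0 n1
  rw [hs, TM.rpw (by omega) 2 (by norm_num)] at hR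
  have hx : (N:ℝ)^(-(1/2:ℝ)) ≤ 1/20 := by
    have h1 : (N:ℝ)^(-(1/2:ℝ)) ≤ (400:ℝ)^(-(1/2:ℝ)) := 
      Real.rpow_le_rpow_of_nonpos (by norm_num) hN400 (by norm_num)
    refine h1.trans (le_of_eq ?_)
    rw [show (400:ℝ) = 20^(2:ℝ) by norm_num, ← Real.rpow_mul (by norm_num)]
    norm_num
  have hx0 : 0 ≤ (N:ℝ)^(-(1/2:ℝ)) := by positivity
  have np : ∀ j : ℕ, 1 ≤ j → ‖(j:ℂ)^(-s)‖ = (j:ℝ)^(-(1/2:ℝ)) := by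
    intro j hj
    rw [norm_natCast_cpow_of_pos (by omega), neg_re, hs]
  have t1 : ‖∑ j ∈ Finset.Ico 1 N, (j:ℂ)^(-s)‖ ≤ (N:ℝ)/2 + 1 := by
    refine le_trans ((norm_sum_le _ _).trans (Finset.sum_le_sum fun j hj => ?_)) (sum_half N (by omega))
    rw [np j (Finset.mem_Ico.mp hj).1]
  have im_le : ∀ w : ℂ, w.im = t → w.re ≤ 5/2 → 0 ≤ w.re → ‖w‖ ≤ t + 5/2 := by
    intro w hw h1 h0
    refine (norm_le_abs_re_add_abs_im w).trans ?_
    rw [hw, abs_of_nonneg h0, abs_of_nonneg (by linarith)]; linarith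
  have i0 := im_le s rfl (by rw [hs]; norm_num) (by rw [hs]; norm_num)
  have i1 := im_le (s+1) (by simp [t]) (by simp [hs]; norm_num) (by simp [hs]; norm_num)
  have i2 := im_le (s+2) (by simp [t]) (by simp [hs]; norm_num) (by simp [hs]; norm_num)
  have lo1 : t ≤ ‖s - 1‖ := by
    have := abs_im_le_norm (s-1)
    simp at this
    exact (le_abs_self _).trans this
  have t2 : ‖(N/(s-1) + 1/2 + s/(12*N) : ℂ)‖ ≤ 2 := by
    refine (norm_add₃_le).trans ?_
    rw [norm_div, norm_div s, norm_mul, Complex.norm_natCast]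
    have u1 : (N:ℝ)/‖s-1‖ ≤ 1.01 := by
      rw [div_le_iff₀ (by linarith)]; linarith
    have u2 : ‖s‖/(‖(12:ℂ)‖*N) ≤ 0.1 := by
      rw [div_le_iff₀ (by norm_num; linarith)]; norm_num; linarith
    have u3 : ‖(1/2:ℂ)‖ = 1/2 := by norm_num
    rw [u3]; linarith
  have t3 : ‖R‖ ≤ 0.001 * t := by
    refine hR.trans ?_
    have v1 : ‖s*(s+1)*(s+2)‖ ≤ (1.1*t)^3 := by
      rw [norm_mul, norm_mul]
      calc _ ≤ (1.1*t)*(1.1*t)*(1.1*t) := by gcongr <;> linarith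
        _ = _ := by ring
    have v2 : (N:ℝ)^(-(1/2:ℝ))/(N:ℝ)^2 ≤ (1/20)/t^2 := by
      gcongr
    calc _ ≤ (1.1*t)^3 * (0.008019*((1/20)/t^2/(1/2+2))) := by gcongr
      _ = (1.1^3*0.008019/20/2.5)*t := by field_simp; norm_num
      _ ≤ _ := by gcongr; norm_num
  rw [he]
  refine (norm_add₃_le).trans ?_
  rw [norm_mul, np N (by omega)]
  have : (N:ℝ)^(-(1/2:ℝ)) * ‖(N/(s-1) + 1/2 + s/(12*N) : ℂ)‖ ≤ 1/20 * 2 := by gcongr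
  linarith

lemma rG_low (hs : s.re = 1/2) (ht : 400 ≤ s.im) : 13 ≤ ‖rG ((s+1)/2)‖ := by
  set z := (s+1)/2 with hz
  have hre : z.re = 3/4 := by simp [hz, hs]; norm_num
  have him : z.im = s.im/2 := by simp [hz]
  rw [rG_shift (by rw [hre]; norm_num), norm_mul, norm_div]
  have h1 := rG_sq_lower (z := z+1) (by simp [hre]; norm_num)
  have h2 : 200 ≤ ‖z + 1 - 1/4‖ := by
    refine le_trans ?_ ((le_abs_self _).trans (abs_im_le_norm _))
    simp [him]; linarith
  have h3 : 13.8 ≤ ‖rG (z+1)‖ := by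
    have := norm_nonneg (rG (z+1))
    nlinarith
  have h4 : 200 ≤ ‖z‖ := by
    refine le_trans ?_ ((le_abs_self _).trans (abs_im_le_norm _))
    rw [him]; linarith
  have h5 : ‖z + 1/2‖ ≤ ‖z‖ + 1/2 := (norm_add_le _ _).trans (by norm_num)
  have h6 : 0 < ‖z+1/2‖ := by
    rw [norm_pos_iff]; intro h; have := congrArg re h; simp [hre] at this; norm_num at this
  have h7 : 0.95 ≤ ‖z‖/‖z+1/2‖ := by
    rw [le_div_iff₀ h6]; linarith
  calc (13:ℝ) ≤ 13.8 * 0.95 := by norm_num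
    _ ≤ _ := by gcongr

lemma big_t (hs : s.re = 1/2) (ht : 400 ≤ s.im) : 0.0009 ≤ (ff s).re := by
  have hz := zeta_line hs ht
  have hg := rG_low hs ht
  have n0 : s ≠ 0 := by rintro rfl; norm_num at hs
  have n1 : s+1 ≠ 0 := by intro h0; have := congrArg re h0; simp [hs] at this; norm_num at this
  have l0 : s.im ≤ ‖s‖ := (le_abs_self _).trans (abs_im_le_norm _)
  have l1 : s.im ≤ ‖s+1‖ := by simpa using (le_abs_self _).trans (abs_im_le_norm (s+1))
  have l2 : s.im ≤ ‖s+2‖ := by simpa using (le_abs_self _).trans (abs_im_le_norm (s+2))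
  have hpi := Real.pi_lt_d4
  have hpi' := Real.pi_gt_d4
  have hA : A = ((Real.pi/3 - 1 : ℝ) : ℂ) := by simp [A]
  have Are : A.re = Real.pi/3-1 := by rw [hA, ofReal_re]
  have An : ‖A‖ = Real.pi/3-1 := by rw [hA, norm_real, Real.norm_of_nonneg (by linarith)]
  -- P2
  have e2 : Pv2 s/(s+1) - A = (3-2*A)/(s+1) - 3/(s*(s+1)) := by
    rw [Pv2]; field_simp; ring
  have b32 : ‖3-2*A‖ ≤ 3 := by
    rw [hA, show (3 - 2*((Real.pi/3 - 1 : ℝ) : ℂ)) = ((3 - 2*(Real.pi/3-1):ℝ):ℂ) by push_cast; ring, norm_real,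
      Real.norm_of_nonneg (by linarith)]; linarith
  have hQ : ‖Pv2 s/(s+1) - A‖ ≤ 0.0076 := by
    rw [e2]
    refine (norm_sub_le _ _).trans ?_
    rw [norm_div, norm_div, norm_mul]
    have u1 : ‖3-2*A‖/‖s+1‖ ≤ 0.0075 := by rw [div_le_iff₀ (by linarith)]; linarith
    have u2 : ‖(3:ℂ)‖/(‖s‖*‖s+1‖) ≤ 0.0001 := by rw [div_le_iff₀ (by nlinarith)]; norm_num; nlinarith
    linarith
  have hQ1 : A.re - 0.0076 ≤ (Pv2 s/(s+1)).re := by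
    have := (abs_le.mp ((abs_re_le_norm _).trans hQ)).1
    rw [sub_re] at this; linarith
  have hQ2 : ‖Pv2 s/(s+1)‖ ≤ 0.055 := by
    have := norm_add_le (Pv2 s/(s+1) - A) A
    rw [sub_add_cancel, An] at this
    linarith
  have hz2 : ‖riemannZeta (s+2) - 1‖ ≤ 0.45 := by
    have := zeta_sub_one_le (w := s+2) (σ := 5/2) (by norm_num) (by simp [hs]; norm_num)
    linarith [Zr_five_half]
  have hz1 : ‖riemannZeta (s+1)‖ ≤ 2.7 := zeta_b (by simp [hs]; norm_num)
  -- P1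
  have hP1 : ‖Pv1 s‖ ≤ 0.32 := by
    have e : (Real.pi / (spi * rG ((s+1)/2)) : ℂ) = spi / rG ((s+1)/2) := by
      rw [← spi_sq]; have := spi_ne; field_simp
    rw [Pv1, e, norm_mul, norm_div]
    have u1 : ‖10/(s+2) - 2‖ ≤ 2.025 := by
      refine (norm_sub_le _ _).trans ?_
      rw [norm_div]
      have : ‖(10:ℂ)‖/‖s+2‖ ≤ 0.025 := by rw [div_le_iff₀ (by linarith)]; norm_num; linarith
      norm_num at this ⊢; linarith
    have u2 : ‖spi‖/‖rG ((s+1)/2)‖ ≤ 2/13 := by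
      have := pi_half_norm
      rw [spi]; gcongr
    calc _ ≤ (2.025:ℝ) * (2/13:ℝ) := by gcongr
      _ ≤ _ := by norm_num
  -- P0
  have hP0 : ‖Pv0 s‖ ≤ 0.0162 := by
    rw [Pv0, norm_mul, norm_mul, norm_div, norm_real, Real.norm_of_nonneg Real.pi_pos.le]
    have u1 : ‖(-2:ℂ)‖ * (Real.pi/‖s‖) ≤ 0.01571 := by
      have : Real.pi/‖s‖ ≤ 0.007855 := by rw [div_le_iff₀ (by linarith)]; linarith
      norm_num at this ⊢; linarith
    have u2 : ‖1 - 4/(s+1) - ac*(1 + Kq s)/(s+2)‖ ≤ 1.025 := by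
      refine (norm_sub_le _ _).trans (le_trans (add_le_add_left (norm_sub_le _ _) _) ?_)
      rw [norm_div, norm_div, norm_mul, norm_one]
      have v1 : ‖(4:ℂ)‖/‖s+1‖ ≤ 0.01 := by rw [div_le_iff₀ (by linarith)]; norm_num; linarith
      have v2 : ‖1 + Kq s‖ ≤ 2 := by
        refine (norm_add_le _ _).trans ?_
        rw [Kq_line hs]; norm_num
      have v3 : ‖ac‖*‖1 + Kq s‖/‖s+2‖ ≤ 0.015 := by
        rw [div_le_iff₀ (by linarith)]
        have := ac_norm
        calc _ ≤ 3 * (2:ℝ) := by gcongr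
          _ ≤ _ := by linarith
      linarith
    calc _ ≤ 0.01571 * (1.025:ℝ) := by gcongr
      _ ≤ _ := by norm_num
  have key : ff s = Pv2 s/(s+1) + (Pv2 s/(s+1) * (riemannZeta (s+2) - 1) + Pv1 s * riemannZeta (s+1)/(s+1) + Pv0 s * (riemannZeta s/(s+1))) := by
    rw [ff_P hs.ge (re_quarter hs)]; field_simp; ring
  have hE : ‖Pv2 s/(s+1) * (riemannZeta (s+2) - 1) + Pv1 s * riemannZeta (s+1)/(s+1) + Pv0 s * (riemannZeta s/(s+1))‖ ≤ 0.037 := by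
    refine (norm_add₃_le).trans ?_
    rw [norm_mul, norm_div (Pv1 s * _), norm_mul, norm_mul, norm_div (riemannZeta s)]
    have w1 : ‖Pv2 s/(s+1)‖ * ‖riemannZeta (s+2) - 1‖ ≤ 0.055 * 0.45 := by gcongr
    have w2 : ‖Pv1 s‖ * ‖riemannZeta (s+1)‖/‖s+1‖ ≤ 0.32*2.7/400 := by gcongr; linarith
    have w3 : ‖riemannZeta s‖/‖s+1‖ ≤ 0.51 := by rw [div_le_iff₀ (by linarith)]; linarith
    have w4 : ‖Pv0 s‖ * (‖riemannZeta s‖/‖s+1‖) ≤ 0.0162 * 0.51 := by gcongr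
    linarith
  have := (abs_le.mp ((abs_re_le_norm _).trans hE)).1
  rw [key, add_re]
  linarith

lemma gam_conj (s : ℂ) : gam (starRingEnd ℂ s) = starRingEnd ℂ (gam s) := by
  have h2 : (starRingEnd ℂ) (2:ℂ) = 2 := map_ofNat (starRingEnd ℂ) 2
  have e1 : -(starRingEnd ℂ s + 2)/2 = starRingEnd ℂ (-(s+2)/2) := by
    simp only [map_div₀, map_neg, map_add, h2]
  have e2 : (starRingEnd ℂ s + 2)/2 = starRingEnd ℂ ((s+2)/2) := by
    simp only [map_div₀, map_add, h2]
  have e3 : (Real.pi:ℂ) ^ (starRingEnd ℂ (-(s+2)/2)) = starRingEnd ℂ ((Real.pi:ℂ) ^ (-(s+2)/2)) := by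
    rw [cpow_conj _ _ (by rw [arg_ofReal_of_nonneg Real.pi_pos.le]; exact Real.pi_pos.ne), conj_ofReal]
  rw [gam, gam, e1, e2, e3, Gamma_conj]
  simp only [map_mul, map_add, map_one, h2]

lemma ff_conj (hs : s.re = 1/2) : ff (starRingEnd ℂ s) = starRingEnd ℂ (ff s) := by
  have h2 : (starRingEnd ℂ) (2:ℂ) = 2 := map_ofNat (starRingEnd ℂ) 2
  rw [ff, ff, map_div₀, map_mul, ← gam_conj, ← chi_conj, ← TT_conj hs, conj_line hs]
  congr 3
  simp [conj_line hs, h2]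

lemma pos_t (hs : s.re = 1/2) (ht : 0 ≤ s.im) : 0.0009 ≤ (ff s).re := by
  rcases lt_or_ge (s.im * 4294967296) 17179869184 with h1 | h1
  · exact TM.chkA_s hs _ _ TM.run1 (by push_cast; linarith) (by push_cast; linarith)
  rcases lt_or_ge (s.im * 4294967296) 120259084288 with h2 | h2
  · exact TM.chkA_s hs _ _ TM.run2 (by push_cast; linarith) (by push_cast; linarith)
  rcases lt_or_ge (s.im * 4294967296) 1717986918400 with h3 | h3
  · exact TM.chkB_s hs _ _ TM.run3 (by push_cast; linarith) (by push_cast; linarith)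
  · exact big_t hs (by linarith)

lemma all_t (hs : s.re = 1/2) : 0.0009 ≤ (ff s).re := by
  rcases le_total 0 s.im with h | h
  · exact pos_t hs h
  · have := pos_t (s := starRingEnd ℂ s) (by simpa using hs) (by simpa using h)
    rwa [ff_conj hs, conj_re] at this
end

theorem Z2_zeros' (ρ : ℂ) :
    (Z2 ρ = 0 → ρ ∉ ({-1, 0, 1, 2} : Set ℂ) → ρ.re = 1 / 2) ∧
    (ρ ∈ ({-1, 0, 1, 2} : Set ℂ) → Z2 ρ = 0 ∧ deriv Z2 ρ ≠ 0) :=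
  final (ε := 0.0009) (by norm_num) (fun s hs => all_t hs) ρ

end

end

theorem Z2_zeros (ρ : ℂ) :
    (Z2 ρ = 0 → ρ ∉ ({-1, 0, 1, 2} : Set ℂ) → ρ.re = 1 / 2) ∧
    (ρ ∈ ({-1, 0, 1, 2} : Set ℂ) → Z2 ρ = 0 ∧ deriv Z2 ρ ≠ 0) := by
  exact Z2_zeros' ρ
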